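/- Let d ≥ 3, let r = d − 1, and let Δ ⊆ ℝ^d be a d-dimensional Gorenstein polytope of index r. Then 12 = Σ_θ v(θ)·v(θ*) + ((r(1−r)+2)/2)·v(Δ), where the sum runs over all (r−1)-dimensional faces θ of Δ and θ* is the dual face of θ. -/

import Mathlib

open MeasureTheory Filter Pointwise

noncomputable section

/-- The canonical embedding of a lattice point of `ℤ^d` into `ℝ^d`. -/
def coeLat {d : ℕ} (n : Fin d → ℤ) : Fin d → ℝ := fun i => (n i : ℝ)

/-- The set of lattice points lying in a subset `S ⊆ ℝ^d`. -/
def latticePoints {d : ℕ} (S : Set (Fin d → ℝ)) : Set (Fin d → ℤ) :=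
  {n | coeLat n ∈ S}

/-- A lattice polytope: the convex hull of finitely many points of `ℤ^d`. -/
def IsLatticePolytope {d : ℕ} (P : Set (Fin d → ℝ)) : Prop :=
  ∃ V : Finset (Fin d → ℤ), P = convexHull ℝ (coeLat '' (V : Set (Fin d → ℤ)))

/-- The dual (polar) body `P* = {y | ⟨y,x⟩ ≥ -1 ∀ x ∈ P}`. -/
def polarDual {d : ℕ} (P : Set (Fin d → ℝ)) : Set (Fin d → ℝ) :=
  {y | ∀ x ∈ P, -1 ≤ ∑ i, y i * x i}

/-- Dimension of a subset of `ℝ^d`: the dimension of its affine span. -/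
def dimSet {d : ℕ} (S : Set (Fin d → ℝ)) : ℕ :=
  Module.finrank ℝ (affineSpan ℝ S).direction

/-- A reflexive polytope: a lattice polytope containing the origin in its interior
whose dual is again a lattice polytope. -/
def IsReflexive {d : ℕ} (P : Set (Fin d → ℝ)) : Prop :=
  IsLatticePolytope P ∧ (0 : Fin d → ℝ) ∈ interior P ∧ IsLatticePolytope (polarDual P)

/-- A (nonempty, exposed) face of dimension `k` of a polytope `P`. -/
def IsFaceOfDim {d : ℕ} (P : Set (Fin d → ℝ)) (k : ℕ) (θ : Set (Fin d → ℝ)) : Prop :=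
  IsExposed ℝ P θ ∧ θ.Nonempty ∧ dimSet θ = k

/-- The dual face `θ* = {y ∈ P* | ⟨y,x⟩ = -1 ∀ x ∈ θ}` of a face `θ` of `P`. -/
def dualFace {d : ℕ} (P θ : Set (Fin d → ℝ)) : Set (Fin d → ℝ) :=
  {y ∈ polarDual P | ∀ x ∈ θ, ∑ i, y i * x i = -1}

/-- The normalized volume of a `k`-dimensional lattice polytope `θ ⊆ ℝ^d`:
`lim_{m → ∞} k! ⬝ |mθ ∩ ℤ^d| / m^k`. -/
def normVol {d : ℕ} (k : ℕ) (θ : Set (Fin d → ℝ)) : ℝ :=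
  limUnder atTop
    (fun m : ℕ => (Nat.factorial k : ℝ) * (latticePoints ((m : ℝ) • θ)).ncard / (m : ℝ) ^ k)

namespace Gor

section LP
variable {E : Type*} [AddCommGroup E] [Module ℝ E] {ι : Type*} [Fintype ι]

/-- linear independence of the subfamily indexed by `B` -/
def Ind (g : ι → E) (B : Finset ι) : Prop :=
  ∀ l : ι → ℝ, (∀ i, i ∉ B → l i = 0) → ∑ i, l i • g i = 0 → l = 0

/-- maximal independent subfamilies -/
def IsB (g : ι → E) (B : Finset ι) : Prop :=
  Ind g B ∧ ∀ j, g j ∈ Submodule.span ℝ (g '' B)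

theorem ind_iff (g : ι → E) (B : Finset ι) : Ind g B ↔ LinearIndepOn ℝ g (B : Set ι) := by
  classical
  rw [linearIndepOn_finset_iff]
  constructor
  · intro h f hf i hi
    have := h (fun i => if i ∈ B then f i else 0) (by intro i hi; simp [hi])
      (by rw [← hf]; simp [Finset.sum_ite, ite_smul, Finset.filter_mem_eq_inter])
    have := congrFun this i
    simpa [hi] using this
  · intro h l hl hs
    funext i
    by_cases hi : i ∈ B
    · refine h l ?_ i hi
      rw [← hs]
      apply Finset.sum_subset (Finset.subset_univ _)
      intro j _ hj; simp [hl j hj]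
    · exact hl i hi

theorem exists_co (g : ι → E) (B : Finset ι) (hB : IsB g B) :
    ∃ c : E →ₗ[ℝ] (ι → ℝ), (∀ x ∈ Submodule.span ℝ (Set.range g), ∑ i, c x i • g i = x) ∧
      (∀ x i, i ∉ B → c x i = 0) ∧
      ∀ l : ι → ℝ, (∀ i, i ∉ B → l i = 0) → c (∑ i, l i • g i) = l := by
  classical
  let ext : (B → ℝ) →ₗ[ℝ] (ι → ℝ) :=
    { toFun := fun l i => if h : i ∈ B then l ⟨i, h⟩ else 0
      map_add' := by intro a b; funext i; by_cases h : i ∈ B <;> simp [h]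
      map_smul' := by intro a b; funext i; by_cases h : i ∈ B <;> simp [h] }
  have hext0 : ∀ l i, i ∉ B → ext l i = 0 := by intro l i hi; simp [ext, hi]
  have hext1 : ∀ l : ι → ℝ, (∀ i, i ∉ B → l i = 0) → ext (fun i => l i) = l := by
    intro l hl; funext i
    by_cases h : i ∈ B
    · simp [ext, h]
    · simp [ext, h, hl i h]
  let f : (B → ℝ) →ₗ[ℝ] E := (Fintype.linearCombination ℝ g).comp ext
  have hf : ∀ l, f l = ∑ i, ext l i • g i := by
    intro l; simp [f, Fintype.linearCombination_apply]
  have hinj : LinearMap.ker f = ⊥ := by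
    rw [LinearMap.ker_eq_bot']
    intro l hl
    rw [hf] at hl
    have := hB.1 _ (hext0 l) hl
    funext i
    have := congrFun this i
    simpa [ext] using this
  obtain ⟨p, hp⟩ := LinearMap.exists_leftInverse_of_injective f hinj
  have hp' : ∀ l, p (f l) = l := fun l => by
    have := LinearMap.congr_fun hp l; simpa using this
  refine ⟨ext.comp p, ?_, ?_, ?_⟩
  · intro x hx
    have hx' : x ∈ LinearMap.range f := by
      have : Submodule.span ℝ (Set.range g) ≤ LinearMap.range f := by
        rw [Submodule.span_le]
        rintro _ ⟨j, rfl⟩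
        have : Submodule.span ℝ (g '' B) ≤ LinearMap.range f := by
          rw [Submodule.span_le]
          rintro _ ⟨i, hi, rfl⟩
          refine ⟨fun k => if (k : ι) = i then 1 else 0, ?_⟩
          rw [hf, Finset.sum_eq_single i]
          · have : i ∈ B := hi
            simp [ext, this]
          · intro k _ hk
            simp [ext, hk]
          · simp
        exact this (hB.2 j)
      exact this hx
    obtain ⟨l, rfl⟩ := hx'
    simp only [LinearMap.comp_apply, hp']
    rw [← hf]
  · intro x i hi
    exact hext0 _ _ hi
  · intro l hl
    have : ∑ i, l i • g i = f (fun i => l i) := by rw [hf, hext1 l hl]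
    rw [this, LinearMap.comp_apply, hp', hext1 l hl]

open Classical in
/-- coordinates with respect to `B` -/
def co (g : ι → E) (B : Finset ι) : E →ₗ[ℝ] (ι → ℝ) :=
  if h : IsB g B then (exists_co g B h).choose else 0

theorem co_sum {g : ι → E} {B : Finset ι} (h : IsB g B) {x : E}
    (hx : x ∈ Submodule.span ℝ (Set.range g)) : ∑ i, co g B x i • g i = x := by
  rw [co, dif_pos h]; exact (exists_co g B h).choose_spec.1 x hx

theorem co_zero {g : ι → E} {B : Finset ι} (h : IsB g B) {x : E} {i : ι} (hi : i ∉ B) :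
    co g B x i = 0 := by
  rw [co, dif_pos h]; exact (exists_co g B h).choose_spec.2.1 x i hi

theorem co_eq {g : ι → E} {B : Finset ι} (h : IsB g B) {l : ι → ℝ} (hl : ∀ i, i ∉ B → l i = 0) :
    co g B (∑ i, l i • g i) = l := by
  rw [co, dif_pos h]; exact (exists_co g B h).choose_spec.2.2 l hl

theorem co_eq' {g : ι → E} {B : Finset ι} (h : IsB g B) {l : ι → ℝ} {x : E}
    (hl : ∀ i, i ∉ B → l i = 0) (hx : ∑ i, l i • g i = x) :
    co g B x = l := by
  rw [← hx, co_eq h hl]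

theorem co_self {g : ι → E} {B : Finset ι} (h : IsB g B) {i : ι} (hi : i ∈ B) :
    co g B (g i) i = 1 := by
  classical
  rw [co_eq' h (l := Pi.single i 1) (x := g i)]
  · simp
  · intro j hj; rw [Pi.single_eq_of_ne]; rintro rfl; exact hj hi
  · rw [Finset.sum_eq_single i] <;> simp +contextual [Pi.single_apply]

/-- the cone generated by `g` -/
def Cone (g : ι → E) : Set E := {z | ∃ l : ι → ℝ, (∀ i, 0 ≤ l i) ∧ ∑ i, l i • g i = z}

theorem sum_mem_span (g : ι → E) (l : ι → ℝ) :
    ∑ i, l i • g i ∈ Submodule.span ℝ (Set.range g) :=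
  Submodule.sum_mem _ fun i _ => Submodule.smul_mem _ _ (Submodule.subset_span ⟨i, rfl⟩)

theorem gen_mem_span (g : ι → E) (i : ι) : g i ∈ Submodule.span ℝ (Set.range g) :=
  Submodule.subset_span ⟨i, rfl⟩

theorem cone_sub_span {g : ι → E} {z : E} (hz : z ∈ Cone g) :
    z ∈ Submodule.span ℝ (Set.range g) := by
  obtain ⟨l, _, rfl⟩ := hz; exact sum_mem_span g l

/-- reduction of a feasible solution to an independent support -/
theorem reduce (g : ι → E) (ht : E →ₗ[ℝ] ℝ) (hht : ∀ i, ht (g i) = 1) (w : ι → ℝ) :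
    ∀ (n : ℕ) (l : ι → ℝ), (∀ i, 0 ≤ l i) → (Finset.univ.filter fun i => l i ≠ 0).card ≤ n →
      ∃ l' : ι → ℝ, (∀ i, 0 ≤ l' i) ∧ ∑ i, l' i • g i = ∑ i, l i • g i ∧
        ∑ i, l' i * w i ≤ ∑ i, l i * w i ∧ Ind g (Finset.univ.filter fun i => l' i ≠ 0) := by
  classical
  intro n
  induction n with
  | zero =>
    intro l hl hc
    refine ⟨l, hl, rfl, le_rfl, ?_⟩
    intro k hk _
    have : (Finset.univ.filter fun i => l i ≠ 0) = ∅ := by simpa using hc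
    funext i; exact hk i (by rw [this]; simp)
  | succ n ih =>
    intro l hl hc
    by_cases hI : Ind g (Finset.univ.filter fun i => l i ≠ 0)
    · exact ⟨l, hl, rfl, le_rfl, hI⟩
    have : ∃ c : ι → ℝ, (∀ i, l i = 0 → c i = 0) ∧ ∑ i, c i • g i = 0 ∧ c ≠ 0 ∧
        ∑ i, c i * w i ≤ 0 := by
      unfold Ind at hI
      push Not at hI
      obtain ⟨c, h1, h2, h3⟩ := hI
      have h1' : ∀ i, l i = 0 → c i = 0 := fun i hi => h1 i (by simp [hi])
      rcases le_total (∑ i, c i * w i) 0 with h | h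
      · exact ⟨c, h1', h2, h3, h⟩
      · refine ⟨-c, fun i hi => by simp [h1' i hi], by simp [h2], by simpa using h3, by simpa using h⟩
    obtain ⟨c, c1, c2, c3, c4⟩ := this
    have csum : ∑ i, c i = 0 := by
      have := congrArg ht c2
      simpa [map_sum, hht] using this
    have hneg : (Finset.univ.filter fun i => c i < 0).Nonempty := by
      by_contra hne
      rw [Finset.not_nonempty_iff_eq_empty, Finset.filter_eq_empty_iff] at hne
      apply c3
      funext i
      exact (Finset.sum_eq_zero_iff_of_nonneg (fun i _ => not_lt.1 (hne (Finset.mem_univ i)))).1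
        csum i (Finset.mem_univ i)
    obtain ⟨k, hk, hmin⟩ := Finset.exists_min_image _ (fun i => l i / (- c i)) hneg
    simp only [Finset.mem_filter, Finset.mem_univ, true_and] at hk hmin
    set s := l k / (- c k) with hs
    have hs0 : 0 ≤ s := div_nonneg (hl k) (by linarith)
    have hnn : ∀ i, 0 ≤ l i + s * c i := by
      intro i
      by_cases hi : c i < 0
      · have := hmin i hi
        rw [le_div_iff₀ (by linarith)] at this
        linarith
      · have := mul_nonneg hs0 (not_lt.1 hi)
        linarith [hl i]
    have hkz : l k + s * c k = 0 := by
      rw [hs]; field_simp [hk.ne]; ring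
    obtain ⟨l', p1, p2, p3, p4⟩ := ih (fun i => l i + s * c i) hnn (by
      have : (Finset.univ.filter fun i => l i + s * c i ≠ 0) ⊂
          (Finset.univ.filter fun i => l i ≠ 0) := by
        rw [Finset.ssubset_iff_of_subset]
        · refine ⟨k, ?_, ?_⟩
          · simp only [Finset.mem_filter, Finset.mem_univ, true_and]
            intro h; exact hk.ne (c1 k h)
          · simp [hkz]
        · intro i
          simp only [Finset.mem_filter, Finset.mem_univ, true_and]
          intro h h0
          apply h; rw [h0, c1 i h0]; simp
      have := Finset.card_lt_card this
      omega)
    refine ⟨l', p1, ?_, ?_, p4⟩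
    · rw [p2]; simp only [add_smul, Finset.sum_add_distrib, mul_smul, ← Finset.smul_sum, c2]; simp
    · refine p3.trans ?_
      have : ∑ i, (l i + s * c i) * w i = ∑ i, l i * w i + s * ∑ i, c i * w i := by
        rw [Finset.mul_sum, ← Finset.sum_add_distrib]
        exact Finset.sum_congr rfl fun i _ => by ring
      rw [this]
      nlinarith

/-- a generic cost vector -/
def GenW (g : ι → E) (w : ι → ℝ) : Prop :=
  ∀ B, IsB g B → ∀ j, j ∉ B → ∑ i, co g B (g j) i * w i ≠ w j

/-- dual feasible bases -/
def Good (g : ι → E) (w : ι → ℝ) (B : Finset ι) : Prop :=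
  IsB g B ∧ ∀ j, j ∉ B → ∑ i, co g B (g j) i * w i < w j

theorem ind_extend (g : ι → E) (I : Finset ι) (hI : Ind g I) : ∃ B, I ⊆ B ∧ IsB g B := by
  classical
  rw [ind_iff] at hI
  obtain ⟨b, _, h2, h3, h4⟩ := exists_linearIndepOn_extension hI (Set.subset_univ _)
  have hb : b = ((b.toFinite.toFinset : Finset ι) : Set ι) := by simp
  refine ⟨b.toFinite.toFinset, ?_, ?_, ?_⟩
  · intro i hi; simpa using h2 hi
  · rw [ind_iff, ← hb]; exact h4
  · intro j; rw [← hb]; exact h3 ⟨j, trivial, rfl⟩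

theorem good_unique {g : ι → E} {w : ι → ℝ} {B B' : Finset ι} (hB : Good g w B)
    (hB' : Good g w B') {z : E} (hz : z ∈ Submodule.span ℝ (Set.range g))
    (h : ∀ i ∈ B, 0 < co g B z i) (h' : ∀ i ∈ B', 0 < co g B' z i) : B = B' := by
  have key : ∀ {B B' : Finset ι}, Good g w B → Good g w B' → (∀ i ∈ B', 0 < co g B' z i) →
      (∑ i, co g B z i * w i ≤ ∑ i, co g B' z i * w i) ∧
      (¬ B' ⊆ B → ∑ i, co g B z i * w i < ∑ i, co g B' z i * w i) := by
    intro B B' hB hB' h'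
    have e : ∑ i, co g B z i * w i = ∑ j, co g B' z j * ∑ i, co g B (g j) i * w i := by
      conv_lhs => rw [← co_sum hB'.1 hz]
      simp only [map_sum, map_smul, Finset.sum_apply, Pi.smul_apply, smul_eq_mul]
      simp only [Finset.sum_mul, Finset.mul_sum]
      rw [Finset.sum_comm]
      exact Finset.sum_congr rfl fun i _ => Finset.sum_congr rfl fun j _ => by ring
    have hle : ∀ j, ∑ i, co g B (g j) i * w i ≤ w j := by
      intro j
      by_cases hj : j ∈ B
      · classical
        rw [co_eq' hB.1 (l := Pi.single j 1) (x := g j)]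
        · rw [Finset.sum_eq_single j] <;> simp +contextual [Pi.single_apply]
        · intro i hi; rw [Pi.single_eq_of_ne]; rintro rfl; exact hi hj
        · rw [Finset.sum_eq_single j] <;> simp +contextual [Pi.single_apply]
      · exact (hB.2 j hj).le
    have hnn : ∀ j, 0 ≤ co g B' z j := by
      intro j
      by_cases hj : j ∈ B'
      · exact (h' j hj).le
      · rw [co_zero hB'.1 hj]
    rw [e]
    constructor
    · exact Finset.sum_le_sum fun j _ => mul_le_mul_of_nonneg_left (hle j) (hnn j)
    · intro hns
      obtain ⟨j, hj, hj'⟩ := Finset.not_subset.1 hns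
      apply Finset.sum_lt_sum fun j _ => mul_le_mul_of_nonneg_left (hle j) (hnn j)
      exact ⟨j, Finset.mem_univ _, mul_lt_mul_of_pos_left (hB.2 j hj') (h' j hj)⟩
  have k1 := key hB hB' h'
  have k2 := key hB' hB h
  apply Finset.Subset.antisymm
  · by_contra hc; linarith [k2.2 hc, k1.1]
  · by_contra hc; linarith [k1.2 hc, k2.1]

theorem good_exists {g : ι → E} (ht : E →ₗ[ℝ] ℝ) (hht : ∀ i, ht (g i) = 1) {w : ι → ℝ}
    (hw : GenW g w) {z : E} (hz : z ∈ Cone g)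
    (hgen : ∀ B, IsB g B → ∀ i ∈ B, co g B z i ≠ 0) :
    ∃ B, Good g w B ∧ ∀ i ∈ B, 0 < co g B z i := by
  classical
  have red : ∀ l : ι → ℝ, (∀ i, 0 ≤ l i) → ∑ i, l i • g i = z → ∃ B, IsB g B ∧
      (∀ i ∈ B, 0 < co g B z i) ∧ ∑ i, co g B z i * w i ≤ ∑ i, l i * w i := by
    intro l hl hlz
    obtain ⟨l', p1, p2, p3, p4⟩ := reduce g ht hht w _ l hl le_rfl
    obtain ⟨B, hIB, hB⟩ := ind_extend g _ p4
    have e : co g B z = l' := by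
      apply co_eq' hB
      · intro i hi
        by_contra hne
        exact hi (hIB (by simp [hne]))
      · rw [p2, hlz]
    refine ⟨B, hB, ?_, by rw [e]; exact p3⟩
    intro i hi
    have := hgen B hB i hi
    rw [e] at this ⊢
    exact lt_of_le_of_ne (p1 i) (Ne.symm this)
  obtain ⟨l, hl, hlz⟩ := hz
  have hzs : z ∈ Submodule.span ℝ (Set.range g) := hlz ▸ sum_mem_span g l
  have hne : (Finset.univ.filter fun B => IsB g B ∧ ∀ i ∈ B, 0 < co g B z i).Nonempty := by
    obtain ⟨B, hB, h1, _⟩ := red l hl hlz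
    exact ⟨B, by simp only [Finset.mem_filter, Finset.mem_univ, true_and]; exact ⟨hB, h1⟩⟩
  obtain ⟨B, hB, hmin⟩ := Finset.exists_min_image _ (fun B => ∑ i, co g B z i * w i) hne
  simp only [Finset.mem_filter, Finset.mem_univ, true_and] at hB hmin
  obtain ⟨hB, hpos⟩ := hB
  refine ⟨B, ⟨hB, ?_⟩, hpos⟩
  intro j hj
  by_contra hcon
  have hlt : w j < ∑ i, co g B (g j) i * w i :=
    lt_of_le_of_ne (not_lt.1 hcon) (Ne.symm (hw B hB j hj))
  -- choose small step
  have hev : ∀ᶠ e : ℝ in nhdsWithin 0 (Set.Ioi 0), ∀ i ∈ B, 0 < co g B z i - e * co g B (g j) i := by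
    rw [Filter.eventually_all_finset]
    intro i hi
    have : Tendsto (fun e : ℝ => co g B z i - e * co g B (g j) i) (nhdsWithin 0 (Set.Ioi 0))
        (nhds (co g B z i - 0 * co g B (g j) i)) := by
      apply Tendsto.mono_left _ nhdsWithin_le_nhds
      exact (Continuous.tendsto (by fun_prop) 0)
    apply this.eventually
    apply lt_mem_nhds
    simpa using hpos i hi
  obtain ⟨e, he, he0'⟩ := (hev.and self_mem_nhdsWithin).exists
  have he0 : 0 < e := he0'
  obtain ⟨B', hB', h1, h2⟩ := red (fun i => co g B z i - e * co g B (g j) i + e * (Pi.single j 1 : ι → ℝ) i)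
    (by
      intro i
      by_cases hi : i ∈ B
      · have : i ≠ j := by rintro rfl; exact hj hi
        have := he i hi
        simp [Pi.single_apply, *]
        linarith
      · rw [co_zero hB hi, co_zero hB hi]
        by_cases hij : i = j
        · subst hij; simp [he0.le]
        · simp [Pi.single_apply, hij])
    (by
      simp only [add_smul, sub_smul, Finset.sum_add_distrib, Finset.sum_sub_distrib, mul_smul,
        ← Finset.smul_sum, co_sum hB hzs, co_sum hB (gen_mem_span g j)]
      rw [Finset.sum_eq_single j] <;> simp +contextual [Pi.single_apply])
  have h3 := hmin B' ⟨hB', h1⟩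
  have h4 : ∑ i, (co g B z i - e * co g B (g j) i + e * (Pi.single j 1 : ι → ℝ) i) * w i
      = ∑ i, co g B z i * w i - e * (∑ i, co g B (g j) i * w i - w j) := by
    have : w j = ∑ i, (Pi.single j 1 : ι → ℝ) i * w i := by
      rw [Finset.sum_eq_single j] <;> simp +contextual [Pi.single_apply]
    rw [this, mul_sub, Finset.mul_sum, Finset.mul_sum, ← Finset.sum_sub_distrib,
      ← Finset.sum_sub_distrib]
    exact Finset.sum_congr rfl fun i _ => by ring
  rw [h4] at h2
  have : 0 < e * (∑ i, co g B (g j) i * w i - w j) := mul_pos he0 (by linarith)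
  linarith

/-- generic positive vectors -/
theorem exists_generic (S : Finset (ι → ℝ)) (hS : ∀ c ∈ S, c ≠ 0) :
    ∃ μ : ι → ℝ, (∀ i, 0 < μ i) ∧ ∀ c ∈ S, ∑ i, c i * μ i ≠ 0 := by
  classical
  let e := Fintype.equivFin ι
  let P : (ι → ℝ) → Polynomial ℝ := fun c => ∑ i, Polynomial.monomial (e i : ℕ) (c i)
  have hP : ∀ c ∈ S, P c ≠ 0 := by
    intro c hc h0
    apply hS c hc
    funext i
    have := congrArg (fun p => Polynomial.coeff p (e i : ℕ)) h0
    simp only [P, Polynomial.finsetSum_coeff, Polynomial.coeff_monomial, Polynomial.coeff_zero] at this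
    rw [Finset.sum_eq_single i] at this
    · simpa using this
    · intro j _ hj
      rw [if_neg]
      intro h; apply hj; exact e.injective (Fin.ext h)
    · simp
  have hfin : (⋃ c ∈ S, {x : ℝ | (P c).IsRoot x}).Finite := by
    apply Set.Finite.biUnion S.finite_toSet
    intro c hc
    exact Polynomial.finite_setOfPred_isRoot (hP c hc)
  obtain ⟨τ, hτ, hτ'⟩ := (Set.Ioi_infinite (0 : ℝ)).exists_notMem_finite hfin
  refine ⟨fun i => τ ^ (e i : ℕ), fun i => pow_pos hτ _, ?_⟩
  intro c hc h0
  apply hτ'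
  simp only [Set.mem_iUnion]
  refine ⟨c, hc, ?_⟩
  simp only [Set.mem_ofPred_eq, Polynomial.IsRoot, P, Polynomial.eval_finsetSum,
    Polynomial.eval_monomial]
  exact h0

theorem exists_genW (g : ι → E) : ∃ w : ι → ℝ, GenW g w := by
  classical
  obtain ⟨μ, _, h⟩ := exists_generic (ι := ι)
    ((Finset.univ.filter fun q : Finset ι × ι => IsB g q.1 ∧ q.2 ∉ q.1).image
      fun q : Finset ι × ι => (Pi.single q.2 1 - co g q.1 (g q.2) : ι → ℝ)) (by
      intro c hc
      simp only [Finset.mem_image, Finset.mem_filter, Finset.mem_univ, true_and, Prod.exists] at hc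
      obtain ⟨B, j, ⟨hB, hj⟩, rfl⟩ := hc
      intro h0
      have := congrFun h0 j
      simp [co_zero hB hj] at this)
  refine ⟨μ, ?_⟩
  intro B hB j hj h0
  apply h (Pi.single j 1 - co g B (g j))
    (Finset.mem_image.2 ⟨(B, j), by simp only [Finset.mem_filter, Finset.mem_univ, true_and]; exact ⟨hB, hj⟩, rfl⟩)
  simp only [Pi.sub_apply, sub_mul, Finset.sum_sub_distrib, h0]
  rw [Finset.sum_eq_single j] <;> simp +contextual [Pi.single_apply]

/-- generic direction -/
def GenY (g : ι → E) (y : E) : Prop := ∀ B, IsB g B → ∀ i ∈ B, co g B y i ≠ 0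

theorem exists_genY (g : ι → E) : ∃ μ : ι → ℝ, (∀ i, 0 < μ i) ∧ GenY g (∑ i, μ i • g i) := by
  classical
  obtain ⟨μ, hμ, h⟩ := exists_generic (ι := ι)
    ((Finset.univ.filter fun q : Finset ι × ι => IsB g q.1 ∧ q.2 ∈ q.1).image
      fun q : Finset ι × ι => fun j => co g q.1 (g j) q.2) (by
      intro c hc
      simp only [Finset.mem_image, Finset.mem_filter, Finset.mem_univ, true_and, Prod.exists] at hc
      obtain ⟨B, j, ⟨hB, hj⟩, rfl⟩ := hc
      intro h0
      have := congrFun h0 j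
      simp [co_self hB hj] at this)
  refine ⟨μ, hμ, ?_⟩
  intro B hB i hi h0
  apply h (fun j => co g B (g j) i)
    (Finset.mem_image.2 ⟨(B, i), by simp only [Finset.mem_filter, Finset.mem_univ, true_and]; exact ⟨hB, hi⟩, rfl⟩)
  rw [← h0]
  simp only [map_sum, map_smul, Finset.sum_apply, Pi.smul_apply, smul_eq_mul]
  exact Finset.sum_congr rfl fun i _ => by ring

theorem GenY.neg {g : ι → E} {y : E} (h : GenY g y) : GenY g (-y) := by
  intro B hB i hi; simpa using h B hB i hi

/-- lexicographic positivity -/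
def LexPos (a b : ℝ) : Prop := 0 < a ∨ (a = 0 ∧ 0 < b)

theorem lexpos_eventually (a b : ℝ) (hb : b ≠ 0) :
    ∀ᶠ e : ℝ in nhdsWithin 0 (Set.Ioi 0), (0 < a + e * b ↔ LexPos a b) ∧ a + e * b ≠ 0 := by
  have ht : Tendsto (fun e : ℝ => a + e * b) (nhdsWithin 0 (Set.Ioi 0)) (nhds a) := by
    apply Tendsto.mono_left _ nhdsWithin_le_nhds
    have : Tendsto (fun e : ℝ => a + e * b) (nhds 0) (nhds (a + 0 * b)) :=
      Continuous.tendsto (by fun_prop) 0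
    simpa using this
  rcases lt_trichotomy a 0 with h | h | h
  · filter_upwards [ht.eventually (gt_mem_nhds h)] with e he
    refine ⟨⟨fun h' => by linarith, ?_⟩, he.ne⟩
    rintro (h' | ⟨h', _⟩) <;> linarith
  · subst h
    filter_upwards [self_mem_nhdsWithin] with e he
    simp only [Set.mem_Ioi] at he
    refine ⟨?_, by simp [hb, he.ne']⟩
    simp [LexPos, he]
  · filter_upwards [ht.eventually (lt_mem_nhds h)] with e he
    exact ⟨⟨fun _ => Or.inl h, fun _ => he⟩, he.ne'⟩

theorem signs_eventually {g : ι → E} {y : E} (hy : GenY g y) (x : E) :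
    ∀ᶠ e : ℝ in nhdsWithin 0 (Set.Ioi 0), ∀ B, IsB g B → ∀ i ∈ B,
      (0 < co g B (x + e • y) i ↔ LexPos (co g B x i) (co g B y i)) ∧ co g B (x + e • y) i ≠ 0 := by
  classical
  rw [Filter.eventually_all]
  intro B
  by_cases hB : IsB g B
  · have : ∀ᶠ e : ℝ in nhdsWithin 0 (Set.Ioi 0), ∀ i ∈ B,
      (0 < co g B (x + e • y) i ↔ LexPos (co g B x i) (co g B y i)) ∧ co g B (x + e • y) i ≠ 0 := by
      rw [Filter.eventually_all_finset]
      intro i hi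
      have := lexpos_eventually (co g B x i) (co g B y i) (hy B hB i hi)
      simpa using this
    filter_upwards [this] with e he _ using he
  · filter_upwards with e h; exact absurd h hB

theorem pos_mem_cone {g : ι → E} {B : Finset ι} (hB : IsB g B) {z : E}
    (hz : z ∈ Submodule.span ℝ (Set.range g)) (h : ∀ i ∈ B, 0 ≤ co g B z i) : z ∈ Cone g := by
  refine ⟨co g B z, ?_, co_sum hB hz⟩
  intro i
  by_cases hi : i ∈ B
  · exact h i hi
  · rw [co_zero hB hi]

theorem decomp {g : ι → E} (ht : E →ₗ[ℝ] ℝ) (hht : ∀ i, ht (g i) = 1) {w : ι → ℝ}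
    (hw : GenW g w) {y : E} (hyW : y ∈ Submodule.span ℝ (Set.range g)) (hy : GenY g y) {x : E}
    (hx : x ∈ Submodule.span ℝ (Set.range g)) :
    (∀ᶠ e : ℝ in nhdsWithin 0 (Set.Ioi 0), x + e • y ∈ Cone g) ↔
      ∃ B, Good g w B ∧ ∀ i ∈ B, LexPos (co g B x i) (co g B y i) := by
  constructor
  · intro h
    obtain ⟨e, h1, h2⟩ := (h.and (signs_eventually hy x)).exists
    obtain ⟨B, hB, hpos⟩ := good_exists ht hht hw h1 (fun B hB i hi => (h2 B hB i hi).2)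
    exact ⟨B, hB, fun i hi => (h2 B hB.1 i hi).1.1 (hpos i hi)⟩
  · rintro ⟨B, hB, h⟩
    filter_upwards [signs_eventually hy x] with e he
    apply pos_mem_cone hB.1 (Submodule.add_mem _ hx (Submodule.smul_mem _ _ hyW))
    intro i hi
    exact ((he B hB.1 i hi).1.2 (h i hi)).le

theorem decomp_unique {g : ι → E} {w : ι → ℝ}
    {y : E} (hyW : y ∈ Submodule.span ℝ (Set.range g)) (hy : GenY g y) {x : E}
    (hx : x ∈ Submodule.span ℝ (Set.range g)) {B B' : Finset ι} (hB : Good g w B)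
    (hB' : Good g w B')
    (h : ∀ i ∈ B, LexPos (co g B x i) (co g B y i))
    (h' : ∀ i ∈ B', LexPos (co g B' x i) (co g B' y i)) : B = B' := by
  obtain ⟨e, he⟩ := (signs_eventually hy x).exists
  exact good_unique hB hB' (Submodule.add_mem _ hx (Submodule.smul_mem _ e hyW))
    (fun i hi => (he B hB.1 i hi).1.2 (h i hi)) (fun i hi => (he B' hB'.1 i hi).1.2 (h' i hi))

theorem cone_iff_eventually {g : ι → E} (ht : E →ₗ[ℝ] ℝ) (hht : ∀ i, ht (g i) = 1)
    {y : E} (hyC : y ∈ Cone g) (hy : GenY g y) {x : E} :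
    x ∈ Cone g ↔ x ∈ Submodule.span ℝ (Set.range g) ∧
      (∀ᶠ e : ℝ in nhdsWithin 0 (Set.Ioi 0), x + e • y ∈ Cone g) := by
  constructor
  · rintro ⟨l, hl, rfl⟩
    refine ⟨sum_mem_span g l, ?_⟩
    filter_upwards [self_mem_nhdsWithin] with e he
    simp only [Set.mem_Ioi] at he
    obtain ⟨k, hk, rfl⟩ := hyC
    refine ⟨fun i => l i + e * k i, fun i => add_nonneg (hl i) (mul_nonneg he.le (hk i)), ?_⟩
    simp only [add_smul, Finset.sum_add_distrib, mul_smul, ← Finset.smul_sum]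
  · rintro ⟨hx, h⟩
    obtain ⟨w, hw⟩ := exists_genW g
    obtain ⟨B, hB, h⟩ := (decomp ht hht hw (cone_sub_span hyC) hy hx).1 h
    apply pos_mem_cone hB.1 hx
    intro i hi
    rcases h i hi with h | ⟨h, _⟩
    · exact h.le
    · exact h.ge
end LP
end Gor

namespace Gor

section Count
variable {E : Type*} [AddCommGroup E] [Module ℝ E] {ι : Type*} [Fintype ι]

theorem isB_card {g : ι → E} {B : Finset ι} (hB : IsB g B) :
    B.card = Module.finrank ℝ (Submodule.span ℝ (Set.range g)) := by
  classical
  have h1 := (ind_iff g B).1 hB.1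
  have h2 : Submodule.span ℝ (Set.range g) = Submodule.span ℝ (g '' B) := by
    apply le_antisymm
    · rw [Submodule.span_le]; rintro _ ⟨j, rfl⟩; exact hB.2 j
    · apply Submodule.span_mono; rintro _ ⟨i, _, rfl⟩; exact ⟨i, rfl⟩
  rw [h2]
  have h3 := finrank_span_eq_card (R := ℝ) (b := fun i : (B : Set ι) => g i) h1
  rw [← Set.image_eq_range] at h3
  rw [h3]; simp

theorem card_piAntidiag [DecidableEq ι] (s : Finset ι) (n : ℕ) :
    (s.piAntidiag n).card = s.card.multichoose n := by
  rw [← Finset.card_finsuppAntidiag_nat_eq_multichoose]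
  symm
  refine Finset.card_bij (fun (f : ι →₀ ℕ) _ => (f : ι → ℕ)) ?_ ?_ ?_
  · intro f hf
    rw [Finset.mem_finsuppAntidiag] at hf
    rw [Finset.mem_piAntidiag]
    refine ⟨hf.1, fun i hi => hf.2 (by simpa using hi)⟩
  · intro a _ b _ h; exact DFunLike.coe_injective h
  · intro b hb
    rw [Finset.mem_piAntidiag] at hb
    refine ⟨Finsupp.equivFunOnFinite.symm b, ?_, rfl⟩
    rw [Finset.mem_finsuppAntidiag]
    refine ⟨hb.1, fun i hi => hb.2 i (by simpa using hi)⟩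

/-- half-open interval conditions -/
def HO (a b : ℝ) : Prop := (0 < b ∧ 0 ≤ a ∧ a < 1) ∨ (b < 0 ∧ 0 < a ∧ a ≤ 1)

theorem HO.lex {a b : ℝ} (h : HO a b) (n : ℕ) : LexPos (a + n) b := by
  have hn : (0:ℝ) ≤ n := Nat.cast_nonneg n
  rcases h with ⟨h1, h2, h3⟩ | ⟨h1, h2, h3⟩
  · rcases (add_nonneg h2 hn).lt_or_eq with h | h
    · exact Or.inl h
    · exact Or.inr ⟨h.symm, h1⟩
  · exact Or.inl (by linarith)

theorem HO.ex {a b : ℝ} (hb : b ≠ 0) (h : LexPos a b) : ∃ n : ℕ, HO (a - n) b := by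
  have ha : 0 ≤ a := by
    rcases h with h | ⟨h, _⟩
    · exact h.le
    · exact h.ge
  rcases lt_or_gt_of_ne hb with hb | hb
  · have ha' : 0 < a := by
      rcases h with h | ⟨h, h'⟩
      · exact h
      · linarith
    refine ⟨⌈a⌉₊ - 1, Or.inr ⟨hb, ?_⟩⟩
    have h1 : 1 ≤ ⌈a⌉₊ := Nat.one_le_ceil_iff.2 ha'
    rw [Nat.cast_sub h1]
    have h2 := Nat.le_ceil a
    have h3 := Nat.ceil_lt_add_one ha
    push_cast
    constructor <;> linarith
  · refine ⟨⌊a⌋₊, Or.inl ⟨hb, ?_⟩⟩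
    have h2 := Nat.floor_le ha
    have h3 := Nat.lt_floor_add_one a
    constructor <;> linarith

theorem HO.uniq {a a' b : ℝ} (h : HO a b) (h' : HO a' b) {n n' : ℕ} (e : a + n = a' + n') : n = n' := by
  have : |(n : ℝ) - n'| < 1 := by
    rw [abs_lt]
    rcases h with ⟨h1, h2, h3⟩ | ⟨h1, h2, h3⟩ <;> rcases h' with ⟨k1, k2, k3⟩ | ⟨k1, k2, k3⟩ <;>
      constructor <;> linarith
  have h2 : |(n : ℤ) - n'| < 1 := by exact_mod_cast this
  rw [Int.abs_lt_one_iff] at h2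
  omega

theorem HO.neg {a b : ℝ} (h : HO a b) : HO (1 - a) (-b) := by
  rcases h with ⟨h1, h2, h3⟩ | ⟨h1, h2, h3⟩
  · right; refine ⟨by linarith, by linarith, by linarith⟩
  · left; refine ⟨by linarith, by linarith, by linarith⟩

theorem HO.bd {a b : ℝ} (h : HO a b) : 0 ≤ a ∧ a ≤ 1 := by
  rcases h with ⟨h1, h2, h3⟩ | ⟨h1, h2, h3⟩
  · exact ⟨h2, h3.le⟩
  · exact ⟨h2.le, h3⟩

variable {G : Type*} [AddCommGroup G]

/-- a lattice with generators at height one -/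
structure LatData (E : Type*) [AddCommGroup E] [Module ℝ E] (ι : Type*) [Fintype ι]
    (G : Type*) [AddCommGroup G] where
  φ : G →+ E
  inj : Function.Injective φ
  γ : ι → G
  ht : E →ₗ[ℝ] ℝ
  hz : G →+ ℤ
  hht : ∀ p, ht (φ p) = hz p
  h1 : ∀ i, hz (γ i) = 1
  fin : ∀ B, IsB (fun i => φ (γ i)) B →
    {p : G | φ p ∈ Submodule.span ℝ (Set.range fun i => φ (γ i)) ∧
      ∀ i, |co (fun i => φ (γ i)) B (φ p) i| ≤ 1}.Finite

namespace LatData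
variable (L : LatData E ι G)

/-- the generators -/
def g : ι → E := fun i => L.φ (L.γ i)

/-- span -/
def W : Submodule ℝ E := Submodule.span ℝ (Set.range L.g)

/-- dimension -/
def D : ℕ := Module.finrank ℝ L.W

theorem hg (i : ι) : L.ht (L.g i) = 1 := by simp [g, L.hht, L.h1]

/-- parallelepiped points -/
def Par (w : ι → ℝ) (y : E) : Set (Finset ι × G) :=
  {q | Good L.g w q.1 ∧ L.φ q.2 ∈ L.W ∧ ∀ i ∈ q.1, HO (co L.g q.1 (L.φ q.2) i) (co L.g q.1 y i)}

theorem par_finite (w : ι → ℝ) (y : E) : (L.Par w y).Finite := by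
  classical
  have : L.Par w y ⊆ ⋃ B ∈ (Finset.univ.filter fun B => IsB L.g B : Finset (Finset ι)),
      (Prod.mk B) '' {p : G | L.φ p ∈ L.W ∧ ∀ i, |co L.g B (L.φ p) i| ≤ 1} := by
    rintro ⟨B, p⟩ ⟨h1, h2, h3⟩
    simp only [Set.mem_iUnion]
    refine ⟨B, by simpa using h1.1, p, ⟨h2, ?_⟩, rfl⟩
    intro i
    by_cases hi : i ∈ B
    · have := (h3 i hi).bd
      rw [abs_le]; constructor <;> linarith
    · rw [co_zero h1.1 hi]; simp
  apply Set.Finite.subset _ this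
  apply Set.Finite.biUnion (Finset.finite_toSet _)
  intro B hB
  apply Set.Finite.image
  have hB' : IsB L.g B := by simpa using hB
  exact L.fin B hB'

def hv (w : ι → ℝ) (y : E) (j : ℤ) : ℕ := {q ∈ L.Par w y | L.hz q.2 = j}.ncard

/-- the perturbed cone points of height `t` -/
def S (y : E) (t : ℤ) : Set G :=
  {p | L.hz p = t ∧ L.φ p ∈ L.W ∧ ∀ᶠ e : ℝ in nhdsWithin 0 (Set.Ioi 0), L.φ p + e • y ∈ Cone L.g}

theorem par_ht {w : ι → ℝ} {y : E} {q : Finset ι × G} (hq : q ∈ L.Par w y) :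
    0 ≤ L.hz q.2 ∧ L.hz q.2 ≤ L.D := by
  obtain ⟨h1, h2, h3⟩ := hq
  have e : (L.hz q.2 : ℝ) = ∑ i ∈ q.1, co L.g q.1 (L.φ q.2) i := by
    rw [← L.hht]
    conv_lhs => rw [← co_sum h1.1 h2]
    simp only [map_sum, map_smul, L.hg, smul_eq_mul, mul_one]
    symm
    apply Finset.sum_subset (Finset.subset_univ _)
    intro i _ hi; exact co_zero h1.1 hi
  constructor
  · have : (0 : ℝ) ≤ L.hz q.2 := by rw [e]; exact Finset.sum_nonneg fun i hi => (h3 i hi).bd.1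
    exact_mod_cast this
  · have : (L.hz q.2 : ℝ) ≤ L.D := by
      rw [e, D, W, ← isB_card h1.1]
      calc _ ≤ ∑ i ∈ q.1, (1:ℝ) := Finset.sum_le_sum fun i hi => (h3 i hi).bd.2
        _ = _ := by simp
    exact_mod_cast this

theorem hv_neg (w : ι → ℝ) (y : E) (j : ℤ) : L.hv w (-y) (L.D - j) = L.hv w y j := by
  have key : ∀ y j, (fun q : Finset ι × G => (q.1, ∑ i ∈ q.1, L.γ i - q.2)) ''
      {q ∈ L.Par w y | L.hz q.2 = j} ⊆ {q ∈ L.Par w (-y) | L.hz q.2 = L.D - j} := by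
    rintro y j _ ⟨⟨B, p⟩, ⟨⟨h1, h2, h3⟩, h4⟩, rfl⟩
    have hs : L.φ (∑ i ∈ B, L.γ i) ∈ L.W := by
      rw [map_sum]; exact Submodule.sum_mem _ fun i _ => gen_mem_span L.g i
    refine ⟨⟨h1, ?_, ?_⟩, ?_⟩
    · simp only [map_sub]
      exact Submodule.sub_mem _ hs h2
    · intro i hi
      simp only at hi h3 ⊢
      have : co L.g B (L.φ (∑ i ∈ B, L.γ i)) i = 1 := by
        classical
        rw [co_eq' h1.1 (l := fun i => if i ∈ B then 1 else 0)]
        · simp [hi]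
        · intro i hi; simp [hi]
        · simp [g]
      rw [map_sub, map_sub, Pi.sub_apply, this, map_neg, Pi.neg_apply]
      exact (h3 i hi).neg
    · simp only [map_sub, map_sum, L.h1]
      simp only at h4
      rw [h4, D, W, ← isB_card h1.1]; simp
  have inj : Function.Injective (fun q : Finset ι × G => (q.1, ∑ i ∈ q.1, L.γ i - q.2)) := by
    rintro ⟨B, p⟩ ⟨B', p'⟩ h
    simp only [Prod.mk.injEq] at h
    obtain ⟨rfl, h⟩ := h
    simpa using h
  have le : ∀ y j, L.hv w y j ≤ L.hv w (-y) (L.D - j) := by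
    intro y j
    unfold hv
    rw [← Set.ncard_image_of_injective _ inj]
    exact Set.ncard_le_ncard (key y j) ((L.par_finite w (-y)).subset fun q hq => hq.1)
  apply le_antisymm
  · have := le (-y) (L.D - j)
    rw [neg_neg] at this
    simpa using this
  · exact le y j

theorem S_eq {w : ι → ℝ} (hw : GenW L.g w) {y : E} (hyW : y ∈ L.W) (hy : GenY L.g y) (t : ℤ) :
    (L.S y t).Finite ∧ (L.S y t).ncard =
      ∑ q ∈ (L.par_finite w y).toFinset, if L.hz q.2 ≤ t then L.D.multichoose (t - L.hz q.2).toNat else 0 := by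
  classical
  let F : Finset (Σ _ : Finset ι × G, ι → ℕ) := (L.par_finite w y).toFinset.sigma fun q =>
    if L.hz q.2 ≤ t then q.1.piAntidiag (t - L.hz q.2).toNat else ∅
  let f : (Σ _ : Finset ι × G, ι → ℕ) → G := fun x => x.1.2 + ∑ i, x.2 i • L.γ i
  have memF : ∀ x, x ∈ F ↔ x.1 ∈ L.Par w y ∧ L.hz x.1.2 + ∑ i, (x.2 i : ℤ) = t ∧
      ∀ i, i ∉ x.1.1 → x.2 i = 0 := by
    rintro ⟨⟨B, p⟩, c⟩
    simp only [F, Finset.mem_sigma, Set.Finite.mem_toFinset]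
    apply and_congr_right
    intro hq
    have hs : ∀ (h : ∀ i, i ∉ B → c i = 0), B.sum c = ∑ i, c i := by
      intro h; apply Finset.sum_subset (Finset.subset_univ _); intro i _ hi; exact h i hi
    constructor
    · intro h
      split_ifs at h with hle
      · rw [Finset.mem_piAntidiag] at h
        have h0 : ∀ i, i ∉ B → c i = 0 := fun i hi => by
          by_contra hc; exact hi (h.2 i hc)
        refine ⟨?_, h0⟩
        rw [hs h0] at h
        have := h.1
        zify at this
        rw [Int.toNat_of_nonneg (by omega)] at this
        omega
      · simp at h
    · rintro ⟨h, h0⟩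
      have hnn : 0 ≤ ∑ i, (c i : ℤ) := Finset.sum_nonneg fun i _ => by positivity
      rw [if_pos (by omega), Finset.mem_piAntidiag]
      refine ⟨?_, fun i hi => by by_contra hc; exact hi (h0 i hc)⟩
      rw [hs h0]
      zify
      rw [Int.toNat_of_nonneg (by omega)]
      omega
  have hco : ∀ x, x ∈ F → ∀ i ∈ x.1.1, co L.g x.1.1 (L.φ (f x)) i = co L.g x.1.1 (L.φ x.1.2) i + x.2 i := by
    intro x hx i hi
    obtain ⟨h1, h2, h3⟩ := (memF x).1 hx
    have : co L.g x.1.1 (∑ i, (x.2 i : ℝ) • L.g i) = fun i => (x.2 i : ℝ) :=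
      co_eq h1.1.1 fun i hi => by simp [h3 i hi]
    have e : L.φ (f x) = L.φ x.1.2 + ∑ i, (x.2 i : ℝ) • L.g i := by
      simp [f, g, map_add, map_sum, Nat.cast_smul_eq_nsmul]
    rw [e, map_add, this]; rfl
  have hfW : ∀ x, x ∈ F → L.φ (f x) ∈ L.W := by
    intro x hx
    obtain ⟨h1, h2, h3⟩ := (memF x).1 hx
    have e : L.φ (f x) = L.φ x.1.2 + ∑ i, (x.2 i : ℝ) • L.g i := by
      simp [f, g, map_add, map_sum, Nat.cast_smul_eq_nsmul]
    rw [e]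
    exact Submodule.add_mem _ h1.2.1 (sum_mem_span _ _)
  have hlex : ∀ x, x ∈ F → ∀ i ∈ x.1.1, LexPos (co L.g x.1.1 (L.φ (f x)) i) (co L.g x.1.1 y i) := by
    intro x hx i hi
    rw [hco x hx i hi]
    exact (((memF x).1 hx).1.2.2 i hi).lex _
  have hS : L.S y t = f '' (F : Set _) := by
    ext p
    constructor
    · rintro ⟨h1, h2, h3⟩
      obtain ⟨B, hB, hlx⟩ := (decomp L.ht L.hg hw hyW hy h2).1 h3
      have : ∀ i, ∃ n : ℕ, (i ∈ B → HO (co L.g B (L.φ p) i - n) (co L.g B y i)) ∧ (i ∉ B → n = 0) := by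
        intro i
        by_cases hi : i ∈ B
        · obtain ⟨n, hn⟩ := HO.ex (hy B hB.1 i hi) (hlx i hi)
          exact ⟨n, fun _ => hn, fun h => absurd hi h⟩
        · exact ⟨0, fun h => absurd h hi, fun _ => rfl⟩
      choose c hc hc0 using this
      refine ⟨⟨(B, p - ∑ i, c i • L.γ i), c⟩, ?_, by simp [f]⟩
      rw [Finset.mem_coe, memF]
      have e : L.φ (p - ∑ i, c i • L.γ i) = L.φ p - ∑ i, (c i : ℝ) • L.g i := by
        simp [g, map_sum, Nat.cast_smul_eq_nsmul]
      refine ⟨⟨hB, ?_, ?_⟩, ?_, hc0⟩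
      · simp only; rw [e]; exact Submodule.sub_mem _ h2 (sum_mem_span _ _)
      · intro i hi
        simp only at hi ⊢
        rw [e, map_sub, co_eq hB.1 (l := fun i => (c i : ℝ)) (fun i hi => by simp [hc0 i hi])]
        exact hc i hi
      · simp [L.h1, h1]
    · rintro ⟨x, hx, rfl⟩
      have hx' := (memF x).1 hx
      refine ⟨?_, hfW x hx, ?_⟩
      · rw [← hx'.2.1]; simp [f, L.h1]
      · exact (decomp L.ht L.hg hw hyW hy (hfW x hx)).2 ⟨x.1.1, hx'.1.1, hlex x hx⟩
  have hinj : Set.InjOn f (F : Set _) := by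
    rintro ⟨⟨B, p⟩, c⟩ hx ⟨⟨B', p'⟩, c'⟩ hx' h
    have k1 := hlex _ hx
    have k2 := hlex _ hx'
    have k3 := hco _ hx
    have k4 := hco _ hx'
    have hW := hfW _ hx
    rw [← h] at k2 k4
    have m1 := (memF _).1 hx
    have m2 := (memF _).1 hx'
    have hBB : B = B' := decomp_unique hyW hy hW m1.1.1 m2.1.1 k1 k2
    subst hBB
    have hc : c = c' := by
      funext i
      by_cases hi : i ∈ B
      · have e := (k3 i hi).symm.trans (k4 i hi)
        exact (m1.1.2.2 i hi).uniq (m2.1.2.2 i hi) e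
      · exact (m1.2.2 i hi).trans (m2.2.2 i hi).symm
    subst hc
    simp only [f] at h
    have : p = p' := by simpa using h
    subst this; rfl
  refine ⟨by rw [hS]; exact (F.finite_toSet).image f, ?_⟩
  rw [hS, Set.ncard_image_of_injOn hinj, Set.ncard_coe_finset, Finset.card_sigma]
  apply Finset.sum_congr rfl
  intro q hq
  split_ifs
  · rw [card_piAntidiag, isB_card ((Set.Finite.mem_toFinset _).1 hq).1.1]; rfl
  · simp

theorem S_ncard {w : ι → ℝ} (hw : GenW L.g w) {y : E} (hyW : y ∈ L.W) (hy : GenY L.g y) (t : ℤ) :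
    (L.S y t).ncard = ∑ j ∈ Finset.range (L.D + 1),
      if (j : ℤ) ≤ t then L.hv w y j * L.D.multichoose (t - j).toNat else 0 := by
  classical
  rw [(L.S_eq hw hyW hy t).2]
  have hmap : ∀ q ∈ (L.par_finite w y).toFinset, (L.hz q.2).toNat ∈ Finset.range (L.D + 1) := by
    intro q hq
    have := L.par_ht ((Set.Finite.mem_toFinset _).1 hq)
    rw [Finset.mem_range]; omega
  rw [← Finset.sum_fiberwise_of_maps_to hmap]
  apply Finset.sum_congr rfl
  intro j hj
  have hcard : L.hv w y j = ((L.par_finite w y).toFinset.filter fun q => (L.hz q.2).toNat = j).card := by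
    rw [hv, ← Set.ncard_coe_finset]
    congr 1
    ext q
    simp only [Finset.coe_filter, Set.Finite.mem_toFinset, Set.mem_ofPred_eq]
    apply and_congr_right
    intro hq
    have := L.par_ht hq
    omega
  have : ∀ q ∈ (L.par_finite w y).toFinset.filter (fun q => (L.hz q.2).toNat = j),
      (if L.hz q.2 ≤ t then L.D.multichoose (t - L.hz q.2).toNat else 0) =
      if (j : ℤ) ≤ t then L.D.multichoose (t - j).toNat else 0 := by
    intro q hq
    rw [Finset.mem_filter, Set.Finite.mem_toFinset] at hq
    have h1 := L.par_ht hq.1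
    have : L.hz q.2 = j := by omega
    rw [this]
  rw [Finset.sum_congr rfl this, Finset.sum_const, hcard]
  split_ifs <;> simp

theorem ehrhart : ∃ (h : ℕ → ℕ) (μ : ι → ℝ), (∀ i, 0 < μ i) ∧ ∀ t : ℤ,
    {p | L.hz p = t ∧ L.φ p ∈ Cone L.g}.Finite ∧
    {p | L.hz p = t ∧ L.φ p ∈ Cone L.g}.ncard = ∑ j ∈ Finset.range (L.D + 1),
      (if (j : ℤ) ≤ t then h j * L.D.multichoose (t - j).toNat else 0) ∧
    {p | L.hz p = t ∧ L.φ p ∈ L.W ∧ ∀ᶠ e : ℝ in nhdsWithin 0 (Set.Ioi 0),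
      L.φ p - e • (∑ i, μ i • L.g i) ∈ Cone L.g}.ncard = ∑ j ∈ Finset.range (L.D + 1),
      (if (j : ℤ) ≤ t then h (L.D - j) * L.D.multichoose (t - j).toNat else 0) := by
  obtain ⟨w, hw⟩ := exists_genW L.g
  obtain ⟨μ, hμ, hy⟩ := exists_genY L.g
  refine ⟨fun j => L.hv w (∑ i, μ i • L.g i) j, μ, hμ, fun t => ?_⟩
  have hyC : ∑ i, μ i • L.g i ∈ Cone L.g := ⟨μ, fun i => (hμ i).le, rfl⟩
  have hyW : ∑ i, μ i • L.g i ∈ L.W := cone_sub_span hyC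
  have e1 : {p | L.hz p = t ∧ L.φ p ∈ Cone L.g} = L.S (∑ i, μ i • L.g i) t := by
    ext p
    simp only [S, Set.mem_ofPred_eq]
    rw [cone_iff_eventually L.ht L.hg hyC hy]
    rfl
  rw [e1]
  refine ⟨(L.S_eq hw hyW hy t).1, L.S_ncard hw hyW hy t, ?_⟩
  have e2 : {p | L.hz p = t ∧ L.φ p ∈ L.W ∧ ∀ᶠ e : ℝ in nhdsWithin 0 (Set.Ioi 0),
      L.φ p - e • (∑ i, μ i • L.g i) ∈ Cone L.g} = L.S (-∑ i, μ i • L.g i) t := by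
    ext p
    simp only [S, Set.mem_ofPred_eq, smul_neg, sub_eq_add_neg]
  rw [e2, L.S_ncard hw (Submodule.neg_mem _ hyW) hy.neg t]
  apply Finset.sum_congr rfl
  intro j hj
  rw [Finset.mem_range] at hj
  beta_reduce
  rw [← L.hv_neg w (∑ i, μ i • L.g i) ((L.D - j : ℕ) : ℤ)]
  rw [Nat.cast_sub (by omega), sub_sub_cancel]
end LatData
end Count
end Gor

namespace Gor

/-- asymptotic coefficient of `t^k / k!` -/
def As (k : ℕ) (f : ℤ → ℝ) (c : ℝ) : Prop :=
  Tendsto (fun t : ℤ => f t * (k.factorial : ℝ) / (t : ℝ) ^ k) atTop (nhds c)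

namespace As
variable {k : ℕ} {f g : ℤ → ℝ} {a b : ℝ}

theorem add (hf : As k f a) (hg : As k g b) : As k (fun t => f t + g t) (a + b) := by
  refine (Tendsto.add hf hg).congr fun t => ?_
  ring

theorem mul_left (x : ℝ) (hf : As k f a) : As k (fun t => x * f t) (x * a) := by
  refine (Tendsto.const_mul x hf).congr fun t => ?_
  ring

theorem sub (hf : As k f a) (hg : As k g b) : As k (fun t => f t - g t) (a - b) := by
  refine (Tendsto.sub hf hg).congr fun t => ?_
  ring

theorem neg (hf : As k f a) : As k (fun t => - f t) (-a) := by
  refine (Tendsto.neg hf).congr fun t => ?_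
  ring

theorem zero : As k (fun _ => 0) 0 := by
  unfold As; simp

theorem sum {ι : Type*} (s : Finset ι) {f : ι → ℤ → ℝ} {a : ι → ℝ} (h : ∀ i ∈ s, As k (f i) (a i)) :
    As k (fun t => ∑ i ∈ s, f i t) (∑ i ∈ s, a i) := by
  refine (tendsto_finset_sum s h).congr fun t => ?_
  rw [Finset.sum_mul, Finset.sum_div]

theorem congr (hf : As k f a) (h : ∀ t, f t = g t) : As k g a := by
  have : f = g := funext h
  rwa [← this]

theorem conv (hf : As k f a) (h : ∀ t, f t = g t) (hab : a = b) : As k g b := by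
  have : f = g := funext h
  rwa [← this, ← hab]

theorem congr' (hf : As k f a) (h : ∀ᶠ t in atTop, f t = g t) : As k g a := by
  refine Tendsto.congr' ?_ hf
  filter_upwards [h] with t ht
  rw [ht]

theorem uniq (hf : As k f a) (hg : As k f b) : a = b := tendsto_nhds_unique hf hg

theorem shift (hf : As k f a) (r : ℤ) : As k (fun t => f (t - r)) a := by
  have h1 : Tendsto (fun t : ℤ => t - r) atTop atTop := tendsto_atTop_add_const_right _ _ tendsto_id
  have h2 : Tendsto (fun t : ℤ => ((((t - r : ℤ) : ℝ)) / (t : ℝ)) ^ k) atTop (nhds 1) := by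
    have : Tendsto (fun t : ℤ => (((t - r : ℤ) : ℝ)) / (t : ℝ)) atTop (nhds 1) := by
      have h3 : Tendsto (fun t : ℤ => 1 - (r : ℝ) / (t : ℝ)) atTop (nhds (1 - 0)) := by
        apply Tendsto.sub tendsto_const_nhds
        exact Tendsto.div_atTop tendsto_const_nhds tendsto_intCast_atTop_atTop
      rw [sub_zero] at h3
      refine h3.congr' ?_
      filter_upwards [eventually_gt_atTop 0] with t ht
      have : (t : ℝ) ≠ 0 := by exact_mod_cast ht.ne'
      push_cast
      field_simp
    simpa using this.pow k
  have h3 := (hf.comp h1).mul h2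
  rw [mul_one] at h3
  refine h3.congr' ?_
  filter_upwards [eventually_gt_atTop 0, h1.eventually (eventually_gt_atTop 0)] with t ht ht'
  have e1 : (t : ℝ) ≠ 0 := by exact_mod_cast ht.ne'
  have e2 : ((t - r : ℤ) : ℝ) ≠ 0 := by exact_mod_cast ht'.ne'
  simp only [Function.comp, div_pow]
  field_simp

theorem squeeze {f₁ f₂ : ℤ → ℝ} (h1 : As k f₁ a) (h2 : As k f₂ a)
    (l1 : ∀ᶠ t in atTop, f₁ t ≤ f t) (l2 : ∀ᶠ t in atTop, f t ≤ f₂ t) : As k f a := by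
  apply tendsto_of_tendsto_of_tendsto_of_le_of_le' h1 h2
  · filter_upwards [l1, eventually_gt_atTop 0] with t ht h0
    have : (0:ℝ) < t := by exact_mod_cast h0
    gcongr
  · filter_upwards [l2, eventually_gt_atTop 0] with t ht h0
    have : (0:ℝ) < t := by exact_mod_cast h0
    gcongr
end As

/-- the even function with `ψ (n+1) - ψ n = ⌊n/k⌋ + 1/2` -/
def psi (k : ℤ) (n : ℤ) : ℝ := ((n : ℝ) ^ 2 + ((n % k : ℤ) : ℝ) * (k - ((n % k : ℤ) : ℝ))) / (2 * k)

theorem psi_eq {k : ℤ} (hk : 0 < k) {n j ρ : ℤ} (h : n = k * j + ρ) (h0 : 0 ≤ ρ) (h1 : ρ ≤ k) :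
    psi k n = ((n : ℝ) ^ 2 + (ρ : ℝ) * (k - ρ)) / (2 * k) := by
  rcases h1.lt_or_eq with h1 | h1
  · have : n % k = ρ := by
      rw [h, Int.mul_add_emod_self_left]
      exact Int.emod_eq_of_lt h0 h1
    rw [psi, this]
  · have : n % k = 0 := by
      rw [h, h1]; simp
    rw [psi, this, h1]; simp

theorem psi_succ {k : ℤ} (hk : 0 < k) (n : ℤ) : psi k (n + 1) - psi k n = ((n / k : ℤ) : ℝ) + 1 / 2 := by
  have hk' : (k : ℝ) ≠ 0 := by exact_mod_cast hk.ne'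
  have e : n = k * (n / k) + n % k := (Int.mul_ediv_add_emod n k).symm
  have h0 := Int.emod_nonneg n hk.ne'
  have h1 := Int.emod_lt_of_pos n hk
  rw [psi_eq hk (n := n + 1) (j := n / k) (ρ := n % k + 1) (by omega) (by omega) (by omega),
    psi_eq hk e h0 h1.le]
  have e' : (n : ℝ) = k * ((n / k : ℤ) : ℝ) + ((n % k : ℤ) : ℝ) := by exact_mod_cast e
  generalize ((n / k : ℤ) : ℝ) = q at *
  push_cast
  generalize ((n % k : ℤ) : ℝ) = p at *
  rw [e']
  field_simp
  ring

theorem psi_neg {k : ℤ} (hk : 0 < k) (n : ℤ) : psi k (-n) = psi k n := by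
  have e : n = k * (n / k) + n % k := (Int.mul_ediv_add_emod n k).symm
  have h0 := Int.emod_nonneg n hk.ne'
  have h1 := Int.emod_lt_of_pos n hk
  rw [psi_eq hk (n := -n) (j := -(n / k) - 1) (ρ := k - n % k) (by linarith) (by omega) (by omega),
    psi_eq hk e h0 h1.le]
  push_cast
  ring

/-- pair potential -/
def gk (k : ℤ) (s s' : ℤ) : ℝ := ((s : ℝ) + s') / 2 - psi k (s - s')

theorem gk_symm {k : ℤ} (hk : 0 < k) (s s' : ℤ) : gk k s s' = gk k s' s := by
  unfold gk
  rw [← psi_neg hk (s - s'), neg_sub]; ring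

theorem gk_succ {k : ℤ} (hk : 0 < k) (s s' : ℤ) : gk k (s + 1) s' - gk k s s' = - (((s - s') / k : ℤ) : ℝ) := by
  unfold gk
  have := psi_succ hk (s - s')
  rw [show s + 1 - s' = s - s' + 1 by ring]
  push_cast at *
  linarith

/-- ceil of half -/
def ch (s : ℤ) : ℤ := -((-s) / 2)

/-- odd indicator -/
def od (s : ℤ) : ℝ := if s % 2 = 1 then 1 else 0

theorem ch_even {s j : ℤ} (h : s = 2 * j) : ch s = j ∧ ch (-s) = -j ∧ od s = 0 := by
  subst h
  refine ⟨by unfold ch; omega, by unfold ch; omega, ?_⟩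
  unfold od; rw [if_neg]; omega

theorem ch_odd {s j : ℤ} (h : s = 2 * j + 1) : ch s = j + 1 ∧ ch (-s) = -j ∧ od s = 1 := by
  subst h
  refine ⟨by unfold ch; omega, by unfold ch; omega, ?_⟩
  unfold od; rw [if_pos]; omega

theorem ch_add (s : ℤ) : ((ch s : ℤ) : ℝ) + ch (-s) = od s := by
  rcases Int.even_or_odd' s with ⟨j, h | h⟩
  · obtain ⟨h1, h2, h3⟩ := ch_even h
    rw [h1, h2, h3]; push_cast; ring
  · obtain ⟨h1, h2, h3⟩ := ch_odd h
    rw [h1, h2, h3]; push_cast; ring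

theorem quad_id (s : ℤ) : ((ch s : ℝ) * (ch s - 1) / 2 + (ch (-s) : ℝ) * (ch (-s) - 1) / 2)
    - 1 / 4 * ((s : ℝ) * (s - 1) / 2 + ((-s : ℤ) : ℝ) * (((-s : ℤ) : ℝ) - 1) / 2) = - od s / 4 := by
  rcases Int.even_or_odd' s with ⟨j, h | h⟩
  · obtain ⟨h1, h2, h3⟩ := ch_even h
    rw [h1, h2, h3, h]; push_cast; ring
  · obtain ⟨h1, h2, h3⟩ := ch_odd h
    rw [h1, h2, h3, h]; push_cast; ring

theorem pair_id {k : ℤ} (hk : 0 < k) {s s' q : ℤ} (h : s - s' = k * q) :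
    (gk k (ch s) (ch s') + gk k (ch (-s)) (ch (-s'))) - 1 / 4 * (gk k s s' + gk k (-s) (-s'))
      = 1 / 2 * (od s + od s') - k / 4 * od q := by
  have hk' : (k : ℝ) ≠ 0 := by exact_mod_cast hk.ne'
  have a1 := ch_add s
  have a2 := ch_add s'
  have e1 : psi k (s - s') = (k : ℝ) * q ^ 2 / 2 := by
    rw [psi_eq hk (j := q) (ρ := 0) (by omega) le_rfl hk.le, h]; push_cast; field_simp; ring
  have e2 : psi k (-s - -s') = (k : ℝ) * q ^ 2 / 2 := by
    rw [← psi_neg hk, ← e1]; congr 1; ring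
  have key : psi k (ch s - ch s') + psi k (ch (-s) - ch (-s')) = (k : ℝ) * q ^ 2 / 4 + k / 4 * od q := by
    have same : ∀ n : ℤ, 2 * n = k * q → psi k n + psi k (-n) = (k : ℝ) * q ^ 2 / 4 + k / 4 * od q := by
      intro n hn
      rw [psi_neg hk]
      have hnr : (2 : ℝ) * n = k * q := by exact_mod_cast hn
      have hnr' : (n : ℝ) = k * q / 2 := by linarith
      rcases Int.even_or_odd' q with ⟨j, hq | hq⟩
      · rw [psi_eq hk (j := j) (ρ := 0) (by rw [hq] at hn; nlinarith) le_rfl hk.le, (ch_even hq).2.2, hnr']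
        push_cast; field_simp; ring
      · have h2 : Even (k * q) := ⟨n, by omega⟩
        have hko : Even k := by
          rcases Int.even_mul.1 h2 with h | h
          · exact h
          · exact absurd h (by rw [Int.not_even_iff_odd]; exact ⟨j, hq⟩)
        obtain ⟨l, hl⟩ := hko
        rw [psi_eq hk (j := j) (ρ := l) (by subst hl; rw [hq] at hn; linarith) (by omega) (by omega),
          (ch_odd hq).2.2, hnr']
        rw [hl]; push_cast
        have : (l : ℝ) ≠ 0 := by
          intro h0; apply hk'; rw [hl]; push_cast; rw [h0]; ring
        field_simp; ring
    have diff : ∀ n : ℤ, 2 * n = k * q + 1 → psi k n + psi k (-n + 1) = (k : ℝ) * q ^ 2 / 4 + k / 4 * od q := by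
      intro n hn
      have hnr : (2 : ℝ) * n = k * q + 1 := by exact_mod_cast hn
      have hnr' : (n : ℝ) = (k * q + 1) / 2 := by linarith
      have hodd : Odd (k * q) := ⟨n - 1, by omega⟩
      obtain ⟨⟨l, hl⟩, ⟨j, hq⟩⟩ := Int.odd_mul.1 hodd
      rw [psi_eq hk (n := n) (j := j) (ρ := l + 1) (by subst hl hq; linarith) (by omega) (by omega),
        psi_eq hk (n := -n + 1) (j := -j - 1) (ρ := l + 1) (by subst hl hq; linarith) (by omega) (by omega),
          (ch_odd hq).2.2]
      push_cast
      rw [hnr', hl]; push_cast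
      have : (2 * (l : ℝ) + 1) ≠ 0 := by
        intro h0; apply hk'; rw [hl]; push_cast; exact h0
      field_simp; ring
    rcases Int.even_or_odd' s with ⟨j, hs | hs⟩ <;> rcases Int.even_or_odd' s' with ⟨j', hs' | hs'⟩
    · obtain ⟨h1, h2, h3⟩ := ch_even hs
      obtain ⟨h1', h2', h3'⟩ := ch_even hs'
      rw [h1, h2, h1', h2', ← same (j - j') (by omega)]
      congr 2; ring
    · obtain ⟨h1, h2, h3⟩ := ch_even hs
      obtain ⟨h1', h2', h3'⟩ := ch_odd hs'
      rw [h1, h2, h1', h2', add_comm, ← psi_neg hk, ← psi_neg hk (j - (j' + 1)),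
         ← diff (j - j') (by omega)]
      congr 2 <;> ring
    · obtain ⟨h1, h2, h3⟩ := ch_odd hs
      obtain ⟨h1', h2', h3'⟩ := ch_even hs'
      rw [h1, h2, h1', h2', ← diff (j + 1 - j') (by omega)]
      congr 2; ring
    · obtain ⟨h1, h2, h3⟩ := ch_odd hs
      obtain ⟨h1', h2', h3'⟩ := ch_odd hs'
      rw [h1, h2, h1', h2', ← same (j - j') (by omega)]
      congr 2 <;> ring
  unfold gk
  rw [e1, e2]
  push_cast
  linarith
end Gor

namespace Gor

section Core
variable {U : Type*} [Fintype U] [DecidableEq U]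

/-- unit vector -/
def eu (u : U) : U → ℤ := Pi.single u 1

theorem eu_self (u : U) : eu u u = 1 := by simp [eu]
theorem eu_ne {u w : U} (h : w ≠ u) : eu u w = 0 := by simp [eu, h]

theorem conn (Q : (U → ℤ) → Prop) (h0 : Q 0) (H : ∀ u : U, ∃ n : Set (U → ℤ),
    eu u ∈ AddSubgroup.closure n ∧ ∀ v ∈ n, ∀ s, Q s ↔ Q (s + v)) : ∀ s, Q s := by
  let K : AddSubgroup (U → ℤ) :=
    { carrier := {v | ∀ s, Q s ↔ Q (s + v)}
      zero_mem' := by intro s; simp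
      add_mem' := by
        intro a b ha hb s
        rw [← add_assoc]; exact (ha s).trans (hb _)
      neg_mem' := by
        intro a ha s
        have := ha (s + -a)
        rw [neg_add_cancel_right] at this
        exact this.symm }
  have hK : ∀ u, eu u ∈ K := by
    intro u
    obtain ⟨n, hn, h⟩ := H u
    have : AddSubgroup.closure n ≤ K := by
      rw [AddSubgroup.closure_le]; intro v hv; exact h v hv
    exact this hn
  intro s
  have : s ∈ K := by
    have e : s = ∑ u, s u • eu u := by
      funext w
      simp only [Finset.sum_apply, Pi.smul_apply, smul_eq_mul]
      rw [Finset.sum_eq_single w]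
      · simp [eu_self]
      · intro b _ hb; rw [eu_ne hb.symm]; simp
      · simp
    rw [e]
    exact AddSubgroup.sum_mem _ fun u _ => AddSubgroup.zsmul_mem _ (hK u) _
  have := (this 0).1 h0
  simpa using this

variable {K : ℕ} (r : ℤ) (N : (U → ℤ) → ℤ → ℝ) (A : U → U → ℝ) (k : U → U → ℤ) (c : U → ℝ)

/-- facet coefficient -/
def Eu (u : U) (s : U → ℤ) : ℝ :=
  - c u * s u + ∑ w, A u w * (((s u - s w) / k u w : ℤ) : ℝ)

/-- quadratic coefficient -/
def ee (s : U → ℤ) : ℝ :=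
  ∑ u, c u * ((s u : ℝ) * (s u - 1) / 2) + 1 / 2 * ∑ u, ∑ w, A u w * gk (k u w) (s u) (s w)

/-- all hypotheses for the combinatorial core -/
structure Hyp (K : ℕ) (r : ℤ) (N : (U → ℤ) → ℤ → ℝ) (A : U → U → ℝ) (k : U → U → ℤ) (c : U → ℝ) : Prop where
  kpos : ∀ u w, 0 < k u w
  ksymm : ∀ u w, k u w = k w u
  Asymm : ∀ u w, A u w = A w u
  Adiag : ∀ u, A u u = 0
  diag : ∀ s t, N (s + 1) t = N s (t - r)
  pair : ∀ s u w, u ≠ w → As K (fun t => N s t - N (s + eu u) t - N (s + eu w) t + N (s + eu u + eu w) t)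
    (if k u w ∣ s u - s w then A u w else 0)
  facet : ∀ u, As K (fun t => (N 0 t - N (eu u) t) - (N 0 (t - r) - N (eu u) (t - r))) (c u)

variable {r N A k c}

theorem floor_step {k : ℤ} (hk : 0 < k) (n : ℤ) :
    ((n / k : ℤ) : ℝ) - (((n - 1) / k : ℤ) : ℝ) = if k ∣ n then 1 else 0 := by
  have e : n = k * (n / k) + n % k := (Int.mul_ediv_add_emod n k).symm
  have h0 := Int.emod_nonneg n hk.ne'
  have h1 := Int.emod_lt_of_pos n hk
  split_ifs with h
  · have h2 := Int.emod_eq_zero_of_dvd h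
    have : (n - 1) / k = n / k - 1 := by
      rw [Int.ediv_eq_iff_of_pos hk]
      constructor <;> nlinarith
    rw [this]; push_cast; ring
  · have h2 : n % k ≠ 0 := fun h' => h (Int.dvd_of_emod_eq_zero h')
    have : (n - 1) / k = n / k := by
      rw [Int.ediv_eq_iff_of_pos hk]
      constructor
      · have : 1 ≤ n % k := by omega
        nlinarith
      · nlinarith
    rw [this]; ring

theorem facet_expand (H : Hyp K r N A k c) (u : U) : ∀ s,
    As K (fun t => (N s t - N (s + eu u) t) - (N 0 t - N (eu u) t)) (Eu A k c u s) := by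
  apply conn
  · have : Eu A k c u 0 = 0 := by simp [Eu]
    rw [this]
    refine As.zero.congr fun t => ?_
    simp
  have hw : ∀ w, w ≠ u → ∀ s : U → ℤ,
      As K (fun t => (N s t - N (s + eu u) t) - (N 0 t - N (eu u) t)) (Eu A k c u s) ↔
      As K (fun t => (N (s + eu w) t - N (s + eu w + eu u) t) - (N 0 t - N (eu u) t)) (Eu A k c u (s + eu w)) := by
    intro w hwu s
    have hp := H.pair s u w hwu.symm
    have hE : Eu A k c u s - Eu A k c u (s + eu w) = if k u w ∣ s u - s w then A u w else 0 := by
      unfold Eu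
      have e1 : (s + eu w) u = s u := by simp [eu_ne hwu.symm]
      rw [e1, add_sub_add_left_eq_sub, ← Finset.sum_sub_distrib, Finset.sum_eq_single w]
      · have e2 : (s + eu w) w = s w + 1 := by simp [eu_self]
        rw [e2, ← mul_sub, ← sub_sub, floor_step (H.kpos u w)]
        simp
      · intro b _ hb
        have e2 : (s + eu w) b = s b := by simp [eu_ne hb]
        rw [e2]; ring
      · simp
    rw [← hE] at hp
    have hcomm : s + eu w + eu u = s + eu u + eu w := by abel
    rw [hcomm]
    constructor
    · intro h
      refine (h.sub hp).conv (fun t => ?_) (by ring)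
      ring
    · intro h
      refine (h.add hp).conv (fun t => ?_) (by ring)
      ring
  have h1 : ∀ s : U → ℤ,
      As K (fun t => (N s t - N (s + eu u) t) - (N 0 t - N (eu u) t)) (Eu A k c u s) ↔
      As K (fun t => (N (s + 1) t - N (s + 1 + eu u) t) - (N 0 t - N (eu u) t)) (Eu A k c u (s + 1)) := by
    intro s
    have hE : Eu A k c u (s + 1) = Eu A k c u s - c u := by
      unfold Eu
      simp only [Pi.add_apply, Pi.one_apply, add_sub_add_right_eq_sub]
      push_cast; ring
    have hcomm : s + 1 + eu u = s + eu u + 1 := by abel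
    rw [hcomm]
    simp only [H.diag]
    rw [hE]
    have hf := H.facet u
    constructor
    · intro h
      refine ((h.shift r).sub hf).conv (fun t => ?_) rfl
      ring
    · intro h
      have h2 := (h.add hf).shift (-r)
      refine h2.conv (fun t => ?_) (by ring)
      rw [show t - -r - r = t by ring, show t - -r = t + r by ring]
      ring
  intro v
  refine ⟨{x | x = 1 ∨ ∃ w, w ≠ u ∧ x = eu w}, ?_, ?_⟩
  · by_cases hv : v = u
    · have e : eu v = 1 - ∑ w ∈ Finset.univ.erase u, eu w := by
        have : (1 : U → ℤ) = ∑ w, eu w := by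
          funext x
          simp only [Finset.sum_apply, Pi.one_apply]
          rw [Finset.sum_eq_single x]
          · simp [eu_self]
          · intro b _ hb; rw [eu_ne hb.symm]
          · simp
        rw [this, ← Finset.add_sum_erase _ _ (Finset.mem_univ u), hv]; abel
      rw [e]
      apply AddSubgroup.sub_mem
      · exact AddSubgroup.subset_closure (Or.inl rfl)
      · apply AddSubgroup.sum_mem
        intro w hw
        exact AddSubgroup.subset_closure (Or.inr ⟨w, (Finset.mem_erase.1 hw).1, rfl⟩)
    · exact AddSubgroup.subset_closure (Or.inr ⟨v, hv, rfl⟩)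
  · rintro x (rfl | ⟨w, hwu, rfl⟩) s
    · exact h1 s
    · exact hw w hwu s

theorem ee_step (H : Hyp K r N A k c) (u : U) (s : U → ℤ) :
    ee A k c (s + eu u) - ee A k c s = - Eu A k c u s := by
  unfold ee Eu
  have e1 : ∑ v, c v * (((s + eu u) v : ℝ) * ((s + eu u) v - 1) / 2) -
      ∑ v, c v * ((s v : ℝ) * (s v - 1) / 2) = c u * s u := by
    rw [← Finset.sum_sub_distrib, Finset.sum_eq_single u]
    · simp only [Pi.add_apply, eu_self]; push_cast; ring
    · intro b _ hb; simp [eu_ne hb]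
    · simp
  have e2 : ∑ v, ∑ w, A v w * gk (k v w) ((s + eu u) v) ((s + eu u) w) -
      ∑ v, ∑ w, A v w * gk (k v w) (s v) (s w) =
      2 * ∑ w, A u w * -(((s u - s w) / k u w : ℤ) : ℝ) := by
    have split : ∀ v w, A v w * gk (k v w) ((s + eu u) v) ((s + eu u) w) - A v w * gk (k v w) (s v) (s w)
        = (if v = u then A u w * -(((s u - s w) / k u w : ℤ) : ℝ) else 0) +
          (if w = u then A u v * -(((s u - s v) / k u v : ℤ) : ℝ) else 0) := by
      intro v w
      by_cases hv : v = u
      · subst hv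
        by_cases hw : w = v
        · subst hw; simp [H.Adiag]
        · simp only [if_true, hw, if_false, Pi.add_apply, eu_self, eu_ne hw, add_zero]
          rw [← mul_sub, gk_succ (H.kpos _ _)]
      · by_cases hw : w = u
        · subst hw
          simp only [hv, if_true, if_false, Pi.add_apply, eu_self, eu_ne hv, add_zero, zero_add]
          rw [← mul_sub, gk_symm (H.kpos _ _), gk_symm (H.kpos _ _) (s v), gk_succ (H.kpos _ _),
            H.Asymm, H.ksymm]
        · simp [hv, hw, eu_ne]
    rw [← Finset.sum_sub_distrib]
    simp only [← Finset.sum_sub_distrib]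
    simp only [split, Finset.sum_add_distrib]
    simp only [Finset.sum_ite_eq', Finset.mem_univ, if_true]
    rw [Finset.sum_comm]
    simp only [Finset.sum_ite_eq', Finset.mem_univ, if_true]
    ring
  have e3 : ∑ w, A u w * -(((s u - s w) / k u w : ℤ) : ℝ) = - ∑ w, A u w * (((s u - s w) / k u w : ℤ) : ℝ) := by
    simp
  rw [e3] at e2
  linarith

theorem N_expand (H : Hyp K r N A k c) : ∀ s,
    As K (fun t => N s t - N 0 t + ∑ u, (s u : ℝ) * (N 0 t - N (eu u) t)) (ee A k c s) := by
  apply conn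
  · have : ee A k c 0 = 0 := by
      simp [ee, gk, psi]
    rw [this]
    refine As.zero.congr fun t => ?_
    simp
  intro u
  refine ⟨{eu u}, AddSubgroup.subset_closure rfl, ?_⟩
  rintro _ rfl s
  have hf := facet_expand H u s
  have hE := ee_step H u s
  have hs : ∀ t, ∑ v, ((s + eu u) v : ℝ) * (N 0 t - N (eu v) t) =
      ∑ v, (s v : ℝ) * (N 0 t - N (eu v) t) + (N 0 t - N (eu u) t) := by
    intro t
    rw [← sub_eq_iff_eq_add', ← Finset.sum_sub_distrib, Finset.sum_eq_single u]
    · simp only [Pi.add_apply, eu_self]; push_cast; ring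
    · intro b _ hb; simp [eu_ne hb]
    · simp
  simp only [hs]
  constructor
  · intro h
    refine (h.sub hf).conv (fun t => ?_) (by linarith)
    ring
  · intro h
    refine (h.add hf).conv (fun t => ?_) (by linarith)
    ring

theorem core (H : Hyp K r N A k c) {Z : Type*} [Fintype Z] (n : Z → U → ℤ)
    (htr1 : ∀ z t, N (n z) t = N 0 t) (htr2 : ∀ z t, N (-(n z)) t = N 0 t)
    (hd1 : ∀ t, N 0 (2 * t) = ∑ z, N (fun u => ch (n z u)) t)
    (hd2 : ∀ t, N 0 (2 * t) = ∑ z, N (fun u => ch (-(n z u))) t)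
    (hodd : ∀ u, ∑ z, od (n z u) = (Fintype.card Z : ℝ) / 2)
    (q : Z → U → U → ℤ) (hq : ∀ z u w, A u w ≠ 0 → n z u - n z w = k u w * q z u w)
    (hqodd : ∀ u w, A u w ≠ 0 → ∑ z, od (q z u w) = (Fintype.card Z : ℝ) / 2) :
    ∃ C, As K (fun t => N 0 t - 2 * N 0 (t - r) + N 0 (t - 2 * r)) C ∧
      As K (fun t => 16 * Fintype.card Z * N 0 t - 16 * N 0 (2 * t) - 4 * Fintype.card Z * (N 0 t - N 0 (t - r)))
        (Fintype.card Z * (C + 1 / 2 * ∑ u, ∑ w, A u w * k u w)) := by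
  have h1 := N_expand H 1
  have h2 := N_expand H 2
  set A2 := 1 / 2 * ∑ u, ∑ w, A u w with hA2
  have e1 : ee A k c 1 = A2 := by
    simp [ee, gk, psi, hA2]
  have e2 : ee A k c 2 = ∑ u, c u + 2 * A2 := by
    simp only [ee, gk, psi, hA2, Pi.ofNat_apply]
    simp
    congr 1
    · refine Finset.sum_congr rfl fun u _ => ?_
      ring
    · rw [Finset.mul_sum]
      refine Finset.sum_congr rfl fun u _ => ?_
      rw [Finset.mul_sum]
      refine Finset.sum_congr rfl fun w _ => ?_
      ring
  rw [e1] at h1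
  rw [e2] at h2
  have d1 : ∀ t, N 1 t = N 0 (t - r) := fun t => by rw [← H.diag]; simp
  have d2 : ∀ t, N 2 t = N 0 (t - 2 * r) := fun t => by
    have : (2 : U → ℤ) = 1 + 1 := by norm_num
    rw [this, H.diag, d1]; congr 1; ring
  have h1' : As K (fun t => N 0 (t - r) - N 0 t + ∑ u, (N 0 t - N (eu u) t)) A2 :=
    h1.congr fun t => by simp [d1]
  have h2' : As K (fun t => N 0 (t - 2 * r) - N 0 t + 2 * ∑ u, (N 0 t - N (eu u) t)) (∑ u, c u + 2 * A2) :=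
    h2.congr fun t => by
      rw [d2, Finset.mul_sum]; congr 1
  refine ⟨∑ u, c u, ?_, ?_⟩
  · refine (h2'.sub (h1'.mul_left 2)).conv (fun t => ?_) (by ring)
    ring
  have tr : ∀ z, ee A k c (n z) + ee A k c (-(n z)) = 0 := by
    intro z
    refine As.uniq (((N_expand H (n z)).add (N_expand H (-(n z)))).congr fun t => ?_) As.zero
    rw [htr1, htr2]
    simp [Finset.sum_neg_distrib]
  have hz : ∀ z, ee A k c (fun u => ch (n z u)) + ee A k c (fun u => ch (-(n z u))) =
      ∑ u, c u * (- od (n z u) / 4) + 1 / 2 * ∑ u, ∑ w, A u w * (1 / 2 * (od (n z u) + od (n z w))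
        - k u w / 4 * od (q z u w)) := by
    intro z
    have t := tr z
    have e : ∑ u, c u * (- od (n z u) / 4) = ∑ u, c u * ((ch (n z u) : ℝ) * (ch (n z u) - 1) / 2) +
        ∑ u, c u * ((ch (-(n z u)) : ℝ) * (ch (-(n z u)) - 1) / 2)
        - 1 / 4 * (∑ u, c u * ((n z u : ℝ) * (n z u - 1) / 2) +
          ∑ u, c u * (((-(n z)) u : ℝ) * ((-(n z)) u - 1) / 2)) := by
      rw [← Finset.sum_add_distrib, ← Finset.sum_add_distrib, Finset.mul_sum, ← Finset.sum_sub_distrib]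
      refine Finset.sum_congr rfl fun u _ => ?_
      rw [← quad_id, Pi.neg_apply]; ring
    have e' : ∑ u, ∑ w, A u w * (1 / 2 * (od (n z u) + od (n z w)) - k u w / 4 * od (q z u w)) =
        ∑ u, ∑ w, A u w * gk (k u w) (ch (n z u)) (ch (n z w)) +
        ∑ u, ∑ w, A u w * gk (k u w) (ch (-(n z u))) (ch (-(n z w))) -
        1 / 4 * (∑ u, ∑ w, A u w * gk (k u w) (n z u) (n z w) +
          ∑ u, ∑ w, A u w * gk (k u w) ((-(n z)) u) ((-(n z)) w)) := by
      rw [← Finset.sum_add_distrib, ← Finset.sum_add_distrib, Finset.mul_sum, ← Finset.sum_sub_distrib]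
      refine Finset.sum_congr rfl fun u _ => ?_
      rw [← Finset.sum_add_distrib, ← Finset.sum_add_distrib, Finset.mul_sum, ← Finset.sum_sub_distrib]
      refine Finset.sum_congr rfl fun w _ => ?_
      by_cases hA : A u w = 0
      · simp [hA]
      rw [← pair_id (H.kpos u w) (hq z u w hA), Pi.neg_apply, Pi.neg_apply]; ring
    rw [e, e']
    unfold ee at t ⊢
    linarith
  have hsum : As K (fun t => 2 * N 0 (2 * t) - 2 * Fintype.card Z * N 0 t
      + (Fintype.card Z : ℝ) / 2 * ∑ u, (N 0 t - N (eu u) t))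
      (∑ z, (ee A k c (fun u => ch (n z u)) + ee A k c (fun u => ch (-(n z u))))) := by
    have := As.sum (Finset.univ : Finset Z) (fun z _ =>
      (N_expand H (fun u => ch (n z u))).add (N_expand H (fun u => ch (-(n z u)))))
    refine this.congr fun t => ?_
    rw [Finset.sum_add_distrib, Finset.sum_add_distrib, Finset.sum_add_distrib, Finset.sum_sub_distrib, Finset.sum_sub_distrib]
    rw [← hd1, ← hd2]
    have : ∑ z, ∑ u, (ch (n z u) : ℝ) * (N 0 t - N (eu u) t) + ∑ z, ∑ u, (ch (-(n z u)) : ℝ) * (N 0 t - N (eu u) t)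
        = (Fintype.card Z : ℝ) / 2 * ∑ u, (N 0 t - N (eu u) t) := by
      rw [← Finset.sum_add_distrib]
      simp only [← Finset.sum_add_distrib, ← add_mul, ch_add]
      rw [Finset.sum_comm]
      simp only [← Finset.sum_mul, hodd, Finset.mul_sum]
    rw [Finset.sum_const, Finset.card_univ, nsmul_eq_mul]
    linarith
  have hval : ∑ z, (ee A k c (fun u => ch (n z u)) + ee A k c (fun u => ch (-(n z u)))) =
      (Fintype.card Z : ℝ) / 2 * (- (∑ u, c u) / 4 + A2 - 1 / 8 * ∑ u, ∑ w, A u w * k u w) := by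
    simp only [hz, Finset.sum_add_distrib]
    have f1 : ∑ z, ∑ u, c u * (- od (n z u) / 4) = (Fintype.card Z : ℝ) / 2 * (- (∑ u, c u) / 4) := by
      rw [Finset.sum_comm]
      have : ∀ u, ∑ z, c u * (- od (n z u) / 4) = (Fintype.card Z : ℝ) / 2 * (- (c u) / 4) := by
        intro u
        rw [← hodd u, Finset.sum_mul]
        refine Finset.sum_congr rfl fun z _ => ?_
        ring
      simp only [this, ← Finset.mul_sum, ← Finset.sum_div, Finset.sum_neg_distrib]
    have f2 : ∑ z, 1 / 2 * ∑ u, ∑ w, A u w * (1 / 2 * (od (n z u) + od (n z w)) - k u w / 4 * od (q z u w))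
        = (Fintype.card Z : ℝ) / 2 * (A2 - 1 / 8 * ∑ u, ∑ w, A u w * k u w) := by
      rw [← Finset.mul_sum, Finset.sum_comm]
      have : ∀ u, ∑ z, ∑ w, A u w * (1 / 2 * (od (n z u) + od (n z w)) - k u w / 4 * od (q z u w)) =
          ∑ w, (Fintype.card Z : ℝ) / 2 * (A u w - 1 / 4 * (A u w * k u w)) := by
        intro u
        rw [Finset.sum_comm]
        refine Finset.sum_congr rfl fun w _ => ?_
        by_cases hA : A u w = 0
        · simp [hA]
        rw [← Finset.mul_sum, Finset.sum_sub_distrib, ← Finset.mul_sum, ← Finset.mul_sum,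
          Finset.sum_add_distrib, hodd, hodd, hqodd u w hA]
        ring
      simp only [this, ← Finset.mul_sum, Finset.sum_sub_distrib, hA2]
      ring
    rw [f1, f2]; ring
  rw [hval] at hsum
  refine ((h1'.mul_left (4 * Fintype.card Z)).sub (hsum.mul_left 8)).conv (fun t => ?_) (by ring)
  ring
end Core
end Gor

namespace Gor

/-- second order expansions -/
def Ex (d : ℕ) (f : ℤ → ℝ) (a b c : ℝ) : Prop :=
  Tendsto (fun t : ℤ => (f t / (t : ℝ) ^ d - a - b / t) * (t : ℝ) ^ 2) atTop (nhds c)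

namespace Ex
variable {d : ℕ} {f g : ℤ → ℝ} {a b c a' b' c' : ℝ}

theorem add (hf : Ex d f a b c) (hg : Ex d g a' b' c') :
    Ex d (fun t => f t + g t) (a + a') (b + b') (c + c') := by
  refine (Tendsto.add hf hg).congr fun t => ?_
  ring

theorem mul_left (x : ℝ) (hf : Ex d f a b c) : Ex d (fun t => x * f t) (x * a) (x * b) (x * c) := by
  refine (Tendsto.const_mul x hf).congr fun t => ?_
  ring

theorem sub (hf : Ex d f a b c) (hg : Ex d g a' b' c') :
    Ex d (fun t => f t - g t) (a - a') (b - b') (c - c') := by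
  refine (Tendsto.sub hf hg).congr fun t => ?_
  ring

theorem congr' (hf : Ex d f a b c) (h : ∀ᶠ t in atTop, f t = g t) : Ex d g a b c := by
  refine Tendsto.congr' ?_ hf
  filter_upwards [h] with t ht
  rw [ht]

theorem double (hf : Ex d f a b c) : Ex d (fun t => f (2 * t)) (2 ^ d * a) (2 ^ d * b / 2) (2 ^ d * c / 4) := by
  have h1 : Tendsto (fun t : ℤ => 2 * t) atTop atTop := by
    apply tendsto_atTop_mono' _ _ tendsto_id
    filter_upwards [eventually_ge_atTop 0] with t ht
    simp only [id]; omega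
  have h2 := ((hf.comp h1).const_mul ((2 : ℝ) ^ d / 4))
  rw [show (2 : ℝ) ^ d / 4 * c = 2 ^ d * c / 4 by ring] at h2
  refine h2.congr' ?_
  filter_upwards [eventually_gt_atTop 0] with t ht
  have e1 : (t : ℝ) ≠ 0 := by exact_mod_cast ht.ne'
  simp only [Function.comp]
  push_cast
  rw [mul_pow]
  field_simp
  ring

theorem as (hd : 2 ≤ d) (hf : Ex d f 0 0 c) : As (d - 2) f (((d - 2).factorial : ℝ) * c) := by
  refine Tendsto.congr' ?_ (Tendsto.const_mul ((d - 2).factorial : ℝ) hf)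
  filter_upwards [eventually_gt_atTop 0] with t ht
  have e1 : (t : ℝ) ≠ 0 := by exact_mod_cast ht.ne'
  obtain ⟨e, rfl⟩ := Nat.exists_eq_add_of_le hd
  rw [show 2 + e - 2 = e by omega, pow_add]
  field_simp
  ring
end Ex

theorem prod_expand (b : ℝ) (n : ℕ) : ∃ S : ℝ → ℝ, Continuous S ∧ ∀ u : ℝ,
    ∏ i ∈ Finset.range n, (1 + (b + i) * u) = 1 + (n * b + n * (n - 1) / 2) * u +
      (((n * b + n * (n - 1) / 2) ^ 2 - (n * b ^ 2 + b * (n * (n - 1)) + n * (n - 1) * (2 * n - 1) / 6)) / 2) * u ^ 2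
      + u ^ 3 * S u := by
  induction n with
  | zero => exact ⟨fun _ => 0, continuous_const, fun u => by simp⟩
  | succ n ih =>
    obtain ⟨S, hS, h⟩ := ih
    refine ⟨fun u => S u * (1 + (b + n) * u) + (((n * b + n * (n - 1) / 2) ^ 2 -
      (n * b ^ 2 + b * (n * (n - 1)) + n * (n - 1) * (2 * n - 1) / 6)) / 2) * (b + n), by fun_prop, ?_⟩
    intro u
    rw [Finset.prod_range_succ, h]
    push_cast
    ring

theorem mc_prod (d n : ℕ) : ((d + 1).multichoose n : ℝ) * d.factorial = ∏ i ∈ Finset.range d, ((n : ℝ) + 1 + i) := by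
  rw [Nat.multichoose_eq, show d + 1 + n - 1 = n + d by omega, Nat.choose_symm_add]
  have := Nat.ascFactorial_eq_factorial_mul_choose n d
  have h2 := Nat.ascFactorial_eq_prod_range (n + 1) d
  rw [this] at h2
  have h3 : ((d.factorial * (n + d).choose d : ℕ) : ℝ) = ((∏ i ∈ Finset.range d, (n + 1 + i) : ℕ) : ℝ) := by
    rw [h2]
  push_cast at h3
  rw [← h3]; ring

theorem mc_ex (d : ℕ) (j : ℤ) : Ex d (fun t => ((d + 1).multichoose (t - j).toNat : ℝ) * d.factorial)
    1 (d * (1 - j) + d * (d - 1) / 2)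
    (((d * (1 - j) + d * (d - 1) / 2) ^ 2 - (d * (1 - j : ℝ) ^ 2 + (1 - j) * (d * (d - 1)) + d * (d - 1) * (2 * d - 1) / 6)) / 2) := by
  obtain ⟨S, hS, h⟩ := prod_expand (1 - j) d
  have hu : Tendsto (fun t : ℤ => ((t : ℝ))⁻¹) atTop (nhds 0) :=
    tendsto_inv_atTop_zero.comp tendsto_intCast_atTop_atTop
  have h1 : Tendsto (fun t : ℤ => (((d * (1 - j) + d * (d - 1) / 2) ^ 2 - (d * (1 - j : ℝ) ^ 2 + (1 - j) * (d * (d - 1)) + d * (d - 1) * (2 * d - 1) / 6)) / 2) + (t : ℝ)⁻¹ * S ((t : ℝ)⁻¹)) atTop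
      (nhds ((((d * (1 - j) + d * (d - 1) / 2) ^ 2 - (d * (1 - j : ℝ) ^ 2 + (1 - j) * (d * (d - 1)) + d * (d - 1) * (2 * d - 1) / 6)) / 2) + 0 * S 0)) := by
    apply Tendsto.const_add
    apply hu.mul
    exact (hS.tendsto 0).comp hu
  rw [zero_mul, add_zero] at h1
  refine h1.congr' ?_
  filter_upwards [eventually_gt_atTop 0, eventually_ge_atTop j] with t ht htj
  have e1 : (t : ℝ) ≠ 0 := by exact_mod_cast ht.ne'
  have e2 : (((t - j).toNat : ℕ) : ℝ) = t - j := by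
    have : (((t - j).toNat : ℕ) : ℤ) = t - j := Int.toNat_of_nonneg (by omega)
    exact_mod_cast this
  have e3 : ((d + 1).multichoose (t - j).toNat : ℝ) * d.factorial / (t : ℝ) ^ d =
      ∏ i ∈ Finset.range d, (1 + ((1 - j : ℝ) + i) * (t : ℝ)⁻¹) := by
    rw [mc_prod, e2, div_eq_iff (pow_ne_zero _ e1)]
    have : (t : ℝ) ^ d = ∏ i ∈ Finset.range d, (t : ℝ) := by simp
    rw [this, ← Finset.prod_mul_distrib]
    refine Finset.prod_congr rfl fun i _ => ?_
    field_simp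
    ring
  beta_reduce
  rw [e3, h]
  field_simp
  ring

theorem mc_as (k : ℕ) (j : ℤ) : As k (fun t => ((k + 1).multichoose (t - j).toNat : ℝ)) 1 := by
  have h := mc_ex k j
  unfold Ex at h
  have hu : Tendsto (fun t : ℤ => ((t : ℝ))⁻¹) atTop (nhds 0) :=
    tendsto_inv_atTop_zero.comp tendsto_intCast_atTop_atTop
  have h2 := ((h.mul (hu.pow 2)).add (hu.const_mul ((k : ℝ) * (1 - j) + k * (k - 1) / 2))).add_const 1
  simp only [ne_eq, OfNat.ofNat_ne_zero, not_false_eq_true, zero_pow, mul_zero, add_zero, zero_add] at h2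
  refine h2.congr' ?_
  filter_upwards [eventually_gt_atTop 0] with t ht
  have e1 : (t : ℝ) ≠ 0 := by exact_mod_cast ht.ne'
  have : (t : ℝ) ^ 2 * ((t : ℝ)⁻¹) ^ 2 = 1 := by field_simp
  rw [mul_assoc, this]
  ring

theorem As.lower {k : ℕ} {f : ℤ → ℝ} {a : ℝ} (h : As k f a) {k' : ℕ} (hk : k < k') : As k' f 0 := by
  have hu : Tendsto (fun t : ℤ => ((t : ℝ))⁻¹) atTop (nhds 0) :=
    tendsto_inv_atTop_zero.comp tendsto_intCast_atTop_atTop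
  have h2 := (h.mul (hu.pow (k' - k))).mul_const ((k'.factorial : ℝ) / k.factorial)
  rw [zero_pow (by omega), mul_zero, zero_mul] at h2
  refine h2.congr' ?_
  filter_upwards [eventually_gt_atTop 0] with t ht
  have e1 : (t : ℝ) ≠ 0 := by exact_mod_cast ht.ne'
  have e2 : (k.factorial : ℝ) ≠ 0 := by exact_mod_cast (Nat.factorial_pos k).ne'
  have e3 : (t : ℝ) ^ k' = t ^ (k' - k) * t ^ k := by rw [← pow_add, Nat.sub_add_cancel hk.le]
  rw [e3, inv_pow]
  field_simp

/-- Ehrhart shape -/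
def ehr (D : ℕ) (h : ℕ → ℕ) (t : ℤ) : ℕ :=
  ∑ j ∈ Finset.range (D + 1), (if (j : ℤ) ≤ t then h j * D.multichoose (t - j).toNat else 0)

theorem ehr_ev (D : ℕ) (h : ℕ → ℕ) : ∀ᶠ t : ℤ in atTop,
    ∑ j ∈ Finset.range (D + 1), (h j : ℝ) * (D.multichoose (t - j).toNat : ℝ) = ehr D h t := by
  filter_upwards [eventually_ge_atTop (D : ℤ)] with t ht
  unfold ehr
  push_cast
  refine Finset.sum_congr rfl fun j hj => ?_
  rw [Finset.mem_range] at hj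
  rw [if_pos (by omega)]

theorem ehr_as (k : ℕ) (h : ℕ → ℕ) :
    As k (fun t => (ehr (k + 1) h t : ℝ)) (∑ j ∈ Finset.range (k + 2), (h j : ℝ)) := by
  refine As.congr' ?_ (ehr_ev (k + 1) h)
  have := As.sum (Finset.range (k + 1 + 1)) fun j _ => (mc_as k j).mul_left (h j : ℝ)
  simpa using this

theorem ehr_zero (h : ℕ → ℕ) (t : ℤ) (ht : 0 < t) : ehr 0 h t = 0 := by
  unfold ehr
  simp [ht.le]
  right
  obtain ⟨n, hn⟩ : ∃ n, t.toNat = n + 1 := ⟨t.toNat - 1, by omega⟩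
  rw [hn]; exact Nat.multichoose_zero_succ n

theorem ehr_as_zero {k D : ℕ} (hD : D ≤ k) (h : ℕ → ℕ) : As k (fun t => (ehr D h t : ℝ)) 0 := by
  rcases D with _ | D
  · refine As.zero.congr' ?_
    filter_upwards [eventually_gt_atTop 0] with t ht
    rw [ehr_zero h t ht]; simp
  · exact (ehr_as D h).lower (by omega)

theorem ehr_as_diff {k D : ℕ} (hD : D ≤ k + 2) (h : ℕ → ℕ) (r : ℕ) :
    ∃ c, As k (fun t => (ehr D h t : ℝ) - ehr D h (t - r)) c := by
  rcases Nat.lt_or_ge D (k + 2) with hlt | hge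
  · rcases Nat.lt_or_ge D (k + 1) with hlt' | hge'
    · have := ehr_as_zero (k := k) (D := D) (by omega) h
      exact ⟨_, this.sub (this.shift r)⟩
    · obtain rfl : D = k + 1 := by omega
      have := ehr_as k h
      exact ⟨_, this.sub (this.shift r)⟩
  · obtain rfl : D = k + 2 := by omega
    have one : ∀ j : ℤ, As k (fun t => ((k + 2).multichoose (t - j).toNat : ℝ) - ((k + 2).multichoose (t - (j + 1)).toNat : ℝ)) 1 := by
      intro j
      refine (mc_as k j).congr' ?_
      filter_upwards [eventually_gt_atTop j] with t ht
      obtain ⟨n, hn⟩ : ∃ n, (t - j).toNat = n + 1 := ⟨(t - j).toNat - 1, by omega⟩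
      have hn' : (t - (j + 1)).toNat = n := by omega
      rw [hn, hn', Nat.multichoose_succ_succ (k + 1) n]
      push_cast; ring
    have many : ∀ (r : ℕ) (j : ℤ), As k (fun t => ((k + 2).multichoose (t - j).toNat : ℝ) - ((k + 2).multichoose (t - (j + r)).toNat : ℝ)) r := by
      intro r j
      induction r with
      | zero => exact As.zero.conv (fun t => by simp) (by simp)
      | succ r ih =>
        refine (ih.add (one (j + r))).conv (fun t => ?_) (by push_cast; ring)
        push_cast
        rw [add_assoc]; ring
    have hs := As.sum (Finset.range (k + 2 + 1)) fun j _ => (many r j).mul_left (h j : ℝ)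
    refine ⟨_, hs.congr' ?_⟩
    have h1 : Tendsto (fun t : ℤ => t - (r : ℤ)) atTop atTop := tendsto_atTop_add_const_right _ _ tendsto_id
    filter_upwards [ehr_ev (k + 2) h, h1.eventually (ehr_ev (k + 2) h)] with t h2 h3
    rw [← h2, ← h3, ← Finset.sum_sub_distrib]
    refine Finset.sum_congr rfl fun j _ => ?_
    rw [mul_sub, sub_add_eq_sub_sub_swap]

theorem ehr_neg (D : ℕ) (h : ℕ → ℕ) (t : ℤ) (ht : t < 0) : ehr D h t = 0 := by
  unfold ehr
  refine Finset.sum_eq_zero fun j _ => ?_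
  rw [if_neg (by omega)]

theorem ehr_first (D : ℕ) (h : ℕ → ℕ) (n : ℕ) (hn : n ≤ D) (h0 : ∀ j < n, h j = 0) : ehr D h n = h n := by
  unfold ehr
  rw [Finset.sum_eq_single n]
  · simp
  · intro j _ hj
    split_ifs with hle
    · rw [h0 j (by omega)]; simp
    · rfl
  · intro hc; exact absurd (Finset.mem_range.2 (by omega)) hc

theorem h_shape {d : ℕ} (hd : 3 ≤ d) (h : ℕ → ℕ) (h0 : ehr (d + 1) h 0 = 1)
    (hI : ∀ t, ehr (d + 1) (fun j => h (d + 1 - j)) t = ehr (d + 1) h (t - (d - 1 : ℕ))) :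
    ∀ t : ℤ, ehr (d + 1) h t = ehr (d + 1) (fun j => if j = 0 then 1 else if j = 1 then h 1 else if j = 2 then 1 else 0) t := by
  have a0 : h 0 = 1 := by
    have := ehr_first (d + 1) h 0 (by omega) (by simp)
    rw [← this]; exact_mod_cast h0
  have az : ∀ n, n < d - 1 → h (d + 1 - n) = 0 := by
    intro n
    induction n using Nat.strong_induction_on with
    | _ n ih =>
      intro hn
      have := ehr_first (d + 1) (fun j => h (d + 1 - j)) n (by omega) (fun j hj => ih j hj (by omega))
      rw [hI, ehr_neg _ _ _ (by omega)] at this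
      exact this.symm
  have a2 : h 2 = 1 := by
    have := ehr_first (d + 1) (fun j => h (d + 1 - j)) (d - 1) (by omega) (fun j hj => az j hj)
    rw [hI, sub_self, h0] at this
    beta_reduce at this
    rw [show d + 1 - (d - 1) = 2 by omega] at this
    exact this.symm
  intro t
  unfold ehr
  refine Finset.sum_congr rfl fun j hj => ?_
  rw [Finset.mem_range] at hj
  rcases Nat.lt_or_ge j 3 with hj3 | hj3
  · interval_cases j <;> simp [a0, a2]
  · have := az (d + 1 - j) (by omega)
    rw [show d + 1 - (d + 1 - j) = j by omega] at this
    have e0 : j ≠ 0 := by omega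
    have e1 : j ≠ 1 := by omega
    have e2 : j ≠ 2 := by omega
    simp [this, e0, e1, e2]

theorem shape_ev {d : ℕ} (hd : 3 ≤ d) (a : ℕ) : ∀ᶠ t : ℤ in atTop,
    ((d + 1).multichoose (t - 0).toNat : ℝ) + a * ((d + 1).multichoose (t - 1).toNat : ℝ)
      + ((d + 1).multichoose (t - 2).toNat : ℝ) =
    (ehr (d + 1) (fun j => if j = 0 then 1 else if j = 1 then a else if j = 2 then 1 else 0) t : ℝ) := by
  filter_upwards [ehr_ev (d + 1) (fun j => if j = 0 then 1 else if j = 1 then a else if j = 2 then 1 else 0)] with t ht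
  rw [← ht]
  have : Finset.range (d + 1 + 1) = Finset.range (3 + (d - 1)) := by congr 1; omega
  rw [this, Finset.sum_range_add, Finset.sum_eq_zero (s := Finset.range (d - 1))]
  · rw [Finset.sum_range_succ, Finset.sum_range_succ, Finset.sum_range_one]
    norm_num
  · intro j _
    have e0 : 3 + j ≠ 0 := by omega
    have e1 : 3 + j ≠ 1 := by omega
    have e2 : 3 + j ≠ 2 := by omega
    simp [e0, e1, e2]

theorem final_calc {d : ℕ} (hd : 3 ≤ d) (a : ℕ) (L : ℤ → ℝ) (hL : ∀ t, L t =
    (ehr (d + 1) (fun j => if j = 0 then 1 else if j = 1 then a else if j = 2 then 1 else 0) t : ℝ))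
    (C S : ℝ) (h1 : As (d - 2) (fun t => L t - 2 * L (t - (d - 1 : ℕ)) + L (t - 2 * (d - 1 : ℕ))) C)
    (h2 : As (d - 2) (fun t => 16 * 2 ^ d * L t - 16 * L (2 * t) - 4 * 2 ^ d * (L t - L (t - (d - 1 : ℕ))))
      (2 ^ d * (C + S))) :
    12 = S + ((((d : ℝ) - 1) * (1 - ((d : ℝ) - 1)) + 2) / 2) * (a + 2) := by
  have hr : (((d - 1 : ℕ) : ℤ) : ℝ) = (d : ℝ) - 1 := by
    rw [Nat.cast_sub (by omega)]; push_cast; ring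
  have hE : ∀ s : ℤ, ∃ f, Ex d f _ _ _ ∧ ∀ᶠ t in atTop, f t = L (t - s) * d.factorial := fun s =>
    ⟨_, (((mc_ex d s).add ((mc_ex d (s + 1)).mul_left (a : ℝ))).add (mc_ex d (s + 2))), by
      have hs : Tendsto (fun t : ℤ => t - s) atTop atTop := tendsto_atTop_add_const_right _ _ tendsto_id
      filter_upwards [hs.eventually (shape_ev hd a)] with t ht
      rw [hL, ← ht, sub_add_eq_sub_sub, sub_add_eq_sub_sub, sub_zero]; ring⟩
  obtain ⟨f0, e0, v0⟩ := hE 0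
  obtain ⟨f1, e1, v1⟩ := hE (d - 1 : ℕ)
  obtain ⟨f2, e2, v2⟩ := hE (2 * (d - 1 : ℕ))
  replace e0 := e0.congr' v0
  replace e1 := e1.congr' v1
  replace e2 := e2.congr' v2
  simp only [sub_zero] at e0
  have ed := e0.double
  have c1 := (e0.sub (e1.mul_left 2)).add e2
  have c2 := ((e0.mul_left (16 * 2 ^ d)).sub (ed.mul_left 16)).sub ((e0.sub e1).mul_left (4 * 2 ^ d))
  have hfac : (d.factorial : ℝ) = d * (d - 1) * (d - 2).factorial := by
    obtain ⟨e, rfl⟩ := Nat.exists_eq_add_of_le (show 2 ≤ d by omega)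
    rw [show 2 + e - 2 = e by omega, show 2 + e = e + 1 + 1 by omega, Nat.factorial_succ, Nat.factorial_succ]
    push_cast; ring
  have hdr : (3 : ℝ) ≤ d := by exact_mod_cast hd
  have p2 : (0 : ℝ) < 2 ^ d := by positivity
  have hf0 : (0 : ℝ) < (d - 2).factorial := by exact_mod_cast Nat.factorial_pos _
  have k1 := (h1.mul_left (d.factorial : ℝ))
  have k2 := (h2.mul_left (d.factorial : ℝ))
  push_cast [hr] at c1 c2
  have q1 : (d.factorial : ℝ) * C = ((d - 2).factorial : ℝ) * (d * (d - 1) * ((d - 1) ^ 2 * (a + 2))) := by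
    refine k1.uniq ((Ex.as (by omega) ?_).congr (f := fun t => L t * d.factorial - 2 * (L (t - (d - 1 : ℕ)) * d.factorial) + L (t - 2 * (d - 1 : ℕ)) * d.factorial) fun t => by ring)
    convert c1 using 1 <;> ring
  have q2 : (d.factorial : ℝ) * (2 ^ d * (C + S)) = ((d - 2).factorial : ℝ) * (2 ^ d * (d * (d - 1) * (12 + (a + 2) * (3 * ((d : ℝ) - 1) ^ 2 - (d - 1) - 2) / 2))) := by
    refine k2.uniq ((Ex.as (by omega) ?_).congr (f := fun t => 16 * 2 ^ d * (L t * d.factorial) - 16 * (L (2 * t) * d.factorial) - 4 * 2 ^ d * (L t * d.factorial - L (t - (d - 1 : ℕ)) * d.factorial)) fun t => by ring)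
    convert c2 using 1 <;> ring
  rw [hfac] at q1 q2
  have hdd : (0 : ℝ) < d * (d - 1) * (d - 2).factorial := by
    apply mul_pos _ hf0
    apply mul_pos <;> linarith
  have r1 : C = (d - 1) ^ 2 * (a + 2) := mul_left_cancel₀ hdd.ne' (by rw [q1]; ring)
  have r2 : C + S = 12 + (a + 2) * (3 * ((d : ℝ) - 1) ^ 2 - (d - 1) - 2) / 2 :=
    mul_left_cancel₀ (mul_pos hdd p2).ne' (by linear_combination q2)
  rw [r1] at r2
  linear_combination -r2
end Gor

namespace Gor

abbrev E (d : ℕ) := (Fin d → ℝ) × ℝ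
abbrev G (d : ℕ) := (Fin d → ℤ) × ℤ

variable {d : ℕ}

/-- lattice embedding -/
def phi : G d →+ E d where
  toFun p := (fun i => (p.1 i : ℝ), (p.2 : ℝ))
  map_zero' := by ext <;> simp
  map_add' p q := by ext <;> simp

theorem phi_fst (p : G d) (i : Fin d) : (phi p).1 i = (p.1 i : ℝ) := rfl
theorem phi_snd (p : G d) : (phi p).2 = (p.2 : ℝ) := rfl

theorem phi_inj : Function.Injective (phi (d := d)) := by
  intro p q h
  ext i
  · have := congrFun (congrArg Prod.fst h) i
    rw [phi_fst, phi_fst] at this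
    exact_mod_cast this
  · have := congrArg Prod.snd h
    rw [phi_snd, phi_snd] at this
    exact_mod_cast this

theorem fin_bdd {ι : Type*} [Fintype ι] (g : ι → E d) (K : ℝ) :
    {p : G d | ∃ l : ι → ℝ, (∀ i, |l i| ≤ K) ∧ ∑ i, l i • g i = phi p}.Finite := by
  obtain ⟨M, hM⟩ : ∃ M : ℤ, ∀ j, ∑ i, K * |(g i).1 j| ≤ M := by
    have : ∀ j : Fin d, ∃ M : ℤ, ∑ i, K * |(g i).1 j| ≤ M := fun j => ⟨⌈_⌉, Int.le_ceil _⟩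
    choose M hM using this
    refine ⟨∑ j, |M j|, fun j => (hM j).trans ?_⟩
    have := Finset.single_le_sum (f := fun j => |M j|) (fun i _ => abs_nonneg _) (Finset.mem_univ j)
    exact_mod_cast (le_abs_self _).trans this
  obtain ⟨M', hM'⟩ : ∃ M : ℤ, ∑ i, K * |(g i).2| ≤ M := ⟨⌈_⌉, Int.le_ceil _⟩
  refine ((Set.finite_Icc (fun _ : Fin d => -M) (fun _ => M)).prod (Set.finite_Icc (-M') M')).subset ?_
  rintro p ⟨l, hl, hp⟩
  have h1 : ∀ j, |(p.1 j : ℝ)| ≤ M := by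
    intro j
    rw [← phi_fst, ← hp]
    simp only [Prod.fst_sum, Finset.sum_apply, Prod.smul_fst, Pi.smul_apply, smul_eq_mul]
    refine (Finset.abs_sum_le_sum_abs _ _).trans (le_trans (Finset.sum_le_sum fun i _ => ?_) (hM j))
    rw [abs_mul]
    exact mul_le_mul_of_nonneg_right (hl i) (abs_nonneg _)
  have h2 : |(p.2 : ℝ)| ≤ M' := by
    rw [← phi_snd, ← hp]
    simp only [Prod.snd_sum, Prod.smul_snd, smul_eq_mul]
    refine (Finset.abs_sum_le_sum_abs _ _).trans (le_trans (Finset.sum_le_sum fun i _ => ?_) hM')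
    rw [abs_mul]
    exact mul_le_mul_of_nonneg_right (hl i) (abs_nonneg _)
  have h1' : ∀ j, |p.1 j| ≤ M := fun j => by exact_mod_cast h1 j
  have h2' : |p.2| ≤ M' := by exact_mod_cast h2
  exact ⟨⟨fun j => (abs_le.1 (h1' j)).1, fun j => (abs_le.1 (h1' j)).2⟩, ⟨(abs_le.1 h2').1, (abs_le.1 h2').2⟩⟩

def gen (v : Fin d → ℤ) : G d := (v, 1)

/-- lattice data of a point set -/
def LD (S : Finset (Fin d → ℤ)) : LatData (E d) S (G d) where
  φ := phi
  inj := phi_inj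
  γ v := gen v
  ht := LinearMap.snd ℝ _ _
  hz := AddMonoidHom.snd _ _
  hht p := rfl
  h1 i := rfl
  fin B hB := by
    refine (fin_bdd (fun i : S => phi (gen i.1)) 1).subset ?_
    rintro p ⟨h1, h2⟩
    exact ⟨_, h2, co_sum hB h1⟩

/-- real generator -/
def gr (v : Fin d → ℤ) : E d := phi (gen v)

/-- real cone over a point set -/
def KC (S : Finset (Fin d → ℤ)) : Set (E d) := Cone (fun v : S => gr v.1)

/-- span -/
def SP (S : Finset (Fin d → ℤ)) : Submodule ℝ (E d) := Submodule.span ℝ (Set.range fun v : S => gr v.1)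

/-- rank -/
def rk (S : Finset (Fin d → ℤ)) : ℕ := Module.finrank ℝ (SP S)

/-- lattice point set -/
def LP (S : Finset (Fin d → ℤ)) (t : ℤ) : Set (G d) := {p | p.2 = t ∧ phi p ∈ KC S}

theorem ehr_cnt (S : Finset (Fin d → ℤ)) : ∃ (h : ℕ → ℕ) (μ : S → ℝ), (∀ i, 0 < μ i) ∧ ∀ t : ℤ,
    (LP S t).Finite ∧ (LP S t).ncard = ehr (rk S) h t ∧
    {p : G d | p.2 = t ∧ phi p ∈ SP S ∧ ∀ᶠ e : ℝ in nhdsWithin 0 (Set.Ioi 0),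
      phi p - e • (∑ i, μ i • gr i.1) ∈ KC S}.ncard = ehr (rk S) (fun j => h (rk S - j)) t :=
  (LD S).ehrhart

theorem LP_finite (S : Finset (Fin d → ℤ)) (t : ℤ) : (LP S t).Finite := by
  obtain ⟨h, μ, _, H⟩ := ehr_cnt S
  exact (H t).1

/-- the h-vector -/
def hv (S : Finset (Fin d → ℤ)) : ℕ → ℕ := (ehr_cnt S).choose

theorem LP_ncard (S : Finset (Fin d → ℤ)) (t : ℤ) : (LP S t).ncard = ehr (rk S) (hv S) t := 
  ((ehr_cnt S).choose_spec.choose_spec.2 t).2.1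

theorem gr_mem {S : Finset (Fin d → ℤ)} {v} (hv : v ∈ S) : gr v ∈ KC S := by
  classical
  refine ⟨Pi.single ⟨v, hv⟩ 1, fun i => ?_, ?_⟩
  · by_cases h : i = ⟨v, hv⟩
    · subst h; simp
    · simp [Pi.single_eq_of_ne h]
  · rw [Finset.sum_eq_single ⟨v, hv⟩]
    · simp
    · intro b _ hb; simp [Pi.single_eq_of_ne hb]
    · simp

theorem KC_add {S : Finset (Fin d → ℤ)} {x y} (hx : x ∈ KC S) (hy : y ∈ KC S) : x + y ∈ KC S := by
  obtain ⟨l, hl, rfl⟩ := hx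
  obtain ⟨l', hl', rfl⟩ := hy
  exact ⟨l + l', fun i => add_nonneg (hl i) (hl' i), by simp [add_smul, Finset.sum_add_distrib]⟩

theorem KC_smul {S : Finset (Fin d → ℤ)} {x} (hx : x ∈ KC S) {a : ℝ} (ha : 0 ≤ a) : a • x ∈ KC S := by
  obtain ⟨l, hl, rfl⟩ := hx
  exact ⟨fun i => a * l i, fun i => mul_nonneg ha (hl i), by simp [mul_smul, Finset.smul_sum]⟩

theorem KC_nonneg {S : Finset (Fin d → ℤ)} {x} (hx : x ∈ KC S) (f : E d →ₗ[ℝ] ℝ)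
    (hf : ∀ v ∈ S, 0 ≤ f (gr v)) : 0 ≤ f x := by
  obtain ⟨l, hl, rfl⟩ := hx
  rw [map_sum]
  refine Finset.sum_nonneg fun i _ => ?_
  rw [map_smul]
  exact mul_nonneg (hl i) (hf _ i.2)

theorem KC_mono {S T : Finset (Fin d → ℤ)} (h : S ⊆ T) {x} (hx : x ∈ KC S) : x ∈ KC T := by
  obtain ⟨l, hl, rfl⟩ := hx
  have : ∀ s : Finset S, ∑ i ∈ s, l i • gr i.1 ∈ KC T := by
    classical
    intro s
    induction s using Finset.induction_on with
    | empty => exact ⟨0, fun _ => le_rfl, by simp⟩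
    | insert a s ha ih =>
      rw [Finset.sum_insert ha]
      exact KC_add (KC_smul (gr_mem (h a.2)) (hl a)) ih
  exact this _

/-- a cone element killed by a nonnegative functional lies in the subcone -/
theorem KC_filter {S T : Finset (Fin d → ℤ)} {x} (hx : x ∈ KC S) (f : E d →ₗ[ℝ] ℝ)
    (hf : ∀ v ∈ S, 0 ≤ f (gr v)) (h0 : f x = 0) (hT : ∀ v ∈ S, f (gr v) = 0 → v ∈ T) : x ∈ KC T := by
  obtain ⟨l, hl, rfl⟩ := hx
  rw [map_sum, Finset.sum_eq_zero_iff_of_nonneg] at h0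
  swap
  · intro i _; rw [map_smul]; exact mul_nonneg (hl i) (hf _ i.2)
  have : ∀ s : Finset S, ∑ i ∈ s, l i • gr i.1 ∈ KC T := by
    classical
    intro s
    induction s using Finset.induction_on with
    | empty => exact ⟨0, fun _ => le_rfl, by simp⟩
    | insert a s ha ih =>
      rw [Finset.sum_insert ha]
      refine KC_add ?_ ih
      have := h0 a (Finset.mem_univ _)
      rw [map_smul, smul_eq_mul, mul_eq_zero] at this
      rcases this with h | h
      · rw [h, zero_smul]; exact ⟨0, fun _ => le_rfl, by simp⟩
      · exact KC_smul (gr_mem (hT _ a.2 h)) (hl a)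
  exact this _

/-- functional vanishing -/
theorem SP_zero {S : Finset (Fin d → ℤ)} (f : E d →ₗ[ℝ] ℝ) (hf : ∀ v ∈ S, f (gr v) = 0) {x} (hx : x ∈ SP S) :
    f x = 0 := by
  have : SP S ≤ LinearMap.ker f := by
    apply Submodule.span_le.2
    rintro _ ⟨v, rfl⟩
    exact hf _ v.2
  exact this hx

theorem finrank_E : Module.finrank ℝ (E d) = d + 1 := by simp

theorem mem_KC_iff {S : Finset (Fin d → ℤ)} {x : Fin d → ℝ} {t : ℝ} (ht : 0 < t) :
    (x, t) ∈ KC S ↔ x ∈ t • convexHull ℝ (coeLat '' (S : Set (Fin d → ℤ))) := by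
  constructor
  · rintro ⟨l, hl, h⟩
    have hx : ∑ i, l i • coeLat i.1 = x := by
      rw [← show (_ : E d).1 = x from congrArg Prod.fst h, Prod.fst_sum]
      rfl
    have ht' : ∑ i, l i = t := by
      rw [← show (_ : E d).2 = t from congrArg Prod.snd h, Prod.snd_sum]
      refine Finset.sum_congr rfl fun i _ => ?_
      simp [gr, phi_snd, gen]
    refine ⟨∑ i, (t⁻¹ * l i) • coeLat i.1, ?_, ?_⟩
    · refine (convex_convexHull ℝ _).sum_mem (fun i _ => mul_nonneg (inv_nonneg.2 ht.le) (hl i)) ?_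
        fun i _ => subset_convexHull _ _ ⟨_, i.2, rfl⟩
      rw [← Finset.mul_sum, ht', inv_mul_cancel₀ ht.ne']
    · simp only [mul_smul, ← Finset.smul_sum]
      rw [hx, smul_inv_smul₀ ht.ne']
  · rintro ⟨y, hy, rfl⟩
    have : convexHull ℝ (coeLat '' (S : Set (Fin d → ℤ))) ⊆ {y | ((y, 1) : E d) ∈ KC S} := by
      apply convexHull_min
      · rintro _ ⟨v, hv, rfl⟩
        have := gr_mem (S := S) hv
        have e : gr v = (coeLat v, 1) := by ext <;> simp [gr, phi_fst, phi_snd, gen, coeLat]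
        rwa [e] at this
      · intro a ha b hb p q hp hq hpq
        have := KC_add (KC_smul ha hp) (KC_smul hb hq)
        simpa [hpq] using this
    have := KC_smul (this hy) ht.le
    simpa using this

end Gor

namespace Gor

variable {d : ℕ}

/-- functional -/
def fn (y : Fin d → ℝ) (b : ℝ) : E d →ₗ[ℝ] ℝ where
  toFun x := ∑ i, y i * x.1 i - x.2 * b
  map_add' x y := by simp [mul_add, Finset.sum_add_distrib, add_mul]; ring
  map_smul' a x := by simp [mul_sub, Finset.mul_sum, mul_left_comm, mul_assoc]

theorem fn_apply (y : Fin d → ℝ) (b : ℝ) (x : E d) : fn y b x = ∑ i, y i * x.1 i - x.2 * b := rfl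

theorem exists_fn (f : E d →ₗ[ℝ] ℝ) : ∃ y b, f = fn y b := by
  classical
  refine ⟨fun i => f (Pi.single i 1, 0), - f (0, 1), ?_⟩
  ext x
  · simp only [LinearMap.coe_comp, Function.comp, LinearMap.coe_single, LinearMap.inl_apply, fn_apply]
    rw [Finset.sum_eq_single x]
    · simp
    · intro b _ hb; simp [Pi.single_eq_of_ne hb]
    · simp
  · simp [fn_apply]

theorem dep3 {M : Type*} [AddCommGroup M] [Module ℝ M] [FiniteDimensional ℝ M] (S : Submodule ℝ M)
    (h : Module.finrank ℝ S < 3) {a b c : M} (ha : a ∈ S) (hb : b ∈ S) (hc : c ∈ S) :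
    ∃ x y z : ℝ, (x ≠ 0 ∨ y ≠ 0 ∨ z ≠ 0) ∧ x • a + y • b + z • c = 0 := by
  have hnl : ¬ LinearIndependent ℝ (![⟨_, ha⟩, ⟨_, hb⟩, ⟨_, hc⟩] : Fin 3 → S) := by
    intro hl
    have := hl.fintype_card_le_finrank
    simp at this; omega
  rw [Fintype.not_linearIndependent_iff] at hnl
  obtain ⟨g, hg, i, hi⟩ := hnl
  rw [Fin.sum_univ_three] at hg
  refine ⟨g 0, g 1, g 2, ?_, congrArg Subtype.val hg⟩
  fin_cases i
  · exact Or.inl hi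
  · exact Or.inr (Or.inl hi)
  · exact Or.inr (Or.inr hi)

theorem indep2 {M : Type*} [AddCommGroup M] [Module ℝ M] [FiniteDimensional ℝ M] (S : Submodule ℝ M)
    {a b : M} (ha : a ∈ S) (hb : b ∈ S) (h : ∀ s t : ℝ, s • a + t • b = 0 → s = 0 ∧ t = 0) :
    2 ≤ Module.finrank ℝ S := by
  have hl : LinearIndependent ℝ (![⟨_, ha⟩, ⟨_, hb⟩] : Fin 2 → S) := by
    rw [LinearIndependent.pair_iff]
    intro s t hst
    exact h s t (congrArg Subtype.val hst)
  have := hl.fintype_card_le_finrank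
  simpa using this

/-- the combinatorial geometry -/
structure Geo (d : ℕ) where
  V : Finset (Fin d → ℤ)
  U : Finset (Fin d → ℤ)
  m : Fin d → ℤ
  c : (Fin d → ℤ) → ℤ
  hd : 3 ≤ d
  hm : ∀ u ∈ U, ∑ i, u i * m i - ((d - 1 : ℕ) : ℤ) * c u = 1
  hpos : ∀ u ∈ U, ∀ v ∈ V, 0 ≤ ∑ i, u i * v i - c u
  full : rk V = d + 1
  dual : ∀ f : E d →ₗ[ℝ] ℝ, (∀ v ∈ V, 0 ≤ f (gr v)) → ∃ l : U → ℝ, (∀ u, 0 ≤ l u) ∧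
    f = ∑ u, l u • fn (coeLat u.1) (c u.1)
  ext : ∀ u ∈ U, ∀ f : E d →ₗ[ℝ] ℝ, f (phi (m, ((d - 1 : ℕ) : ℤ))) = 0 →
    (∀ v ∈ V, 0 ≤ fn (coeLat u) (c u) (gr v) + f (gr v)) →
    (∀ v ∈ V, 0 ≤ fn (coeLat u) (c u) (gr v) - f (gr v)) → f = 0

namespace Geo
variable (Γ : Geo d)

/-- real facet functional -/
def n (u : Fin d → ℤ) : E d →ₗ[ℝ] ℝ := fn (coeLat u) (Γ.c u)

/-- integral facet functional -/
def nz (u : Fin d → ℤ) : G d →+ ℤ where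
  toFun p := ∑ i, u i * p.1 i - p.2 * Γ.c u
  map_zero' := by simp
  map_add' x y := by simp [mul_add, Finset.sum_add_distrib, add_mul]; ring

theorem nz_apply (u : Fin d → ℤ) (p : G d) : Γ.nz u p = ∑ i, u i * p.1 i - p.2 * Γ.c u := rfl

theorem n_phi (u : Fin d → ℤ) (p : G d) : Γ.n u (phi p) = (Γ.nz u p : ℝ) := by
  simp [n, fn_apply, nz_apply, phi_fst, phi_snd, coeLat]

theorem n_gr (u : Fin d → ℤ) (v : Fin d → ℤ) : Γ.n u (gr v) = (Γ.nz u (gen v) : ℝ) := Γ.n_phi _ _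

/-- the Gorenstein point -/
def mr : G d := (Γ.m, ((d - 1 : ℕ) : ℤ))

theorem nz_mr {u} (hu : u ∈ Γ.U) : Γ.nz u Γ.mr = 1 := Γ.hm u hu

theorem n_mr {u} (hu : u ∈ Γ.U) : Γ.n u (phi Γ.mr) = 1 := by rw [n_phi, nz_mr _ hu]; simp

theorem nz_nonneg {u} (hu : u ∈ Γ.U) {v} (hv : v ∈ Γ.V) : 0 ≤ Γ.nz u (gen v) := by
  have := Γ.hpos u hu v hv
  simpa [nz_apply, gen] using this

theorem n_nonneg {u} (hu : u ∈ Γ.U) {v} (hv : v ∈ Γ.V) : 0 ≤ Γ.n u (gr v) := by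
  rw [n_gr]; exact_mod_cast Γ.nz_nonneg hu hv

theorem dual' (f : E d →ₗ[ℝ] ℝ) (hf : ∀ v ∈ Γ.V, 0 ≤ f (gr v)) : ∃ l : Γ.U → ℝ, (∀ u, 0 ≤ l u) ∧
    ∀ x, f x = ∑ u, l u * Γ.n u.1 x := by
  obtain ⟨l, hl, h⟩ := Γ.dual f hf
  refine ⟨l, hl, fun x => ?_⟩
  rw [h]; simp [n]

theorem ext' {u} (hu : u ∈ Γ.U) (f : E d →ₗ[ℝ] ℝ) (hf : f (phi Γ.mr) = 0)
    (h1 : ∀ v ∈ Γ.V, 0 ≤ Γ.n u (gr v) + f (gr v)) (h2 : ∀ v ∈ Γ.V, 0 ≤ Γ.n u (gr v) - f (gr v)) : f = 0 :=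
  Γ.ext u hu f hf h1 h2

theorem n_inj {u w} (hu : u ∈ Γ.U) (hw : w ∈ Γ.U) (h : Γ.n u = Γ.n w) : u = w := by
  classical
  ext i
  have := congrArg (fun f => f (phi (Pi.single i 1, 0))) h
  simp only [n_phi, nz_apply] at this
  simpa [Pi.single_apply] using this

theorem cone_iff {x : E d} : x ∈ KC Γ.V ↔ ∀ u ∈ Γ.U, 0 ≤ Γ.n u x := by
  constructor
  · intro h u hu
    exact KC_nonneg h _ fun v hv => Γ.n_nonneg hu hv
  · intro h
    have key : ∀ f : E d →ₗ[ℝ] ℝ, (∀ v ∈ Γ.V, 0 ≤ f (gr v)) → 0 ≤ f x := by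
      intro f hf
      obtain ⟨l, hl, e⟩ := Γ.dual' f hf
      rw [e]
      exact Finset.sum_nonneg fun u _ => mul_nonneg (hl u) (h _ u.2)
    obtain ⟨x, t⟩ := x
    have ht : 0 ≤ t := by
      have := key (LinearMap.snd ℝ _ _) (fun v _ => by simp [gr, phi_snd, gen])
      simpa using this
    rcases ht.lt_or_eq with ht | rfl
    · rw [mem_KC_iff ht]
      by_contra hx
      have hx' : t⁻¹ • x ∉ convexHull ℝ (coeLat '' (Γ.V : Set (Fin d → ℤ))) := fun hc =>
        hx ⟨_, hc, by simp [smul_inv_smul₀ ht.ne']⟩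
      have hcl : IsClosed (convexHull ℝ (coeLat '' (Γ.V : Set (Fin d → ℤ)))) :=
        ((Γ.V.finite_toSet.image _).isCompact_convexHull ℝ).isClosed
      obtain ⟨f, a, h1, h2⟩ := geometric_hahn_banach_point_closed (convex_convexHull ℝ _) hcl hx'
      have := key (f.toLinearMap.comp (LinearMap.fst ℝ _ _) - a • LinearMap.snd ℝ _ _) (by
        intro v hv
        have := h2 (coeLat v) (subset_convexHull _ _ ⟨v, hv, rfl⟩)
        have e : gr v = (coeLat v, 1) := by ext <;> simp [gr, phi_fst, phi_snd, gen, coeLat]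
        rw [e]; simp; exact this.le)
      simp at this
      rw [map_smul, smul_eq_mul, inv_mul_lt_iff₀ ht] at h1
      linarith
    · have hx : x = 0 := by
        ext i
        have hpm : ∀ s : ℝ, 0 ≤ s * x i := by
          intro s
          obtain ⟨M, hM⟩ : ∃ M : ℝ, ∀ v ∈ Γ.V, 0 ≤ s * (v i : ℝ) + M := by
            refine ⟨∑ v ∈ Γ.V, |s * (v i : ℝ)|, fun v hv => ?_⟩
            have := Finset.single_le_sum (f := fun v : Fin d → ℤ => |s * (v i : ℝ)|) (fun i _ => abs_nonneg _) hv
            have h2 := neg_abs_le (s * (v i : ℝ))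
            beta_reduce at this
            linarith
          have := key (s • (LinearMap.proj i).comp (LinearMap.fst ℝ _ _) + M • LinearMap.snd ℝ _ _) (by
            intro v hv
            simpa [gr, phi_fst, phi_snd, gen] using hM v hv)
          simpa using this
        have h1 := hpm 1
        have h2 := hpm (-1)
        simp only [Pi.zero_apply]; linarith
      subst hx
      exact ⟨0, fun _ => le_rfl, by simp; rfl⟩

theorem mr_mem : phi Γ.mr ∈ KC Γ.V := by
  rw [cone_iff]; intro u hu; rw [n_mr _ hu]; exact zero_le_one

/-- common zeros -/
def V2 (u w : Fin d → ℤ) : Finset (Fin d → ℤ) := Γ.V.filter fun v => Γ.nz u (gen v) = 0 ∧ Γ.nz w (gen v) = 0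

theorem mem_V2 {u w v} : v ∈ Γ.V2 u w ↔ v ∈ Γ.V ∧ Γ.nz u (gen v) = 0 ∧ Γ.nz w (gen v) = 0 := by simp [V2]

theorem V2_comm (u w) : Γ.V2 u w = Γ.V2 w u := by
  ext v; simp only [mem_V2]; tauto

theorem V2_sub (u w) : Γ.V2 u w ⊆ Γ.V := Finset.filter_subset _ _

/-- perturbation bound -/
theorem small (f : E d →ₗ[ℝ] ℝ) : ∃ e : ℝ, 0 < e ∧ ∀ v ∈ Γ.V, |e * f (gr v)| ≤ 1 := by
  have hs : 0 ≤ ∑ v ∈ Γ.V, |f (gr v)| := Finset.sum_nonneg fun _ _ => abs_nonneg _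
  refine ⟨(1 + ∑ v ∈ Γ.V, |f (gr v)|)⁻¹, by positivity, fun v hv => ?_⟩
  have := Finset.single_le_sum (f := fun v : Fin d → ℤ => |f (gr v)|) (fun i _ => abs_nonneg _) hv
  rw [abs_mul, abs_of_pos (by positivity), inv_mul_le_iff₀ (by positivity)]
  beta_reduce at this
  linarith

theorem facet {u} (hu : u ∈ Γ.U) (f : E d →ₗ[ℝ] ℝ) (hf : ∀ v ∈ Γ.V2 u u, f (gr v) = 0) :
    f = f (phi Γ.mr) • Γ.n u := by
  set f' := f - f (phi Γ.mr) • Γ.n u with hf'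
  suffices h : f' = 0 by rwa [hf', sub_eq_zero] at h
  have h0 : f' (phi Γ.mr) = 0 := by simp [hf', n_mr _ hu]
  have h1 : ∀ v ∈ Γ.V, Γ.nz u (gen v) = 0 → f' (gr v) = 0 := by
    intro v hv hz
    simp [hf', hf v (Γ.mem_V2.2 ⟨hv, hz, hz⟩), n_gr, hz]
  obtain ⟨e, he, hb⟩ := Γ.small f'
  have h2 : ∀ v ∈ Γ.V, |e * f' (gr v)| ≤ Γ.n u (gr v) := by
    intro v hv
    rcases (Γ.nz_nonneg hu hv).lt_or_eq with hlt | heq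
    · refine (hb v hv).trans ?_
      rw [n_gr]; exact_mod_cast hlt
    · rw [h1 v hv heq.symm, n_gr, ← heq]; simp
  have := Γ.ext' hu (e • f') (by simp [h0]) (fun v hv => by
    have := (abs_le.1 (h2 v hv)).1
    simp; linarith) (fun v hv => by
    have := (abs_le.1 (h2 v hv)).2
    simp; linarith)
  exact (smul_eq_zero.1 this).resolve_left he.ne'

def ann (S : Finset (Fin d → ℤ)) : Submodule ℝ (Module.Dual ℝ (E d)) := (SP S).dualAnnihilator

theorem mem_ann {S : Finset (Fin d → ℤ)} {f : Module.Dual ℝ (E d)} : f ∈ ann S ↔ ∀ v ∈ S, f (gr v) = 0 := by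
  rw [ann, Submodule.mem_dualAnnihilator]
  constructor
  · intro h v hv; exact h _ (Submodule.subset_span ⟨⟨v, hv⟩, rfl⟩)
  · intro h x hx; exact SP_zero f h hx

theorem ann_rank (S : Finset (Fin d → ℤ)) : rk S + Module.finrank ℝ (ann S) = d + 1 := by
  have := Subspace.finrank_add_finrank_dualAnnihilator_eq (SP S)
  rw [finrank_E] at this
  exact this

theorem rk_facet {u} (hu : u ∈ Γ.U) : rk (Γ.V2 u u) = d := by
  have h := ann_rank (Γ.V2 u u)
  have e : ann (Γ.V2 u u) = Submodule.span ℝ {Γ.n u} := by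
    ext f
    rw [mem_ann, Submodule.mem_span_singleton]
    constructor
    · intro hf; exact ⟨_, (Γ.facet hu f hf).symm⟩
    · rintro ⟨a, rfl⟩ v hv
      simp [n_gr, (Γ.mem_V2.1 hv).2.1]
  have hn : Γ.n u ≠ 0 := by
    intro h0
    have := Γ.n_mr hu
    rw [h0] at this; simp at this
  rw [e, finrank_span_singleton hn] at h
  omega

theorem no_between {u1 u2 u3} (h1 : u1 ∈ Γ.U) (h2 : u2 ∈ Γ.U) (h3 : u3 ∈ Γ.U) (h23 : u2 ≠ u3) {b c : ℝ}
    (hb : 0 < b) (hc : 0 < c) (hbc : b + c = 1) (h : Γ.n u1 = b • Γ.n u2 + c • Γ.n u3) : False := by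
  set e := min b c with he
  have e0 : 0 < e := lt_min hb hc
  have eb : e ≤ b := min_le_left _ _
  have ec : e ≤ c := min_le_right _ _
  have := Γ.ext' h1 (e • (Γ.n u2 - Γ.n u3)) (by simp [n_mr, h2, h3]) (by
    intro v hv
    have a2 := Γ.n_nonneg h2 hv
    have a3 := Γ.n_nonneg h3 hv
    rw [h]; simp
    nlinarith) (by
    intro v hv
    have a2 := Γ.n_nonneg h2 hv
    have a3 := Γ.n_nonneg h3 hv
    rw [h]; simp
    nlinarith)
  rw [smul_eq_zero] at this
  exact h23 (Γ.n_inj h2 h3 (sub_eq_zero.1 (this.resolve_left e0.ne')))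

theorem no_rel {u1 u2 u3} (h1 : u1 ∈ Γ.U) (h2 : u2 ∈ Γ.U) (h3 : u3 ∈ Γ.U) (h12 : u1 ≠ u2) (h13 : u1 ≠ u3)
    (h23 : u2 ≠ u3) {a b c : ℝ} (ha : 0 < a) (hb : b ≤ 0) (hc : c ≤ 0)
    (h : a • Γ.n u1 + b • Γ.n u2 + c • Γ.n u3 = 0) : False := by
  have hs : a + b + c = 0 := by
    have := congrArg (fun f => f (phi Γ.mr)) h
    simpa [n_mr, h1, h2, h3] using this
  have e : Γ.n u1 = (-b / a) • Γ.n u2 + (-c / a) • Γ.n u3 := by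
    refine LinearMap.ext fun x => ?_
    have := congrArg (fun f => f x) h
    simp at this
    simp
    field_simp
    linarith
  rcases hb.lt_or_eq with hb | rfl
  · rcases hc.lt_or_eq with hc | rfl
    · refine Γ.no_between h1 h2 h3 h23 (div_pos (neg_pos.2 hb) ha) (div_pos (neg_pos.2 hc) ha) ?_ e
      field_simp; linarith
    · have : -b / a = 1 := by field_simp; linarith
      rw [this] at e
      exact h12 (Γ.n_inj h1 h2 (by simpa using e))
  · have : -c / a = 1 := by field_simp; linarith
    rw [this] at e
    exact h13 (Γ.n_inj h1 h3 (by simpa using e))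

theorem sign_alt (a b c : ℝ) (h : a + b + c = 0) (h' : a ≠ 0 ∨ b ≠ 0 ∨ c ≠ 0) :
      ((0 < a ∧ b ≤ 0 ∧ c ≤ 0) ∨ (a ≤ 0 ∧ 0 < b ∧ c ≤ 0) ∨ (a ≤ 0 ∧ b ≤ 0 ∧ 0 < c)) ∨
      ((0 < -a ∧ -b ≤ 0 ∧ -c ≤ 0) ∨ (-a ≤ 0 ∧ 0 < -b ∧ -c ≤ 0) ∨ (-a ≤ 0 ∧ -b ≤ 0 ∧ 0 < -c)) := by
  by_contra hcon
  simp only [not_or, not_and] at hcon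
  obtain ⟨⟨p1, p2, p3⟩, q1, q2, q3⟩ := hcon
  have z : a = 0 ∧ b = 0 ∧ c = 0 := by
    rcases le_total 0 a with ha | ha <;> rcases le_total 0 b with hb | hb <;> rcases le_total 0 c with hc | hc
    · exact ⟨by linarith, by linarith, by linarith⟩
    · have := q3 (by linarith) (by linarith); exact ⟨by linarith, by linarith, by linarith⟩
    · have : ¬ 0 < -b := fun hh => q2 (by linarith) hh (by linarith)
      exact ⟨by linarith, by linarith, by linarith⟩
    · have : ¬ 0 < a := fun hh => p1 hh (by linarith) (by linarith)
      exact ⟨by linarith, by linarith, by linarith⟩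
    · have : ¬ 0 < -a := fun hh => q1 hh (by linarith) (by linarith)
      exact ⟨by linarith, by linarith, by linarith⟩
    · have : ¬ 0 < b := fun hh => p2 (by linarith) hh (by linarith)
      exact ⟨by linarith, by linarith, by linarith⟩
    · have := p3 (by linarith) (by linarith); exact ⟨by linarith, by linarith, by linarith⟩
    · exact ⟨by linarith, by linarith, by linarith⟩
  rcases h' with h' | h' | h'
  · exact h' z.1
  · exact h' z.2.1
  · exact h' z.2.2

theorem triple {u1 u2 u3} (h1 : u1 ∈ Γ.U) (h2 : u2 ∈ Γ.U) (h3 : u3 ∈ Γ.U) (h12 : u1 ≠ u2) (h13 : u1 ≠ u3)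
    (h23 : u2 ≠ u3) (S : Finset (Fin d → ℤ)) (hS : d - 1 ≤ rk S) 
    (z1 : ∀ v ∈ S, Γ.nz u1 (gen v) = 0) (z2 : ∀ v ∈ S, Γ.nz u2 (gen v) = 0)
    (z3 : ∀ v ∈ S, Γ.nz u3 (gen v) = 0) : False := by
  have hd := Γ.hd
  have hr := ann_rank S
  have hfr : Module.finrank ℝ (ann S) < 3 := by omega
  have m1 : Γ.n u1 ∈ ann S := mem_ann.2 fun v hv => by rw [n_gr, z1 v hv]; simp
  have m2 : Γ.n u2 ∈ ann S := mem_ann.2 fun v hv => by rw [n_gr, z2 v hv]; simp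
  have m3 : Γ.n u3 ∈ ann S := mem_ann.2 fun v hv => by rw [n_gr, z3 v hv]; simp
  obtain ⟨x, y, z, hne, hg'⟩ := dep3 (ann S) hfr m1 m2 m3
  have hs : x + y + z = 0 := by
    have := congrArg (fun f => f (phi Γ.mr)) hg'
    simpa [n_mr, h1, h2, h3] using this
  have key : ∀ a b c : ℝ, a • Γ.n u1 + b • Γ.n u2 + c • Γ.n u3 = 0 → a + b + c = 0 →
      (0 < a ∧ b ≤ 0 ∧ c ≤ 0) ∨ (a ≤ 0 ∧ 0 < b ∧ c ≤ 0) ∨ (a ≤ 0 ∧ b ≤ 0 ∧ 0 < c) → False := by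
    intro a b c h hs hc
    rcases hc with ⟨p, q, r⟩ | ⟨p, q, r⟩ | ⟨p, q, r⟩
    · exact Γ.no_rel h1 h2 h3 h12 h13 h23 p q r h
    · exact Γ.no_rel h2 h1 h3 h12.symm h23 h13 q p r (by rw [← h]; abel)
    · exact Γ.no_rel h3 h1 h2 h13.symm h23.symm h12 r p q (by rw [← h]; abel)
  have hneg : -x • Γ.n u1 + -y • Γ.n u2 + -z • Γ.n u3 = 0 := by
    refine LinearMap.ext fun p => ?_
    have := congrArg (fun f => f p) hg'
    simp at this ⊢
    linarith
  have k1 := key _ _ _ hg' hs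
  have k2 := key _ _ _ hneg (by linarith)
  rcases sign_alt _ _ _ hs hne with h | h
  · exact k1 h
  · exact k2 h

theorem rk_V2_le {u w} (hu : u ∈ Γ.U) (hw : w ∈ Γ.U) (huw : u ≠ w) : rk (Γ.V2 u w) ≤ d - 1 := by
  have hr := ann_rank (Γ.V2 u w)
  have m1 : Γ.n u ∈ ann (Γ.V2 u w) := mem_ann.2 fun v hv => by rw [n_gr, (Γ.mem_V2.1 hv).2.1]; simp
  have m2 : Γ.n w ∈ ann (Γ.V2 u w) := mem_ann.2 fun v hv => by rw [n_gr, (Γ.mem_V2.1 hv).2.2]; simp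
  have hl := indep2 (ann (Γ.V2 u w)) m1 m2 (by
    intro s t h'
    have hs : s + t = 0 := by
      have := congrArg (fun f => f (phi Γ.mr)) h'
      simpa [n_mr, hu, hw] using this
    have : s = 0 := by
      by_contra hne
      have e : t = -s := by linarith
      rw [e, neg_smul, ← sub_eq_add_neg, ← smul_sub, smul_eq_zero] at h'
      exact huw (Γ.n_inj hu hw (sub_eq_zero.1 (h'.resolve_left hne)))
    exact ⟨this, by linarith⟩)
  omega

end Geo
end Gor

namespace Gor
namespace Geo
variable {d : ℕ} (Γ : Geo d)

/-- shifted lattice point sets -/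
def Nset (s : Γ.U → ℤ) (t : ℤ) : Set (G d) := {p | p.2 = t ∧ ∀ u : Γ.U, s u ≤ Γ.nz u.1 p}

/-- counting -/
def N (s : Γ.U → ℤ) (t : ℤ) : ℝ := ((Γ.Nset s t).ncard : ℝ)

theorem Nset_shift (s : Γ.U → ℤ) (t : ℤ) (q : G d) :
    Γ.Nset (fun u => s u + Γ.nz u.1 q) (t + q.2) = (fun p => p + q) '' Γ.Nset s t := by
  ext p
  constructor
  · rintro ⟨h1, h2⟩
    refine ⟨p - q, ⟨by simp [h1], fun u => ?_⟩, by simp⟩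
    rw [map_sub]; have := h2 u; beta_reduce at this; omega
  · rintro ⟨p, ⟨h1, h2⟩, rfl⟩
    refine ⟨by simp [h1], fun u => ?_⟩
    rw [map_add]; have := h2 u; beta_reduce; omega

theorem N_shift (s : Γ.U → ℤ) (t : ℤ) (q : G d) :
    Γ.N (fun u => s u + Γ.nz u.1 q) (t + q.2) = Γ.N s t := by
  rw [N, Nset_shift, Set.ncard_image_of_injective _ (add_left_injective q), N]

theorem nz_phi_nonneg {u} {p : G d} : 0 ≤ Γ.n u (phi p) ↔ 0 ≤ Γ.nz u p := by
  rw [n_phi]; exact_mod_cast Iff.rfl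

theorem Nset_zero (t : ℤ) : Γ.Nset 0 t = LP Γ.V t := by
  ext p
  simp only [Nset, LP, Set.mem_ofPred_eq, cone_iff, nz_phi_nonneg]
  constructor
  · rintro ⟨h1, h2⟩; exact ⟨h1, fun u hu => h2 ⟨u, hu⟩⟩
  · rintro ⟨h1, h2⟩; exact ⟨h1, fun u => h2 _ u.2⟩

theorem exists_bd (s : Γ.U → ℤ) : ∃ M : ℕ, ∀ u, |s u| ≤ M := by
  refine ⟨(∑ u, |s u|).toNat, fun u => ?_⟩
  have h := Finset.single_le_sum (f := fun u => |s u|) (fun i _ => abs_nonneg _) (Finset.mem_univ u)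
  have h2 : 0 ≤ ∑ u, |s u| := Finset.sum_nonneg fun _ _ => abs_nonneg _
  rw [Int.toNat_of_nonneg h2]; exact h

theorem nz_nsmul_mr (u : Γ.U) (M : ℕ) : Γ.nz u.1 (M • Γ.mr) = M := by
  rw [map_nsmul, nz_mr _ u.2]; simp

theorem Nset_finite (s : Γ.U → ℤ) (t : ℤ) : (Γ.Nset s t).Finite := by
  obtain ⟨M, hM⟩ := Γ.exists_bd s
  have h := LP_finite Γ.V (t + (M • Γ.mr).2)
  rw [← Nset_zero] at h
  refine Set.Finite.of_finite_image (f := fun p => p + M • Γ.mr) ?_ (add_left_injective _).injOn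
  rw [← Nset_shift]
  refine h.subset ?_
  rintro p ⟨h1, h2⟩
  refine ⟨h1, fun u => ?_⟩
  have h3 := h2 u
  beta_reduce at h3
  rw [nz_nsmul_mr] at h3
  have := (abs_le.1 (hM u)).1
  simp only [Pi.zero_apply]; omega

theorem N_diag (s : Γ.U → ℤ) (t : ℤ) : Γ.N (s + 1) t = Γ.N s (t - (d - 1 : ℕ)) := by
  rw [← Γ.N_shift s _ Γ.mr]
  congr 1
  · ext u; simp [nz_mr]
  · simp [mr]

theorem mem_LP_V2 {u w} (hu : u ∈ Γ.U) (hw : w ∈ Γ.U) {p : G d} {t : ℤ} : p ∈ LP (Γ.V2 u w) t ↔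
    p.2 = t ∧ (∀ x ∈ Γ.U, 0 ≤ Γ.nz x p) ∧ Γ.nz u p = 0 ∧ Γ.nz w p = 0 := by
  constructor
  · rintro ⟨h1, h2⟩
    have hk := KC_mono (Γ.V2_sub u w) h2
    rw [cone_iff] at hk
    have e1 : Γ.n u (phi p) = 0 := SP_zero _ (fun v hv => by rw [n_gr, (Γ.mem_V2.1 hv).2.1]; simp) (cone_sub_span h2)
    have e2 : Γ.n w (phi p) = 0 := SP_zero _ (fun v hv => by rw [n_gr, (Γ.mem_V2.1 hv).2.2]; simp) (cone_sub_span h2)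
    rw [n_phi] at e1 e2
    exact ⟨h1, fun x hx => Γ.nz_phi_nonneg.1 (hk x hx), by exact_mod_cast e1, by exact_mod_cast e2⟩
  · rintro ⟨h1, h2, h3, h4⟩
    refine ⟨h1, ?_⟩
    have hk : phi p ∈ KC Γ.V := Γ.cone_iff.2 fun x hx => Γ.nz_phi_nonneg.2 (h2 x hx)
    refine KC_filter hk (Γ.n u + Γ.n w) (fun v hv => add_nonneg (Γ.n_nonneg hu hv) (Γ.n_nonneg hw hv)) ?_ ?_
    · simp [n_phi, h3, h4]
    · intro v hv h
      rw [mem_V2]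
      have a1 := Γ.nz_nonneg hu hv
      have a2 := Γ.nz_nonneg hw hv
      simp only [LinearMap.add_apply, n_gr] at h
      have h' : Γ.nz u (gen v) + Γ.nz w (gen v) = 0 := by exact_mod_cast h
      exact ⟨hv, by omega, by omega⟩

/-- facet slice -/
def P1 (s : Γ.U → ℤ) (u : Γ.U) (t : ℤ) : Set (G d) := {p ∈ Γ.Nset s t | Γ.nz u.1 p = s u}

/-- codimension two slice -/
def P2 (s : Γ.U → ℤ) (u w : Γ.U) (t : ℤ) : Set (G d) := {p ∈ Γ.Nset s t | Γ.nz u.1 p = s u ∧ Γ.nz w.1 p = s w}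

theorem mem_Nset_eu (s : Γ.U → ℤ) (u : Γ.U) (t : ℤ) (p : G d) :
    p ∈ Γ.Nset (s + eu u) t ↔ p ∈ Γ.Nset s t ∧ Γ.nz u.1 p ≠ s u := by
  simp only [Nset, Set.mem_ofPred_eq, eu, Pi.add_apply]
  constructor
  · rintro ⟨h1, h2⟩
    refine ⟨⟨h1, fun x => ?_⟩, ?_⟩
    · have := h2 x
      by_cases hx : x = u
      · subst hx; simp at this; omega
      · rw [Pi.single_eq_of_ne hx] at this; omega
    · have := h2 u; simp at this; omega
  · rintro ⟨⟨h1, h2⟩, h3⟩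
    refine ⟨h1, fun x => ?_⟩
    have := h2 x
    by_cases hx : x = u
    · subst hx; simp; omega
    · rw [Pi.single_eq_of_ne hx]; omega

theorem N_sub (s : Γ.U → ℤ) (u : Γ.U) (t : ℤ) : Γ.N s t - Γ.N (s + eu u) t = (Γ.P1 s u t).ncard := by
  have e : Γ.Nset s t = Γ.Nset (s + eu u) t ∪ Γ.P1 s u t := by
    ext p
    rw [Set.mem_union, mem_Nset_eu, P1, Set.mem_sep_iff]; tauto
  have hd : Disjoint (Γ.Nset (s + eu u) t) (Γ.P1 s u t) := by
    rw [Set.disjoint_left]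
    intro p h1 h2
    rw [mem_Nset_eu] at h1
    exact h1.2 h2.2
  rw [N, e, Set.ncard_union_eq hd (Γ.Nset_finite _ _) ((Γ.Nset_finite s t).subset (Set.sep_subset _ _)), N]
  push_cast; ring

theorem P1_sub (s : Γ.U → ℤ) (u w : Γ.U) (huw : u ≠ w) (t : ℤ) :
    ((Γ.P1 s u t).ncard : ℝ) - (Γ.P1 (s + eu w) u t).ncard = (Γ.P2 s u w t).ncard := by
  have hs : (s + eu w) u = s u := by simp [eu, Pi.single_eq_of_ne huw]
  have e : Γ.P1 s u t = Γ.P1 (s + eu w) u t ∪ Γ.P2 s u w t := by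
    ext p
    simp only [P1, P2, Set.mem_union, Set.mem_sep_iff, mem_Nset_eu, hs, Set.mem_ofPred_eq]; tauto
  have hd : Disjoint (Γ.P1 (s + eu w) u t) (Γ.P2 s u w t) := by
    rw [Set.disjoint_left]
    intro p h1 h2
    simp only [P1, P2, Set.mem_sep_iff, mem_Nset_eu, hs] at h1 h2
    exact h1.1.2 h2.2.2
  rw [e, Set.ncard_union_eq hd ((Γ.Nset_finite _ t).subset (Set.sep_subset _ _)) ((Γ.Nset_finite s t).subset (Set.sep_subset _ _))]
  push_cast; ring

theorem N_pair (s : Γ.U → ℤ) (u w : Γ.U) (huw : u ≠ w) (t : ℤ) :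
    Γ.N s t - Γ.N (s + eu u) t - Γ.N (s + eu w) t + Γ.N (s + eu u + eu w) t = (Γ.P2 s u w t).ncard := by
  rw [← Γ.P1_sub s u w huw t, ← N_sub, ← N_sub, add_right_comm s (eu w) (eu u)]; ring

theorem P1_zero (u : Γ.U) (t : ℤ) : Γ.P1 0 u t = LP (Γ.V2 u u) t := by
  ext p
  rw [mem_LP_V2 _ u.2 u.2, P1, Set.mem_sep_iff, Nset, Set.mem_ofPred_eq]
  simp only [Pi.zero_apply]
  constructor
  · rintro ⟨⟨h1, h2⟩, h3⟩; exact ⟨h1, fun x hx => h2 ⟨x, hx⟩, h3, h3⟩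
  · rintro ⟨h1, h2, h3, _⟩; exact ⟨⟨h1, fun x => h2 _ x.2⟩, h3⟩

theorem facet_as (u : Γ.U) : ∃ c, As (d - 2) (fun t => (Γ.N 0 t - Γ.N (eu u) t) -
    (Γ.N 0 (t - (d - 1 : ℕ)) - Γ.N (eu u) (t - (d - 1 : ℕ)))) c := by
  have hd := Γ.hd
  obtain ⟨c, hc⟩ := ehr_as_diff (k := d - 2) (D := rk (Γ.V2 u u)) (by rw [Γ.rk_facet u.2]; omega) (hv (Γ.V2 u u)) (d - 1)
  refine ⟨c, hc.congr fun t => ?_⟩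
  have h : ∀ t, Γ.N 0 t - Γ.N (eu u) t = ehr (rk (Γ.V2 u u)) (hv (Γ.V2 u u)) t := by
    intro t
    have := Γ.N_sub 0 u t
    rw [zero_add] at this
    rw [this, P1_zero, LP_ncard]
  rw [h, h]

/-- adjacency -/
def Adj (u w : Fin d → ℤ) : Prop := u ≠ w ∧ rk (Γ.V2 u w) = d - 1

open Classical in
/-- face volume -/
def A (u w : Γ.U) : ℝ := if Γ.Adj u w then ∑ j ∈ Finset.range d, (hv (Γ.V2 u.1 w.1) j : ℝ) else 0

theorem Adj.symm {Γ : Geo d} {u w} (h : Γ.Adj u w) : Γ.Adj w u := ⟨h.1.symm, by rw [V2_comm]; exact h.2⟩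

theorem A_symm (u w : Γ.U) : Γ.A u w = Γ.A w u := by
  unfold A
  rw [V2_comm]
  by_cases h : Γ.Adj u w
  · rw [if_pos h, if_pos h.symm]
  · rw [if_neg h, if_neg fun h' => h h'.symm]

theorem A_as {u w : Γ.U} (h : Γ.Adj u w) : As (d - 2) (fun t => ((LP (Γ.V2 u.1 w.1) t).ncard : ℝ)) (Γ.A u w) := by
  have hd := Γ.hd
  have := ehr_as (d - 2) (hv (Γ.V2 u.1 w.1))
  rw [show d - 2 + 1 = d - 1 by omega, show d - 2 + 2 = d by omega] at this
  rw [A, if_pos h]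
  refine this.congr fun t => ?_
  rw [LP_ncard, h.2]

/-- barycentre-like point -/
def ee (u w : Fin d → ℤ) : G d := ∑ v ∈ Γ.V2 u w, gen v

theorem ee_zero (u w : Fin d → ℤ) : Γ.nz u (Γ.ee u w) = 0 ∧ Γ.nz w (Γ.ee u w) = 0 := by
  rw [ee, map_sum, map_sum]
  exact ⟨Finset.sum_eq_zero fun v hv => (Γ.mem_V2.1 hv).2.1, Finset.sum_eq_zero fun v hv => (Γ.mem_V2.1 hv).2.2⟩

theorem ee_pos {u w x} (hu : u ∈ Γ.U) (hw : w ∈ Γ.U) (hx : x ∈ Γ.U) (h : Γ.Adj u w) (hxu : x ≠ u) (hxw : x ≠ w) :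
    1 ≤ Γ.nz x (Γ.ee u w) := by
  have h0 : 0 ≤ Γ.nz x (Γ.ee u w) := by
    rw [ee, map_sum]
    exact Finset.sum_nonneg fun v hv => Γ.nz_nonneg hx (Γ.mem_V2.1 hv).1
  by_contra hc
  have hz : Γ.nz x (Γ.ee u w) = 0 := by omega
  rw [ee, map_sum, Finset.sum_eq_zero_iff_of_nonneg (fun v hv => Γ.nz_nonneg hx (Γ.mem_V2.1 hv).1)] at hz
  exact Γ.triple hu hw hx h.1 hxu.symm hxw.symm (Γ.V2 u w) h.2.ge (fun v hv => (Γ.mem_V2.1 hv).2.1)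
    (fun v hv => (Γ.mem_V2.1 hv).2.2) hz

theorem pair_adj (s : Γ.U → ℤ) {u w : Γ.U} (h : Γ.Adj u w) (p0 : G d) (h1 : Γ.nz u.1 p0 = s u) (h2 : Γ.nz w.1 p0 = s w) :
    As (d - 2) (fun t => ((Γ.P2 s u w t).ncard : ℝ)) (Γ.A u w) := by
  obtain ⟨M, hM⟩ := Γ.exists_bd (fun x => s x - Γ.nz x.1 p0)
  set e := Γ.ee u w with he
  obtain ⟨z1, z2⟩ := Γ.ee_zero u.1 w.1
  have key : ∀ x : Γ.U, x = u ∨ x = w ∨ (M : ℤ) ≤ Γ.nz x.1 (M • e) := by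
    intro x
    by_cases hu : x = u
    · exact Or.inl hu
    by_cases hw : x = w
    · exact Or.inr (Or.inl hw)
    right; right
    have := Γ.ee_pos u.2 w.2 x.2 h (fun h => hu (Subtype.ext h)) (fun h => hw (Subtype.ext h))
    rw [map_nsmul, nsmul_eq_mul]
    nlinarith
  have k1 : Γ.nz u.1 (M • e) = 0 := by rw [map_nsmul, z1]; simp
  have k2 : Γ.nz w.1 (M • e) = 0 := by rw [map_nsmul, z2]; simp
  have hA := Γ.A_as h
  refine As.squeeze (hA.shift (p0 + M • e).2) (hA.shift (p0 - M • e).2) (Eventually.of_forall fun t => ?_)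
    (Eventually.of_forall fun t => ?_)
  · have : (fun q => q + (p0 + M • e)) '' LP (Γ.V2 u.1 w.1) (t - (p0 + M • e).2) ⊆ Γ.P2 s u w t := by
      rintro _ ⟨q, hq, rfl⟩
      rw [mem_LP_V2 _ u.2 w.2] at hq
      obtain ⟨q1, q2, q3, q4⟩ := hq
      refine ⟨⟨by rw [Prod.snd_add, q1]; ring, fun x => ?_⟩, ?_, ?_⟩
      · rw [map_add, map_add]
        have a1 := q2 x.1 x.2
        have a2 := (abs_le.1 (hM x)).2
        rcases key x with rfl | rfl | hx <;> omega
      · rw [map_add, map_add]; omega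
      · rw [map_add, map_add]; omega
    have h2 := Set.ncard_le_ncard this ((Γ.Nset_finite s t).subset (Set.sep_subset _ _))
    rw [Set.ncard_image_of_injective _ (add_left_injective _)] at h2
    exact_mod_cast h2
  · have : (fun q => q - (p0 - M • e)) '' Γ.P2 s u w t ⊆ LP (Γ.V2 u.1 w.1) (t - (p0 - M • e).2) := by
      rintro _ ⟨q, ⟨⟨q1, q2⟩, q3, q4⟩, rfl⟩
      rw [mem_LP_V2 _ u.2 w.2]
      refine ⟨by rw [Prod.snd_sub, q1], fun x hx => ?_, ?_, ?_⟩
      · rw [map_sub, map_sub]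
        have a1 := q2 ⟨x, hx⟩
        have a2 := (abs_le.1 (hM ⟨x, hx⟩)).1
        beta_reduce at a1 a2
        rcases key ⟨x, hx⟩ with rfl | rfl | hx <;> simp only at * <;> omega
      · rw [map_sub, map_sub]; omega
      · rw [map_sub, map_sub]; omega
    have h2 := Set.ncard_le_ncard this (LP_finite _ _)
    rw [Set.ncard_image_of_injective _ (sub_left_injective)] at h2
    exact_mod_cast h2

end Geo
end Gor

namespace Gor
namespace Geo
variable {d : ℕ} (Γ : Geo d)

theorem nonadj_cover {u w : Fin d → ℤ} (hu : u ∈ Γ.U) (hw : w ∈ Γ.U) (a : ℤ) : ∃ Y : Finset (G d), ∀ p : G d, phi p ∈ KC Γ.V →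
    Γ.nz u p + Γ.nz w p = a → ∃ y ∈ Y, p - y ∈ LP (Γ.V2 u w) (p.2 - y.2) := by
  classical
  refine ⟨(fin_bdd (fun v : Γ.V => gr v.1) (1 + |(a : ℝ)|)).toFinset, ?_⟩
  rintro p ⟨l, hl, hp⟩ ha
  set l' : Γ.V → ℝ := fun v => if v.1 ∈ Γ.V2 u w then Int.fract (l v) else l v with hl'
  set z : G d := ∑ v : Γ.V, (if v.1 ∈ Γ.V2 u w then ⌊l v⌋ else 0) • gen v.1 with hz
  have hzphi : phi z = ∑ v : Γ.V, (((if v.1 ∈ Γ.V2 u w then ⌊l v⌋ else 0 : ℤ)) : ℝ) • gr v.1 := by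
    rw [hz, map_sum]
    refine Finset.sum_congr rfl fun v _ => ?_
    rw [map_zsmul, Int.cast_smul_eq_zsmul]; rfl
  have hzu : ∀ x : Fin d → ℤ, (∀ v ∈ Γ.V2 u w, Γ.nz x (gen v) = 0) → Γ.nz x z = 0 := by
    intro x hx
    rw [hz, map_sum]
    refine Finset.sum_eq_zero fun v _ => ?_
    rw [map_zsmul]
    split_ifs with h
    · rw [hx _ h]; simp
    · simp
  refine ⟨p - z, ?_, ?_⟩
  · rw [Set.Finite.mem_toFinset]
    refine ⟨l', fun v => ?_, ?_⟩
    · simp only [hl']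
      split_ifs with h
      · rw [abs_of_nonneg (Int.fract_nonneg _)]
        have := Int.fract_lt_one (l v)
        have := abs_nonneg (a : ℝ)
        linarith
      · rw [abs_of_nonneg (hl v)]
        have h1 : (Γ.n u + Γ.n w) (phi p) = a := by
          rw [LinearMap.add_apply, n_phi, n_phi]; exact_mod_cast ha
        rw [← hp, map_sum] at h1
        have h2 := Finset.single_le_sum (f := fun v : Γ.V => (Γ.n u + Γ.n w) (l v • gr v.1)) (fun v _ => by
          rw [map_smul]
          exact mul_nonneg (hl v) (add_nonneg (Γ.n_nonneg hu v.2) (Γ.n_nonneg hw v.2))) (Finset.mem_univ v)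
        rw [h1] at h2
        beta_reduce at h2
        rw [map_smul, LinearMap.add_apply, n_gr, n_gr, smul_eq_mul] at h2
        have h3 : 1 ≤ Γ.nz u (gen v.1) + Γ.nz w (gen v.1) := by
          have a1 := Γ.nz_nonneg hu v.2
          have a2 := Γ.nz_nonneg hw v.2
          rw [mem_V2] at h
          by_contra hc
          exact h ⟨v.2, by omega, by omega⟩
        have h4 : (1 : ℝ) ≤ Γ.nz u (gen v.1) + Γ.nz w (gen v.1) := by exact_mod_cast h3
        have h5 := le_abs_self (a : ℝ)
        have h6 := mul_le_mul_of_nonneg_left h4 (hl v)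
        linarith
    · rw [map_sub, hzphi, ← hp, ← Finset.sum_sub_distrib]
      refine Finset.sum_congr rfl fun v _ => ?_
      rw [← sub_smul]
      congr 1
      simp only [hl']
      split_ifs
      · exact Int.self_sub_floor _
      · simp
  · rw [mem_LP_V2 _ hu hw, sub_sub_cancel]
    refine ⟨by simp, ?_, ?_, ?_⟩
    · intro x hx
      rw [← nz_phi_nonneg, hzphi, map_sum]
      refine Finset.sum_nonneg fun v _ => ?_
      rw [map_smul]
      refine mul_nonneg ?_ (Γ.n_nonneg hx v.2)
      split_ifs
      · exact_mod_cast Int.floor_nonneg.2 (hl v)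
      · simp
    · exact hzu u fun v hv => (Γ.mem_V2.1 hv).2.1
    · exact hzu w fun v hv => (Γ.mem_V2.1 hv).2.2

theorem pair_nonadj (s : Γ.U → ℤ) {u w : Γ.U} (huw : u ≠ w) (h : ¬ Γ.Adj u w) :
    As (d - 2) (fun t => ((Γ.P2 s u w t).ncard : ℝ)) 0 := by
  classical
  have hd := Γ.hd
  have hrk : rk (Γ.V2 u.1 w.1) ≤ d - 2 := by
    have h1 := Γ.rk_V2_le u.2 w.2 (fun h => huw (Subtype.ext h))
    have h2 : rk (Γ.V2 u.1 w.1) ≠ d - 1 := fun hc => h ⟨fun h => huw (Subtype.ext h), hc⟩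
    omega
  obtain ⟨M, hM⟩ := Γ.exists_bd s
  obtain ⟨Y, hY⟩ := Γ.nonadj_cover u.2 w.2 (s u + s w + 2 * M)
  have hz := ehr_as_zero hrk (hv (Γ.V2 u.1 w.1))
  have hsum := As.sum Y fun y _ => hz.shift (y - M • Γ.mr).2
  rw [Finset.sum_const_zero] at hsum
  refine As.squeeze As.zero hsum (Eventually.of_forall fun t => by positivity) (Eventually.of_forall fun t => ?_)
  have hsub : Γ.P2 s u w t ⊆ ⋃ y ∈ Y, (fun q => q + (y - M • Γ.mr)) '' LP (Γ.V2 u.1 w.1) (t - (y - M • Γ.mr).2) := by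
    rintro p ⟨⟨p1, p2⟩, p3, p4⟩
    obtain ⟨y, hy, hy2⟩ := hY (p + M • Γ.mr) (by
      rw [cone_iff]
      intro x hx
      rw [nz_phi_nonneg, map_add, Γ.nz_nsmul_mr ⟨x, hx⟩]
      have a1 := p2 ⟨x, hx⟩
      have a2 := (abs_le.1 (hM ⟨x, hx⟩)).1
      simp only at a1 a2
      omega) (by rw [map_add, map_add, nz_nsmul_mr, nz_nsmul_mr]; omega)
    simp only [Set.mem_iUnion]
    refine ⟨y, hy, p + M • Γ.mr - y, ?_, by show p + M • Γ.mr - y + (y - M • Γ.mr) = p; abel⟩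
    have e : (p + M • Γ.mr).2 - y.2 = t - (y - M • Γ.mr).2 := by
      rw [Prod.snd_add, Prod.snd_sub, p1]; ring
    rwa [e] at hy2
  have hfin : (⋃ y ∈ Y, (fun q => q + (y - M • Γ.mr)) '' LP (Γ.V2 u.1 w.1) (t - (y - M • Γ.mr).2)).Finite :=
    Y.finite_toSet.biUnion fun y _ => (LP_finite _ _).image _
  have h1 := (Set.ncard_le_ncard hsub hfin).trans (Finset.set_ncard_biUnion_le Y _)
  have h2 : ∀ y ∈ Y, ((fun q => q + (y - M • Γ.mr)) '' LP (Γ.V2 u.1 w.1) (t - (y - M • Γ.mr).2)).ncard =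
      ehr (rk (Γ.V2 u.1 w.1)) (hv (Γ.V2 u.1 w.1)) (t - (y - M • Γ.mr).2) := by
    intro y _
    rw [Set.ncard_image_of_injective _ (add_left_injective _), LP_ncard]
  rw [Finset.sum_congr rfl h2] at h1
  exact_mod_cast h1

/-- content of the difference -/
def kk (u w : Fin d → ℤ) : ℤ := if u = w then 1 else Finset.univ.gcd fun i => u i - w i

theorem kk_pos (u w : Fin d → ℤ) : 0 < kk u w := by
  unfold kk
  split_ifs with h
  · exact one_pos
  · have h0 : (0 : ℤ) ≤ Finset.univ.gcd fun i => u i - w i := Int.nonneg_of_normalize_eq_self Finset.normalize_gcd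
    refine lt_of_le_of_ne h0 fun hc => h ?_
    have := Finset.gcd_eq_zero_iff.1 hc.symm
    ext i
    have := this i (Finset.mem_univ _)
    omega

theorem kk_symm (u w : Fin d → ℤ) : kk u w = kk w u := by
  unfold kk
  by_cases h : u = w
  · rw [if_pos h, if_pos h.symm]
  · rw [if_neg h, if_neg (Ne.symm h)]
    have : (fun i => w i - u i) = fun i => (-1) * (u i - w i) := by ext i; ring
    rw [this, Finset.gcd_mul_left (f := fun i => u i - w i)]
    have e1 : normalize (-1 : ℤ) = 1 := by decide
    rw [e1, one_mul]

theorem bezout {ι : Type*} (s : Finset ι) (f : ι → ℤ) : ∃ x : ι → ℤ, ∑ i ∈ s, f i * x i = s.gcd f := by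
  classical
  induction s using Finset.induction_on with
  | empty => exact ⟨0, by simp⟩
  | insert a s ha ih =>
    obtain ⟨x, hx⟩ := ih
    refine ⟨fun i => if i = a then Int.gcdA (f a) (s.gcd f) else x i * Int.gcdB (f a) (s.gcd f), ?_⟩
    rw [Finset.sum_insert ha, Finset.gcd_insert]
    beta_reduce
    rw [if_pos rfl]
    have : ∀ A B : ℤ, ∑ i ∈ s, f i * (if i = a then A else x i * B) = s.gcd f * B := by
      intro A B
      rw [← hx, Finset.sum_mul]
      refine Finset.sum_congr rfl fun i hi => ?_
      have hne : ¬ i = a := fun h => ha (h ▸ hi)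
      rw [if_neg hne]; ring
    rw [this, ← Int.gcd_eq_gcd_ab]; rfl

theorem kk_spec {u w : Fin d → ℤ} (h : u ≠ w) : ∃ q x : Fin d → ℤ, (∀ i, u i - w i = kk u w * q i) ∧ ∑ i, q i * x i = 1 := by
  have hk := kk_pos u w
  have e : kk u w = Finset.univ.gcd fun i => u i - w i := by unfold kk; rw [if_neg h]
  have : ∀ i, ∃ q, u i - w i = kk u w * q := fun i => by
    rw [e]; exact Finset.gcd_dvd (f := fun i => u i - w i) (Finset.mem_univ i)
  choose q hq using this
  obtain ⟨x, hx⟩ := bezout (Finset.univ : Finset (Fin d)) (fun i => u i - w i)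
  refine ⟨q, x, hq, ?_⟩
  rw [← e] at hx
  refine mul_left_cancel₀ hk.ne' ?_
  rw [Finset.mul_sum, mul_one]
  refine Eq.trans (Finset.sum_congr rfl fun i _ => ?_) hx
  rw [hq i]; ring

theorem A_ne {u w : Γ.U} (h : Γ.A u w ≠ 0) : Γ.Adj u w := by
  by_contra hc
  exact h (by rw [A, if_neg hc])

theorem Adj.nonempty {Γ : Geo d} {u w} (h : Γ.Adj u w) : (Γ.V2 u w).Nonempty := by
  by_contra hc
  rw [Finset.not_nonempty_iff_eq_empty] at hc
  have h1 := h.2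
  have hd := Γ.hd
  rw [hc] at h1
  have : SP (∅ : Finset (Fin d → ℤ)) = ⊥ := by
    unfold SP
    rw [Submodule.span_eq_bot]
    rintro _ ⟨⟨v, hv⟩, rfl⟩
    simp at hv
  rw [rk, this, finrank_bot] at h1
  omega

theorem facet_nonempty {u} (hu : u ∈ Γ.U) : ∃ v ∈ Γ.V, Γ.nz u (gen v) = 0 := by
  by_contra hc
  push Not at hc
  have h1 := Γ.rk_facet hu
  have hd := Γ.hd
  have e : Γ.V2 u u = ∅ := by
    ext v
    simp only [mem_V2, Finset.notMem_empty, iff_false]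
    rintro ⟨h, h', _⟩
    exact hc v h h'
  rw [e] at h1
  have : SP (∅ : Finset (Fin d → ℤ)) = ⊥ := by
    unfold SP
    rw [Submodule.span_eq_bot]
    rintro _ ⟨⟨v, hv⟩, rfl⟩
    simp at hv
  rw [rk, this, finrank_bot] at h1
  omega

theorem nz_sub (u w : Fin d → ℤ) (p : G d) : Γ.nz u p - Γ.nz w p = ∑ i, (u i - w i) * p.1 i - p.2 * (Γ.c u - Γ.c w) := by
  simp only [nz_apply, sub_mul, Finset.sum_sub_distrib]; ring

theorem pair_dvd {u w : Fin d → ℤ} (h : Γ.Adj u w) (p : G d) : kk u w ∣ Γ.nz u p - Γ.nz w p := by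
  obtain ⟨q, x, hq, hx⟩ := kk_spec h.1
  obtain ⟨v, hv⟩ := h.nonempty
  obtain ⟨_, h1, h2⟩ := Γ.mem_V2.1 hv
  have e1 := Γ.nz_sub u w (gen v)
  have hdv : ∀ y : Fin d → ℤ, kk u w ∣ ∑ i, (u i - w i) * y i := fun y =>
    Finset.dvd_sum fun i _ => Dvd.dvd.mul_right ⟨_, hq i⟩ _
  rw [h1, h2] at e1
  simp only [gen, one_mul, sub_zero] at e1
  rw [nz_sub]
  have e2 : Γ.c u - Γ.c w = ∑ i, (u i - w i) * v i := by omega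
  rw [e2]
  exact dvd_sub (hdv _) (Dvd.dvd.mul_left (hdv _) _)

theorem pair_exists {u w : Γ.U} (h : u ≠ w) (a b : ℤ) (hab : kk u.1 w.1 ∣ a - b) :
    ∃ p : G d, Γ.nz u.1 p = a ∧ Γ.nz w.1 p = b := by
  obtain ⟨q, x, hq, hx⟩ := kk_spec (fun hc => h (Subtype.ext hc) : u.1 ≠ w.1)
  obtain ⟨e, he⟩ := hab
  set p1 : G d := (e • x, 0) with hp1
  have h1 : Γ.nz u.1 p1 - Γ.nz w.1 p1 = a - b := by
    rw [nz_sub, he]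
    simp only [hp1, hq, Pi.smul_apply, smul_eq_mul, zero_mul, sub_zero]
    rw [← mul_one (kk u.1 w.1 * e), ← hx, Finset.mul_sum]
    exact Finset.sum_congr rfl fun i _ => by ring
  refine ⟨p1 + (a - Γ.nz u.1 p1) • Γ.mr, ?_, ?_⟩
  · rw [map_add, map_zsmul, nz_mr _ u.2, smul_eq_mul]; ring
  · rw [map_add, map_zsmul, nz_mr _ w.2, smul_eq_mul]; omega

theorem pair_as (s : Γ.U → ℤ) (u w : Γ.U) (huw : u ≠ w) : As (d - 2) (fun t => Γ.N s t - Γ.N (s + eu u) t -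
    Γ.N (s + eu w) t + Γ.N (s + eu u + eu w) t) (if kk u.1 w.1 ∣ s u - s w then Γ.A u w else 0) := by
  simp only [Γ.N_pair s u w huw]
  by_cases h : Γ.Adj u w
  · split_ifs with hk
    · obtain ⟨p, h1, h2⟩ := Γ.pair_exists huw _ _ hk
      exact Γ.pair_adj s h p h1 h2
    · refine As.zero.congr fun t => ?_
      have : Γ.P2 s u w t = ∅ := by
        rw [Set.eq_empty_iff_forall_notMem]
        rintro p ⟨_, h1, h2⟩
        exact hk (by rw [← h1, ← h2]; exact Γ.pair_dvd h p)
      rw [this]; simp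
  · have : Γ.A u w = 0 := by rw [A, if_neg h]
    rw [this, ite_self]
    exact Γ.pair_nonadj s huw h

theorem hyp : ∃ c : Γ.U → ℝ, Hyp (d - 2) (d - 1 : ℕ) Γ.N Γ.A (fun u w => kk u.1 w.1) c := by
  choose c hc using Γ.facet_as
  exact ⟨c, {
    kpos := fun u w => kk_pos _ _
    ksymm := fun u w => kk_symm _ _
    Asymm := Γ.A_symm
    Adiag := fun u => by rw [A, if_neg]; exact fun h => h.1 rfl
    diag := Γ.N_diag
    pair := Γ.pair_as
    facet := hc }⟩

/-- parity averages -/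
theorem odd_avg (q : Fin d → ℤ) (i : Fin d) (hi : q i % 2 = 1) :
    ∑ z : Finset (Fin d), od (∑ j ∈ z, q j) = (Fintype.card (Finset (Fin d)) : ℝ) / 2 := by
  classical
  have h1 : ∑ z : Finset (Fin d), od (∑ j ∈ z, q j) = ∑ z : Finset (Fin d), od (∑ j ∈ symmDiff z {i}, q j) := by
    refine (Equiv.sum_comp (Function.Involutive.toPerm (fun z : Finset (Fin d) => symmDiff z {i}) (fun z => by simp)) (fun z => od (∑ j ∈ z, q j))).symm
  have h2 : ∀ z : Finset (Fin d), od (∑ j ∈ z, q j) + od (∑ j ∈ symmDiff z {i}, q j) = 1 := by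
    intro z
    by_cases hz : i ∈ z
    · have e : symmDiff z {i} = z.erase i := by
        ext j; simp only [Finset.mem_symmDiff, Finset.mem_singleton, Finset.mem_erase]
        constructor
        · rintro (⟨a, b⟩ | ⟨rfl, b⟩)
          · exact ⟨b, a⟩
          · exact absurd hz b
        · rintro ⟨a, b⟩; exact Or.inl ⟨b, a⟩
      rw [e, ← Finset.add_sum_erase z q hz]
      unfold od
      split_ifs <;> first | omega | norm_num
    · have e : symmDiff z {i} = insert i z := by
        ext j; simp only [Finset.mem_symmDiff, Finset.mem_singleton, Finset.mem_insert]
        constructor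
        · rintro (⟨a, b⟩ | ⟨rfl, b⟩)
          · exact Or.inr a
          · exact Or.inl rfl
        · rintro (rfl | a)
          · exact Or.inr ⟨rfl, hz⟩
          · exact Or.inl ⟨a, fun h => hz (h ▸ a)⟩
      rw [e, Finset.sum_insert hz]
      unfold od
      split_ifs <;> first | omega | norm_num
  have h3 : ∑ z : Finset (Fin d), od (∑ j ∈ z, q j) + ∑ z : Finset (Fin d), od (∑ j ∈ symmDiff z {i}, q j) = Fintype.card (Finset (Fin d)) := by
    rw [← Finset.sum_add_distrib, Finset.sum_congr rfl fun z _ => h2 z]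
    simp
  rw [← h1] at h3
  linarith

theorem exists_odd (q x : Fin d → ℤ) (h : ∑ i, q i * x i = 1) : ∃ i, q i % 2 = 1 := by
  by_contra hc
  push Not at hc
  have : (2 : ℤ) ∣ ∑ i, q i * x i := Finset.dvd_sum fun i _ => Dvd.dvd.mul_right (by have := hc i; omega) _
  rw [h] at this
  omega

theorem u_odd (u : Γ.U) : ∃ i, u.1 i % 2 = 1 := by
  obtain ⟨v, hv, hz⟩ := Γ.facet_nonempty u.2
  have h1 := Γ.nz_mr u.2
  have h2 : Γ.nz u.1 (Γ.mr - ((d - 1 : ℕ) : ℤ) • gen v) = 1 := by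
    rw [map_sub, map_zsmul, hz, h1]; simp
  refine exists_odd u.1 (Γ.mr - ((d - 1 : ℕ) : ℤ) • gen v).1 ?_
  rw [nz_apply] at h2
  have e : (Γ.mr - ((d - 1 : ℕ) : ℤ) • gen v).2 = 0 := by simp [mr, gen]
  rw [e] at h2
  simpa using h2

/-- cube points -/
def zv (z : Finset (Fin d)) : Fin d → ℤ := fun i => if i ∈ z then 1 else 0

theorem sum_zv (z : Finset (Fin d)) (q : Fin d → ℤ) : ∑ i, q i * zv z i = ∑ i ∈ z, q i := by
  simp [zv, Finset.sum_ite_mem]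

theorem nz_zv (z : Finset (Fin d)) (u : Fin d → ℤ) : Γ.nz u (zv z, 0) = ∑ i ∈ z, u i := by
  rw [nz_apply, ← sum_zv z u]; simp

theorem ch_le (a b : ℤ) : ch a ≤ b ↔ a ≤ 2 * b := by unfold ch; omega

theorem double (sg : ℤ) (hsg : sg = 1 ∨ sg = -1) (t : ℤ) :
    Γ.N 0 (2 * t) = ∑ z : Finset (Fin d), Γ.N (fun u => ch (sg * ∑ i ∈ z, u.1 i)) t := by
  classical
  have e : Γ.Nset 0 (2 * t) = ⋃ z ∈ (Finset.univ : Finset (Finset (Fin d))), (fun p => (2 : ℤ) • p - sg • ((zv z, 0) : G d)) '' Γ.Nset (fun u => ch (sg * ∑ i ∈ z, u.1 i)) t := by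
    ext p
    simp only [Set.mem_iUnion]
    constructor
    · rintro ⟨h1, h2⟩
      set z : Finset (Fin d) := Finset.univ.filter fun i => p.1 i % 2 = 1 with hz
      have hp : ∃ y : Fin d → ℤ, ∀ i, p.1 i + sg * zv z i = 2 * y i := by
        have : ∀ i, ∃ y, p.1 i + sg * zv z i = 2 * y := by
          intro i
          by_cases hi : p.1 i % 2 = 1
          · have : zv z i = 1 := by simp [zv, hz, hi]
            rw [this]
            exact ⟨(p.1 i + sg * 1) / 2, by rcases hsg with rfl | rfl <;> omega⟩
          · have : zv z i = 0 := by simp [zv, hz, hi]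
            rw [this]
            exact ⟨(p.1 i) / 2, by omega⟩
        choose y hy using this
        exact ⟨y, hy⟩
      obtain ⟨y, hy⟩ := hp
      have ep : p = (2 : ℤ) • ((y, t) : G d) - sg • ((zv z, 0) : G d) := by
        ext i
        · have := hy i
          simp; omega
        · simp [h1]
      refine ⟨z, Finset.mem_univ _, (y, t), ⟨rfl, fun u => ?_⟩, ep.symm⟩
      have h3 := h2 u
      rw [ep, map_sub, map_zsmul, map_zsmul, nz_zv] at h3
      simp only [smul_eq_mul, Pi.zero_apply] at h3
      beta_reduce
      rw [ch_le]; omega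
    · rintro ⟨z, _, q, ⟨h1, h2⟩, rfl⟩
      refine ⟨by simp [h1], fun u => ?_⟩
      have h3 := h2 u
      beta_reduce at h3
      rw [ch_le] at h3
      rw [map_sub, map_zsmul, map_zsmul, nz_zv]
      simp only [smul_eq_mul, Pi.zero_apply]; omega
  have hinj : ∀ z : Finset (Fin d), Function.Injective (fun p : G d => (2 : ℤ) • p - sg • ((zv z, 0) : G d)) := by
    intro z p q h
    have h' := sub_left_injective h
    exact smul_right_injective _ (two_ne_zero) h'
  have hdisj : ((Finset.univ : Finset (Finset (Fin d))) : Set (Finset (Fin d))).PairwiseDisjoint (fun z => (fun p => (2 : ℤ) • p - sg • ((zv z, 0) : G d)) '' Γ.Nset (fun u => ch (sg * ∑ i ∈ z, u.1 i)) t) := by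
    intro z _ z' _ hne
    rw [Function.onFun, Set.disjoint_left]
    rintro _ ⟨p, _, rfl⟩ ⟨q, _, hq⟩
    apply hne
    ext i
    have := congrFun (congrArg Prod.fst hq) i
    simp [zv] at this
    by_cases h1 : i ∈ z <;> by_cases h2 : i ∈ z' <;> simp [h1, h2] at this ⊢ <;>
      rcases hsg with rfl | rfl <;> omega
  have hfin : ∀ z : Finset (Fin d), ((fun p => (2 : ℤ) • p - sg • ((zv z, 0) : G d)) '' Γ.Nset (fun u => ch (sg * ∑ i ∈ z, u.1 i)) t).Finite :=
    fun z => (Γ.Nset_finite _ _).image _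
  unfold N
  rw [e]
  have h1 := Set.ncard_iUnion_of_finite hfin (fun z z' h => hdisj (by simp) (by simp) h)
  simp only [Finset.mem_univ, Set.iUnion_true]
  rw [h1, finsum_eq_sum_of_fintype]
  push_cast
  refine Finset.sum_congr rfl fun z _ => ?_
  rw [Set.ncard_image_of_injective _ (hinj z)]

end Geo
end Gor

namespace Gor
namespace Geo
variable {d : ℕ} (Γ : Geo d)

theorem main_core : ∃ C, As (d-2) (fun t => Γ.N 0 t - 2*Γ.N 0 (t-(d-1:ℕ)) + Γ.N 0 (t-2*(d-1:ℕ))) C ∧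
    As (d-2) (fun t => 16*2^d*Γ.N 0 t - 16*Γ.N 0 (2*t) - 4*2^d*(Γ.N 0 t - Γ.N 0 (t-(d-1:ℕ))))
      (2^d*(C + 1/2*∑ u, ∑ w, Γ.A u w * (kk u.1 w.1 : ℝ))) := by
  classical
  obtain ⟨c, H⟩ := Γ.hyp
  have hq : ∀ u w : Γ.U, ∃ q x : Fin d → ℤ, Γ.A u w ≠ 0 → (∀ i, u.1 i - w.1 i = kk u.1 w.1 * q i) ∧ ∑ i, q i * x i = 1 := by
    intro u w
    by_cases h : Γ.A u w ≠ 0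
    · obtain ⟨q, x, h⟩ := kk_spec (Γ.A_ne h).1
      exact ⟨q, x, fun _ => h⟩
    · exact ⟨0, 0, fun h' => absurd h' h⟩
  choose q x hq using hq
  have htr : ∀ (z : Finset (Fin d)) (sg t : ℤ), Γ.N (fun u => sg * ∑ i ∈ z, u.1 i) t = Γ.N 0 t := by
    intro z sg t
    have := Γ.N_shift 0 t (sg • ((zv z, 0) : G d))
    simp only [map_zsmul, nz_zv, Pi.zero_apply, zero_add, smul_eq_mul, Prod.snd_add, Prod.smul_snd, mul_zero, add_zero] at this
    exact this
  obtain ⟨C, h1, h2⟩ := core H (Z := Finset (Fin d)) (fun z u => ∑ i ∈ z, u.1 i)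
    (fun z t => by simpa using htr z 1 t)
    (fun z t => by
      have := htr z (-1) t
      simp only [neg_mul, one_mul] at this
      exact this)
    (fun t => by simpa using Γ.double 1 (Or.inl rfl) t)
    (fun t => by simpa using Γ.double (-1) (Or.inr rfl) t)
    (fun u => by
      obtain ⟨i, hi⟩ := Γ.u_odd u
      exact odd_avg u.1 i hi)
    (fun z u w => ∑ i ∈ z, q u w i)
    (fun z u w h => by
      rw [Finset.mul_sum, ← Finset.sum_sub_distrib]
      exact Finset.sum_congr rfl fun i _ => (hq u w h).1 i)
    (fun u w h => by
      obtain ⟨i, hi⟩ := exists_odd _ _ (hq u w h).2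
      exact odd_avg (q u w) i hi)
  refine ⟨C, h1, ?_⟩
  have e : (Fintype.card (Finset (Fin d)) : ℝ) = 2 ^ d := by simp
  rw [e] at h2
  exact h2

theorem SP_V : SP Γ.V = ⊤ := by
  apply Submodule.eq_top_of_finrank_eq
  rw [finrank_E]; exact Γ.full

theorem interior_set (μ : Γ.V → ℝ) (hμ : ∀ i, 0 < μ i) (t : ℤ) :
    {p : G d | p.2 = t ∧ phi p ∈ SP Γ.V ∧ ∀ᶠ e in nhdsWithin (0:ℝ) (Set.Ioi 0), phi p - e • (∑ i : Γ.V, μ i • gr i.1) ∈ KC Γ.V} = Γ.Nset (fun _ => 1) t := by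
  have hpos : ∀ u ∈ Γ.U, 0 < Γ.n u (∑ i : Γ.V, μ i • gr i.1) := by
    intro u hu
    rw [map_sum]
    have h0 : ∀ v : Γ.V, 0 ≤ Γ.n u (μ v • gr v.1) := fun v => by
      rw [map_smul]; exact mul_nonneg (hμ v).le (Γ.n_nonneg hu v.2)
    refine lt_of_le_of_ne (Finset.sum_nonneg fun v _ => h0 v) fun hc => ?_
    have h1 := (Finset.sum_eq_zero_iff_of_nonneg fun v _ => h0 v).1 hc.symm
    obtain ⟨l, _, hl⟩ := Γ.mr_mem
    have h2 := Γ.n_mr hu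
    rw [← hl, map_sum, Finset.sum_eq_zero] at h2
    · exact zero_ne_one h2
    · intro v _
      have h3 := h1 v (Finset.mem_univ _)
      rw [map_smul, smul_eq_mul] at h3 ⊢
      rcases mul_eq_zero.1 h3 with h | h
      · exact absurd h (hμ v).ne'
      · rw [h, mul_zero]
  ext p
  simp only [SP_V, Submodule.mem_top, true_and]
  constructor
  · rintro ⟨h1, h2⟩
    refine ⟨h1, fun u => ?_⟩
    obtain ⟨e, he, he2⟩ := (h2.and self_mem_nhdsWithin).exists
    have h3 := Γ.cone_iff.1 he u.1 u.2
    rw [map_sub, map_smul, n_phi, smul_eq_mul] at h3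
    have h4 := mul_pos he2 (hpos u.1 u.2)
    have : (0:ℝ) < Γ.nz u.1 p := by linarith
    have : (0:ℤ) < Γ.nz u.1 p := by exact_mod_cast this
    show (1:ℤ) ≤ _
    omega
  · rintro ⟨h1, h2⟩
    refine ⟨h1, ?_⟩
    have : ∀ u : Γ.U, ∀ᶠ e in nhdsWithin (0:ℝ) (Set.Ioi 0), 0 ≤ Γ.n u.1 (phi p - e • (∑ i : Γ.V, μ i • gr i.1)) := by
      intro u
      apply Filter.Eventually.filter_mono nhdsWithin_le_nhds
      have hc : Continuous fun e : ℝ => Γ.n u.1 (phi p) - e * Γ.n u.1 (∑ i : Γ.V, μ i • gr i.1) := by fun_prop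
      have h3 : (0:ℝ) < Γ.n u.1 (phi p) - 0 * Γ.n u.1 (∑ i : Γ.V, μ i • gr i.1) := by
        rw [n_phi, zero_mul, sub_zero]
        have := h2 u
        beta_reduce at this
        exact_mod_cast (by omega : 0 < Γ.nz u.1 p)
      filter_upwards [hc.continuousAt.eventually (lt_mem_nhds h3)] with e he
      rw [map_sub, map_smul, smul_eq_mul]
      exact he.le
    filter_upwards [eventually_all.2 this] with e he
    rw [cone_iff]
    exact fun u hu => he ⟨u, hu⟩

theorem LP_zero : (LP Γ.V 0).ncard = 1 := by
  rw [Set.ncard_eq_one]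
  refine ⟨0, ?_⟩
  ext p
  simp only [Set.mem_singleton_iff]
  constructor
  · rintro ⟨h1, l, hl, h2⟩
    have h3 := congrArg Prod.snd h2
    rw [Prod.snd_sum] at h3
    have h4 : ∀ v : Γ.V, (l v • gr v.1).2 = l v := fun v => by simp [gr, gen, phi_snd]
    simp only [h4, phi_snd, h1] at h3
    rw [Int.cast_zero, Finset.sum_eq_zero_iff_of_nonneg fun v _ => hl v] at h3
    apply phi_inj
    rw [← h2, map_zero]
    exact Finset.sum_eq_zero fun v hv => by rw [h3 v hv, zero_smul]
  · rintro rfl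
    exact ⟨rfl, 0, fun _ => le_rfl, by simp⟩

theorem shape : ∃ a : ℕ, ∀ t, Γ.N 0 t = (ehr (d+1) (fun j => if j=0 then 1 else if j=1 then a else if j=2 then 1 else 0) t : ℝ) := by
  obtain ⟨h, μ, hμ, H⟩ := ehr_cnt Γ.V
  have hrk : rk Γ.V = d + 1 := Γ.full
  rw [hrk] at H
  refine ⟨h 1, fun t => ?_⟩
  have hN : ∀ t, Γ.N 0 t = (ehr (d+1) h t : ℝ) := fun t => by
    unfold N; rw [Nset_zero, (H t).2.1]
  rw [hN]
  have h0 : ehr (d+1) h 0 = 1 := by rw [← (H 0).2.1, LP_zero]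
  have hI : ∀t, ehr (d+1) (fun j => h (d+1-j)) t = ehr (d+1) h (t-(d-1:ℕ)) := by
    intro t
    rw [← (H t).2.2, Γ.interior_set μ hμ]
    have h1 := Γ.N_diag 0 t
    rw [hN] at h1
    unfold N at h1
    simp only [Pi.zero_apply, zero_add] at h1
    exact_mod_cast h1
  exact_mod_cast h_shape Γ.hd h h0 hI t

theorem main_eq : ∃ a : ℝ, As d (fun t => ((LP Γ.V t).ncard : ℝ)) a ∧
    12 = 1/2*∑ u, ∑ w, Γ.A u w * (kk u.1 w.1 : ℝ) + (((d:ℝ)-1)*(1-((d:ℝ)-1))+2)/2*a := by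
  obtain ⟨a, ha⟩ := Γ.shape
  obtain ⟨C, h1, h2⟩ := Γ.main_core
  have hd := Γ.hd
  refine ⟨a + 2, ?_, final_calc Γ.hd a _ ha C _ h1 h2⟩
  have h3 := ehr_as d (fun j => if j=0 then 1 else if j=1 then a else if j=2 then 1 else 0)
  have e : (∑ j ∈ Finset.range (d+2), (((if j=0 then 1 else if j=1 then a else if j=2 then 1 else 0 : ℕ)) : ℝ)) = a + 2 := by
    obtain ⟨k, rfl⟩ : ∃ k, d = k + 1 := ⟨d - 1, by omega⟩
    rw [Finset.sum_range_succ', Finset.sum_range_succ', Finset.sum_range_succ']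
    rw [Finset.sum_eq_zero]
    · simp; ring
    · intro j _; simp
  rw [← e]
  exact h3.congr fun t => by rw [← ha]; unfold N; rw [Nset_zero]

end Geo
end Gor

namespace Gor
variable {d : ℕ}

/-- hull of a lattice point set -/
def hull (S : Finset (Fin d → ℤ)) : Set (Fin d → ℝ) := convexHull ℝ (coeLat '' (S : Set (Fin d → ℤ)))

theorem mem_hull {S : Finset (Fin d → ℤ)} {x : Fin d → ℝ} : x ∈ hull S ↔ ((x, 1) : E d) ∈ KC S := by
  rw [mem_KC_iff one_pos, one_smul]; rfl

theorem gr_eq (v : Fin d → ℤ) : gr v = (coeLat v, 1) := by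
  ext i
  · rfl
  · simp [gr, gen, phi_snd]

theorem coe_mem_hull {S : Finset (Fin d → ℤ)} {v} (hv : v ∈ S) : coeLat v ∈ hull S :=
  subset_convexHull _ _ ⟨v, hv, rfl⟩

theorem hull_mono {S T : Finset (Fin d → ℤ)} (h : S ⊆ T) : hull S ⊆ hull T := fun x hx =>
  mem_hull.2 (KC_mono h (mem_hull.1 hx))

theorem hull_empty : hull (∅ : Finset (Fin d → ℤ)) = ∅ := by simp [hull]

theorem hull_filter {S T : Finset (Fin d → ℤ)} (f : E d →ₗ[ℝ] ℝ)
    (hf : ∀ v ∈ S, 0 ≤ f (gr v)) (hT : ∀ v, v ∈ T ↔ v ∈ S ∧ f (gr v) = 0) :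
    hull T = {x | x ∈ hull S ∧ f (x, 1) = 0} := by
  ext x
  constructor
  · intro hx
    refine ⟨hull_mono (fun v hv => ((hT v).1 hv).1) hx, ?_⟩
    have h1 := KC_nonneg (mem_hull.1 hx) f fun v hv => (((hT v).1 hv).2).ge
    have h2 := KC_nonneg (mem_hull.1 hx) (-f) fun v hv => by
      rw [LinearMap.neg_apply, ((hT v).1 hv).2, neg_zero]
    rw [LinearMap.neg_apply] at h2
    linarith
  · rintro ⟨hx, h0⟩
    exact mem_hull.2 (KC_filter (mem_hull.1 hx) f hf h0 fun v hv h => (hT v).2 ⟨hv, h⟩)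

theorem dim_rk {S : Finset (Fin d → ℤ)} (hS : S.Nonempty) : dimSet (hull S) + 1 = rk S := by
  obtain ⟨v0, h0⟩ := hS
  have e1 : dimSet (hull S) = Module.finrank ℝ (vectorSpan ℝ (coeLat '' (S : Set (Fin d → ℤ)))) := by
    unfold dimSet hull
    rw [affineSpan_convexHull, direction_affineSpan]
  have e2 := vectorSpan_eq_span_vsub_set_right ℝ (Set.mem_image_of_mem coeLat (Finset.mem_coe.2 h0))
  set W := vectorSpan ℝ (coeLat '' (S : Set (Fin d → ℤ))) with hW
  set W' : Submodule ℝ (E d) := W.map (LinearMap.inl ℝ (Fin d → ℝ) ℝ) with hW'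
  have e3 : Module.finrank ℝ W' = Module.finrank ℝ W :=
    (Submodule.equivMapOfInjective _ LinearMap.inl_injective W).finrank_eq.symm
  have e4 : SP S = W' ⊔ Submodule.span ℝ {gr v0} := by
    apply le_antisymm
    · unfold SP
      rw [Submodule.span_le]
      rintro _ ⟨⟨v, hv⟩, rfl⟩
      have : gr v = LinearMap.inl ℝ (Fin d → ℝ) ℝ (coeLat v - coeLat v0) + gr v0 := by
        simp [gr_eq]
      simp only [SetLike.mem_coe]
      rw [this]
      refine add_mem (Submodule.mem_sup_left ?_) (Submodule.mem_sup_right (Submodule.mem_span_singleton_self _))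
      refine Submodule.mem_map_of_mem ?_
      rw [e2]
      exact Submodule.subset_span ⟨_, ⟨v, hv, rfl⟩, rfl⟩
    · refine sup_le ?_ ?_
      · rw [hW', e2, Submodule.map_span, Submodule.span_le]
        rintro _ ⟨_, ⟨_, ⟨v, hv, rfl⟩, rfl⟩, rfl⟩
        have : LinearMap.inl ℝ (Fin d → ℝ) ℝ (coeLat v - coeLat v0) = gr v - gr v0 := by
          simp [gr_eq]
        simp only [vsub_eq_sub, SetLike.mem_coe]
        rw [this]
        exact sub_mem (Submodule.subset_span ⟨⟨v, hv⟩, rfl⟩) (Submodule.subset_span ⟨⟨v0, h0⟩, rfl⟩)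
      · rw [Submodule.span_singleton_le_iff_mem]
        exact Submodule.subset_span ⟨⟨v0, h0⟩, rfl⟩
  have e5 : W' ⊓ Submodule.span ℝ {gr v0} = ⊥ := by
    rw [eq_bot_iff]
    rintro x ⟨⟨y, _, hy⟩, hx⟩
    obtain ⟨c, rfl⟩ := Submodule.mem_span_singleton.1 hx
    have := congrArg Prod.snd hy
    simp [gr_eq] at this
    rw [← this, zero_smul]; exact zero_mem _
  have e6 := Submodule.finrank_sup_add_finrank_inf_eq W' (Submodule.span ℝ {gr v0})
  rw [e5, finrank_bot, ← e4, finrank_span_singleton (by simp [gr_eq]), e3] at e6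
  rw [e1, rk]; omega

theorem normVol_of_as {S : Finset (Fin d → ℤ)} {k : ℕ} {a : ℝ} (h : As k (fun t => ((LP S t).ncard : ℝ)) a) :
    normVol k (hull S) = a := by
  unfold normVol
  apply Tendsto.limUnder_eq
  refine (Tendsto.comp h tendsto_natCast_atTop_atTop).congr' ?_
  filter_upwards [eventually_gt_atTop 0] with m hm
  have e : LP S m = (fun n : Fin d → ℤ => ((n, (m : ℤ)) : G d)) '' latticePoints ((m : ℝ) • hull S) := by
    ext p
    constructor
    · rintro ⟨h1, h2⟩
      refine ⟨p.1, ?_, by rw [← h1]⟩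
      have : phi p = (coeLat p.1, (m : ℝ)) := by
        ext i
        · rfl
        · rw [phi_snd, h1]; simp
      rw [this, mem_KC_iff (by exact_mod_cast hm)] at h2
      exact h2
    · rintro ⟨n, hn, rfl⟩
      refine ⟨rfl, ?_⟩
      have : phi ((n, (m : ℤ)) : G d) = (coeLat n, (m : ℝ)) := by
        ext i
        · rfl
        · rw [phi_snd]; simp
      rw [this, mem_KC_iff (by exact_mod_cast hm)]
      exact hn
  simp only [Function.comp]
  rw [e, Set.ncard_image_of_injective _ (fun a b h => congrArg Prod.fst h), mul_comm]
  simp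

theorem normVol_segment {u w : Fin d → ℤ} (h : u ≠ w) :
    normVol 1 (segment ℝ (coeLat u) (coeLat w)) = (Geo.kk u w : ℝ) := by
  obtain ⟨q, x, hq, hx⟩ := Geo.kk_spec h
  have hk := Geo.kk_pos u w
  set k := Geo.kk u w with hkd
  have hqr : ∀ i, (u i : ℝ) - w i = k * q i := fun i => by exact_mod_cast hq i
  unfold normVol
  have key : ∀ m : ℕ, 0 < m → (latticePoints ((m : ℝ) • segment ℝ (coeLat u) (coeLat w))).ncard = m * k + 1 := by
    intro m hm
    have hm' : (0:ℝ) < m := by exact_mod_cast hm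
    have hk' : (0:ℝ) < k := by exact_mod_cast hk
    have e : latticePoints ((m : ℝ) • segment ℝ (coeLat u) (coeLat w)) =
        (fun j : ℤ => (m : ℤ) • w + j • q) '' (Finset.Icc (0:ℤ) (m * k) : Finset ℤ) := by
      ext n
      constructor
      · rintro ⟨_, ⟨a, b, ha, hb, hab, rfl⟩, hn⟩
        have hn' : ∀ i, (n i : ℝ) - m * w i = (m * a * k) * q i := by
          intro i
          have := congrFun hn i
          simp only [Pi.smul_apply, Pi.add_apply, smul_eq_mul, coeLat] at this
          rw [← this, mul_assoc, ← hqr]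
          have : b = 1 - a := by linarith
          rw [this]; ring
        set j : ℤ := ∑ i, (n i - m * w i) * x i with hj
        have hj' : (j : ℝ) = m * a * k := by
          rw [hj]; push_cast
          simp only [hn', mul_assoc]
          have : (∑ i, (q i : ℝ) * x i) = 1 := by exact_mod_cast hx
          rw [← Finset.mul_sum, ← Finset.mul_sum, ← Finset.mul_sum, this, mul_one]
        refine ⟨j, ?_, ?_⟩
        · rw [Finset.mem_coe, Finset.mem_Icc]
          constructor
          · have : (0:ℝ) ≤ j := by rw [hj']; positivity
            exact_mod_cast this
          · have : (j:ℝ) ≤ m * k := by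
              rw [hj']
              have : a ≤ 1 := by linarith
              nlinarith [mul_pos hm' hk']
            exact_mod_cast this
        · ext i
          have := hn' i
          rw [← hj'] at this
          simp only [Pi.add_apply, Pi.smul_apply, smul_eq_mul]
          have h2 : ((n i - m * w i : ℤ) : ℝ) = ((j * q i : ℤ) : ℝ) := by push_cast; exact this
          have h3 : n i - m * w i = j * q i := by exact_mod_cast h2
          omega
      · rintro ⟨j, hj, rfl⟩
        rw [Finset.mem_coe, Finset.mem_Icc] at hj
        have j0 : (0:ℝ) ≤ j := by exact_mod_cast hj.1
        have j1 : (j:ℝ) ≤ m * k := by exact_mod_cast hj.2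
        have hmk : (0:ℝ) < m * k := mul_pos hm' hk'
        refine ⟨_, ⟨j / (m * k), 1 - j / (m * k), by positivity, ?_, by ring, rfl⟩, ?_⟩
        · rw [sub_nonneg, div_le_one hmk]; exact j1
        · ext i
          simp only [Pi.smul_apply, Pi.add_apply, smul_eq_mul, coeLat]
          have : (u i : ℝ) = w i + k * q i := by linarith [hqr i]
          rw [this]; push_cast
          field_simp
          ring
    rw [e, Set.ncard_image_of_injective, Set.ncard_coe_finset, Int.card_Icc]
    · have : 0 ≤ (m:ℤ) * k := by positivity
      omega
    · intro a b hab
      have h2 : a • q = b • q := add_left_cancel hab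
      have h3 : ∑ i, (a • q) i * x i = ∑ i, (b • q) i * x i := by rw [h2]
      simp only [Pi.smul_apply, smul_eq_mul, mul_assoc] at h3
      rw [← Finset.mul_sum, ← Finset.mul_sum, hx] at h3
      linarith
  apply Tendsto.limUnder_eq
  have hl : Tendsto (fun m : ℕ => (k : ℝ) + 1 / (m : ℝ)) atTop (nhds (k + 0)) :=
    tendsto_const_nhds.add tendsto_one_div_atTop_nhds_zero_nat
  rw [add_zero] at hl
  refine hl.congr' ?_
  filter_upwards [eventually_gt_atTop 0] with m hm
  have hm' : (m:ℝ) ≠ 0 := by exact_mod_cast hm.ne'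
  have h1 : ((latticePoints ((m : ℝ) • segment ℝ (coeLat u) (coeLat w))).ncard : ℝ) = m * k + 1 := by
    exact_mod_cast key m hm
  rw [h1]
  simp
  field_simp

end Gor

namespace Gor
namespace Geo
variable {d : ℕ} (Γ : Geo d)

theorem V2_filter {u w : Fin d → ℤ} (hu : u ∈ Γ.U) (hw : w ∈ Γ.U) :
    hull (Γ.V2 u w) = {x | x ∈ hull Γ.V ∧ (Γ.n u + Γ.n w) (x, 1) = 0} := by
  apply hull_filter
  · intro v hv
    exact add_nonneg (Γ.n_nonneg hu hv) (Γ.n_nonneg hw hv)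
  · intro v
    rw [mem_V2]
    refine and_congr_right fun hv => ?_
    rw [LinearMap.add_apply, add_eq_zero_iff_of_nonneg (Γ.n_nonneg hu hv) (Γ.n_nonneg hw hv), n_gr, n_gr,
      Int.cast_eq_zero, Int.cast_eq_zero]

theorem V2_zero {u w : Fin d → ℤ} {x : Fin d → ℝ} (hx : x ∈ hull (Γ.V2 u w)) : Γ.n u (x, 1) = 0 := by
  refine SP_zero (S := Γ.V2 u w) (Γ.n u) (fun v hv => ?_) ?_
  · rw [n_gr, (Γ.mem_V2.1 hv).2.1]; simp
  · obtain ⟨l, _, hl⟩ := mem_hull.1 hx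
    rw [← hl]
    exact Submodule.sum_mem _ fun i _ => Submodule.smul_mem _ _ (Submodule.subset_span ⟨i, rfl⟩)

theorem V2_zero' {u w : Fin d → ℤ} {x : Fin d → ℝ} (hx : x ∈ hull (Γ.V2 u w)) : Γ.n w (x, 1) = 0 := by
  rw [V2_comm] at hx; exact Γ.V2_zero hx

theorem face_of_adj {u w : Fin d → ℤ} (hu : u ∈ Γ.U) (hw : w ∈ Γ.U) (h : Γ.Adj u w) :
    IsFaceOfDim (hull Γ.V) (d - 2) (hull (Γ.V2 u w)) := by
  obtain ⟨v0, hv0⟩ := h.nonempty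
  refine ⟨fun _ => ?_, ⟨_, coe_mem_hull hv0⟩, ?_⟩
  · set f := Γ.n u + Γ.n w with hf
    refine ⟨LinearMap.toContinuousLinearMap (-(f ∘ₗ LinearMap.inl ℝ (Fin d → ℝ) ℝ)), ?_⟩
    have hl : ∀ x : Fin d → ℝ, LinearMap.toContinuousLinearMap (-(f ∘ₗ LinearMap.inl ℝ (Fin d → ℝ) ℝ)) x = f (0, 1) - f (x, 1) := by
      intro x
      rw [← map_sub]
      simp only [LinearMap.coe_toContinuousLinearMap', LinearMap.neg_apply, LinearMap.comp_apply, LinearMap.inl_apply, ← map_neg]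
      congr 1
      ext <;> simp
    have hpos : ∀ x ∈ hull Γ.V, 0 ≤ f (x, 1) := fun x hx =>
      KC_nonneg (mem_hull.1 hx) f fun v hv => add_nonneg (Γ.n_nonneg hu hv) (Γ.n_nonneg hw hv)
    rw [Γ.V2_filter hu hw]
    have hv0' := coe_mem_hull hv0
    rw [Γ.V2_filter hu hw] at hv0'
    ext x
    simp only [hl]
    constructor
    · rintro ⟨h1, h2⟩
      refine ⟨h1, fun y hy => ?_⟩
      have := hpos y hy
      rw [h2]; linarith
    · rintro ⟨h1, h2⟩
      refine ⟨h1, ?_⟩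
      have a1 := h2 _ hv0'.1
      have a2 := hpos x h1
      have a3 := hv0'.2
      linarith
  · have h1 := dim_rk ⟨v0, hv0⟩
    have h2 := h.2
    have := Γ.hd
    omega

theorem adj_of_face {θ : Set (Fin d → ℝ)} (h : IsFaceOfDim (hull Γ.V) (d - 2) θ) :
    ∃ u w, u ∈ Γ.U ∧ w ∈ Γ.U ∧ Γ.Adj u w ∧ θ = hull (Γ.V2 u w) := by
  classical
  obtain ⟨he, hne, hdim⟩ := h
  have hd := Γ.hd
  obtain ⟨l, hl⟩ := he hne
  obtain ⟨x0, hx0⟩ := hne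
  set f : E d →ₗ[ℝ] ℝ := l x0 • LinearMap.snd ℝ (Fin d → ℝ) ℝ - l.toLinearMap ∘ₗ LinearMap.fst ℝ (Fin d → ℝ) ℝ with hf
  have hfx : ∀ x, f (x, 1) = l x0 - l x := fun x => by simp [hf]
  have hx0' := hx0
  rw [hl] at hx0'
  have hpos : ∀ v ∈ Γ.V, 0 ≤ f (gr v) := fun v hv => by
    rw [gr_eq, hfx]
    have := hx0'.2 _ (coe_mem_hull hv)
    linarith
  set T := Γ.V.filter (fun v => f (gr v) = 0) with hT
  have hTm : ∀ v, v ∈ T ↔ v ∈ Γ.V ∧ f (gr v) = 0 := fun v => by rw [hT, Finset.mem_filter]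
  have hθ : θ = hull T := by
    rw [hull_filter f hpos hTm]
    ext x
    simp only [hfx]
    rw [hl]
    constructor
    · rintro ⟨h1, h2⟩
      refine ⟨h1, ?_⟩
      have a1 := h2 _ hx0'.1
      have a2 := hx0'.2 _ h1
      linarith
    · rintro ⟨h1, h2⟩
      refine ⟨h1, fun y hy => ?_⟩
      have a2 := hx0'.2 _ hy
      linarith
  have hTne : T.Nonempty := by
    by_contra hc
    rw [Finset.not_nonempty_iff_eq_empty] at hc
    rw [hθ, hc, hull_empty] at hx0
    exact hx0
  have hrk := dim_rk hTne
  rw [← hθ, hdim] at hrk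
  have hrk' : rk T = d - 1 := by omega
  obtain ⟨a, ha, hfa⟩ := Γ.dual' f hpos
  have hTz : ∀ v, v ∈ T ↔ v ∈ Γ.V ∧ ∀ u : Γ.U, a u ≠ 0 → Γ.nz u.1 (gen v) = 0 := by
    intro v
    rw [hTm]
    refine and_congr_right fun hv => ?_
    rw [hfa, Finset.sum_eq_zero_iff_of_nonneg fun u _ => mul_nonneg (ha u) (Γ.n_nonneg u.2 hv)]
    refine forall_congr' fun u => ?_
    simp only [Finset.mem_univ, true_implies, mul_eq_zero, n_gr, Int.cast_eq_zero]
    tauto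
  by_cases hu : ∃ u, a u ≠ 0
  swap
  · exfalso
    push Not at hu
    have : T = Γ.V := by
      ext v; rw [hTz]
      exact ⟨fun h => h.1, fun h => ⟨h, fun u hu' => absurd (hu u) hu'⟩⟩
    rw [this, Γ.full] at hrk'
    omega
  obtain ⟨u, hu⟩ := hu
  by_cases hw : ∃ w, w ≠ u ∧ a w ≠ 0
  swap
  · exfalso
    push Not at hw
    have : T = Γ.V2 u.1 u.1 := by
      ext v; rw [hTz, mem_V2]
      refine ⟨fun h => ⟨h.1, h.2 u hu, h.2 u hu⟩, fun h => ⟨h.1, fun x hx => ?_⟩⟩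
      by_cases hxu : x = u
      · rw [hxu]; exact h.2.1
      · exact absurd (hw x hxu) hx
    rw [this, Γ.rk_facet u.2] at hrk'
    omega
  obtain ⟨w, hwu, hw⟩ := hw
  have hwu' : u.1 ≠ w.1 := fun h => hwu (Subtype.ext h.symm)
  have : T = Γ.V2 u.1 w.1 := by
    ext v; rw [hTz, mem_V2]
    refine ⟨fun h => ⟨h.1, h.2 u hu, h.2 w hw⟩, fun h => ⟨h.1, fun x hx => ?_⟩⟩
    by_cases hxu : x = u
    · rw [hxu]; exact h.2.1
    by_cases hxw : x = w
    · rw [hxw]; exact h.2.2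
    exfalso
    exact Γ.triple u.2 w.2 x.2 hwu' (fun h => hxu (Subtype.ext h.symm)) (fun h => hxw (Subtype.ext h.symm)) T hrk'.ge
      (fun v hv => ((hTz v).1 hv).2 u hu) (fun v hv => ((hTz v).1 hv).2 w hw) (fun v hv => ((hTz v).1 hv).2 x hx)
  refine ⟨u.1, w.1, u.2, w.2, ⟨hwu', ?_⟩, by rw [hθ, this]⟩
  rw [← this, hrk']

theorem adj_zero {u w x : Fin d → ℤ} (hu : u ∈ Γ.U) (hw : w ∈ Γ.U) (hx : x ∈ Γ.U) (h : Γ.Adj u w)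
    (hz : ∀ v ∈ Γ.V2 u w, Γ.nz x (gen v) = 0) : x = u ∨ x = w := by
  by_contra hc
  push Not at hc
  exact Γ.triple hu hw hx h.1 hc.1.symm hc.2.symm (Γ.V2 u w) h.2.ge
    (fun v hv => (Γ.mem_V2.1 hv).2.1) (fun v hv => (Γ.mem_V2.1 hv).2.2) hz

theorem adj_inj {u w x y : Fin d → ℤ} (hu : u ∈ Γ.U) (hw : w ∈ Γ.U) (hx : x ∈ Γ.U) (hy : y ∈ Γ.U)
    (h : Γ.Adj u w) (h' : Γ.Adj x y) (he : hull (Γ.V2 u w) = hull (Γ.V2 x y)) :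
    (x = u ∧ y = w) ∨ (x = w ∧ y = u) := by
  have h1 := Γ.adj_zero hu hw hx h fun v hv => by
    have a := coe_mem_hull hv
    rw [he] at a
    have := Γ.V2_zero a
    rw [← gr_eq, n_gr] at this
    exact_mod_cast this
  have h2 := Γ.adj_zero hu hw hy h fun v hv => by
    have a := coe_mem_hull hv
    rw [he] at a
    have := Γ.V2_zero' a
    rw [← gr_eq, n_gr] at this
    exact_mod_cast this
  have h3 := h'.1
  rcases h1 with rfl | rfl <;> rcases h2 with rfl | rfl
  · exact absurd rfl h3
  · exact Or.inl ⟨rfl, rfl⟩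
  · exact Or.inr ⟨rfl, rfl⟩
  · exact absurd rfl h3

/-- affine normalisation -/
def af (x : Fin d → ℝ) : Fin d → ℝ := ((d - 1 : ℕ) : ℝ) • x - coeLat Γ.m

theorem pair_af {u : Fin d → ℤ} (hu : u ∈ Γ.U) (x : Fin d → ℝ) :
    ∑ i, coeLat u i * Γ.af x i = ((d - 1 : ℕ) : ℝ) * Γ.n u (x, 1) - 1 := by
  have h : (∑ i, (u i : ℝ) * Γ.m i) - ((d - 1 : ℕ) : ℝ) * Γ.c u = 1 := by exact_mod_cast Γ.hm u hu
  simp only [af, n, fn_apply, Pi.sub_apply, Pi.smul_apply, smul_eq_mul, mul_sub, Finset.sum_sub_distrib, coeLat]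
  rw [Finset.mul_sum]
  have : ∑ i, (u i : ℝ) * (((d - 1 : ℕ) : ℝ) * x i) = ∑ i, ((d - 1 : ℕ) : ℝ) * (u i * x i) :=
    Finset.sum_congr rfl fun i _ => by ring
  rw [this]
  linarith

theorem dual_face {P : Set (Fin d → ℝ)} (hP : polarDual P = hull Γ.U) {u w : Fin d → ℤ} (hu : u ∈ Γ.U) (hw : w ∈ Γ.U)
    (h : Γ.Adj u w) : dualFace P (Γ.af '' hull (Γ.V2 u w)) = segment ℝ (coeLat u) (coeLat w) := by
  classical
  have hd := Γ.hd
  have hr : (0:ℝ) < ((d - 1 : ℕ) : ℝ) := by exact_mod_cast (by omega : 0 < d - 1)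
  ext y
  unfold dualFace
  rw [hP]
  constructor
  · rintro ⟨h1, h2⟩
    obtain ⟨a, ha, hy⟩ := mem_hull.1 h1
    have hs : ∑ z, a z = 1 := by
      have := congrArg Prod.snd hy
      rw [Prod.snd_sum] at this
      simpa [gr_eq] using this
    have hy1 : y = ∑ z, a z • coeLat z.1 := by
      have := congrArg Prod.fst hy
      rw [Prod.fst_sum] at this
      simpa [gr_eq] using this.symm
    have hzero : ∀ z : Γ.U, a z ≠ 0 → z.1 = u ∨ z.1 = w := by
      intro z hz
      refine Γ.adj_zero hu hw z.2 h fun v hv => ?_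
      have h3 := h2 _ ⟨_, coe_mem_hull hv, rfl⟩
      have h4 : ∑ i, y i * Γ.af (coeLat v) i = ∑ z, a z * (((d - 1 : ℕ) : ℝ) * Γ.n z.1 (coeLat v, 1) - 1) := by
        have : ∀ z : Γ.U, a z * (((d - 1 : ℕ) : ℝ) * Γ.n z.1 (coeLat v, 1) - 1) = ∑ i, a z * (coeLat z.1 i * Γ.af (coeLat v) i) := by
          intro z
          rw [← pair_af _ z.2, Finset.mul_sum]
        simp only [this]
        rw [Finset.sum_comm]
        refine Finset.sum_congr rfl fun i _ => ?_
        rw [hy1, Finset.sum_apply, Finset.sum_mul]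
        refine Finset.sum_congr rfl fun z _ => ?_
        simp [mul_assoc]
      rw [h3] at h4
      simp only [mul_sub, Finset.sum_sub_distrib, mul_one, hs] at h4
      have h5 : ∑ z, a z * (((d - 1 : ℕ) : ℝ) * Γ.n z.1 (coeLat v, 1)) = 0 := by linarith
      have hvV := (Γ.mem_V2.1 hv).1
      rw [Finset.sum_eq_zero_iff_of_nonneg] at h5
      · have h6 := h5 z (Finset.mem_univ _)
        rw [← gr_eq, n_gr] at h6
        rcases mul_eq_zero.1 h6 with h6 | h6
        · exact absurd h6 hz
        · rcases mul_eq_zero.1 h6 with h6 | h6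
          · exact absurd h6 hr.ne'
          · exact_mod_cast h6
      · intro z _
        rw [← gr_eq]
        exact mul_nonneg (ha z) (mul_nonneg hr.le (Γ.n_nonneg z.2 hvV))
    have hne : (⟨u, hu⟩ : Γ.U) ≠ ⟨w, hw⟩ := fun hc => h.1 (congrArg Subtype.val hc)
    have hsupp : ∀ z : Γ.U, z ∉ ({⟨u, hu⟩, ⟨w, hw⟩} : Finset Γ.U) → a z = 0 := by
      intro z hz
      by_contra hc
      simp only [Finset.mem_insert, Finset.mem_singleton, not_or] at hz
      rcases hzero z hc with h | h
      · exact hz.1 (Subtype.ext h)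
      · exact hz.2 (Subtype.ext h)
    refine ⟨a ⟨u, hu⟩, a ⟨w, hw⟩, ha _, ha _, ?_, ?_⟩
    · rw [← hs, ← Finset.sum_subset (Finset.subset_univ _) fun z _ hz => hsupp z hz, Finset.sum_pair hne]
    · rw [hy1, ← Finset.sum_subset (Finset.subset_univ _) fun z _ hz => by rw [hsupp z hz, zero_smul], Finset.sum_pair hne]
  · rintro ⟨a, b, ha, hb, hab, rfl⟩
    refine ⟨(convex_convexHull ℝ _) (coe_mem_hull hu) (coe_mem_hull hw) ha hb hab, ?_⟩
    rintro _ ⟨x, hx, rfl⟩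
    have h1 := Γ.pair_af hu x
    have h2 := Γ.pair_af hw x
    rw [Γ.V2_zero hx] at h1
    rw [Γ.V2_zero' hx] at h2
    have : ∑ i, (a • coeLat u + b • coeLat w) i * Γ.af x i = a * ∑ i, coeLat u i * Γ.af x i + b * ∑ i, coeLat w i * Γ.af x i := by
      rw [Finset.mul_sum, Finset.mul_sum, ← Finset.sum_add_distrib]
      exact Finset.sum_congr rfl fun i _ => by simp; ring
    rw [this, h1, h2]
    linarith

theorem final {P : Set (Fin d → ℝ)} (hP : polarDual P = hull Γ.U) :
    (12:ℝ) = (∑ᶠ θ ∈ {θ | IsFaceOfDim (hull Γ.V) (d - 2) θ}, normVol (d - 2) θ * normVol 1 (dualFace P (Γ.af '' θ))) +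
      (((d:ℝ)-1)*(1-((d:ℝ)-1))+2)/2*normVol d (hull Γ.V) := by
  classical
  obtain ⟨a, ha, h12⟩ := Γ.main_eq
  rw [normVol_of_as ha]
  rw [h12]
  congr 1
  set I : Finset (Γ.U × Γ.U) := Finset.univ.filter fun p => Γ.Adj p.1.1 p.2.1 with hI
  set g : Γ.U × Γ.U → Set (Fin d → ℝ) := fun p => hull (Γ.V2 p.1.1 p.2.1) with hg
  set F : Set (Fin d → ℝ) → ℝ := fun θ => normVol (d - 2) θ * normVol 1 (dualFace P (Γ.af '' θ)) with hF
  have hset : {θ | IsFaceOfDim (hull Γ.V) (d - 2) θ} = ((I.image g : Finset (Set (Fin d → ℝ))) : Set (Set (Fin d → ℝ))) := by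
    ext θ
    simp only [Finset.coe_image, Set.mem_image, Finset.mem_coe, hI, Finset.mem_filter, Finset.mem_univ, true_and]
    constructor
    · intro h
      obtain ⟨u, w, hu, hw, h1, h2⟩ := Γ.adj_of_face h
      exact ⟨(⟨u, hu⟩, ⟨w, hw⟩), h1, h2.symm⟩
    · rintro ⟨p, h1, rfl⟩
      exact Γ.face_of_adj p.1.2 p.2.2 h1
  have hFp : ∀ p ∈ I, F (g p) = Γ.A p.1 p.2 * (kk p.1.1 p.2.1 : ℝ) := by
    intro p hp
    have h1 : Γ.Adj p.1.1 p.2.1 := by simpa [hI] using hp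
    simp only [hF, hg]
    rw [Γ.dual_face hP p.1.2 p.2.2 h1, normVol_segment h1.1, normVol_of_as (Γ.A_as h1)]
  have hs1 : ∑ u, ∑ w, Γ.A u w * (kk u.1 w.1 : ℝ) = ∑ p ∈ I, F (g p) := by
    rw [Finset.sum_congr rfl hFp, hI, Finset.sum_filter, ← Finset.univ_product_univ, Finset.sum_product]
    refine Finset.sum_congr rfl fun u _ => Finset.sum_congr rfl fun w _ => ?_
    by_cases h : Γ.Adj u.1 w.1
    · rw [if_pos h]
    · rw [if_neg h, A, if_neg h, zero_mul]
  rw [hset, finsum_mem_coe_finset, hs1, ← Finset.sum_fiberwise_of_maps_to (t := I.image g) (g := g) (fun p hp => Finset.mem_image_of_mem g hp), Finset.mul_sum]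
  refine Finset.sum_congr rfl fun θ hθ => ?_
  obtain ⟨p, hp, rfl⟩ := Finset.mem_image.1 hθ
  have h1 : Γ.Adj p.1.1 p.2.1 := by simpa [hI] using hp
  have hfib : I.filter (fun q => g q = g p) = {p, (p.2, p.1)} := by
    ext q
    simp only [hI, Finset.mem_filter, Finset.mem_univ, true_and, Finset.mem_insert, Finset.mem_singleton]
    constructor
    · rintro ⟨h2, h3⟩
      rcases Γ.adj_inj p.1.2 p.2.2 q.1.2 q.2.2 h1 h2 h3.symm with ⟨a, b⟩ | ⟨a, b⟩
      · exact Or.inl (Prod.ext (Subtype.ext a) (Subtype.ext b))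
      · exact Or.inr (Prod.ext (Subtype.ext a) (Subtype.ext b))
    · rintro (rfl | rfl)
      · exact ⟨h1, rfl⟩
      · exact ⟨h1.symm, by simp only [hg]; rw [V2_comm]⟩
  have hsw : g (p.2, p.1) = g p := by simp only [hg]; rw [V2_comm]
  rw [hfib, Finset.sum_pair, hsw]
  · ring
  · intro hc
    exact h1.1 (congrArg (fun q => q.1.1) hc)

end Geo
end Gor

namespace Gor
variable {d : ℕ}

theorem fn_dot (y : Fin d → ℝ) (b : ℝ) (x : Fin d → ℝ) (t : ℝ) : fn y b (x, t) = y ⬝ᵥ x - t * b := rfl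

theorem coe_dot (u v : Fin d → ℤ) : coeLat u ⬝ᵥ coeLat v = ((∑ i, u i * v i : ℤ) : ℝ) := by
  simp [dotProduct, coeLat]

theorem mem_polar {r : ℝ} {V : Finset (Fin d → ℤ)} {m : Fin d → ℝ} {y : Fin d → ℝ} :
    y ∈ polarDual ((fun x => r • x - m) '' hull V) ↔ ∀ v ∈ V, 0 ≤ r * (y ⬝ᵥ coeLat v) - y ⬝ᵥ m + 1 := by
  have key : ∀ x, r * (y ⬝ᵥ x) - y ⬝ᵥ m + 1 = fn (r • y) (y ⬝ᵥ m - 1) (x, 1) := fun x => by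
    rw [fn_dot, smul_dotProduct, smul_eq_mul]; ring
  have key2 : ∀ x, y ⬝ᵥ (r • x - m) = r * (y ⬝ᵥ x) - y ⬝ᵥ m := fun x => by
    rw [dotProduct_sub, dotProduct_smul, smul_eq_mul]
  constructor
  · intro h v hv
    have h1 : -1 ≤ y ⬝ᵥ (r • coeLat v - m) := h _ ⟨_, coe_mem_hull hv, rfl⟩
    rw [key2] at h1
    linarith
  · rintro h _ ⟨x, hx, rfl⟩
    show -1 ≤ y ⬝ᵥ (r • x - m)
    have := KC_nonneg (mem_hull.1 hx) (fn (r • y) (y ⬝ᵥ m - 1)) fun v hv => by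
      rw [gr_eq, ← key]; exact h v hv
    rw [← key] at this
    rw [key2]; linarith

theorem exists_geo (hd : 3 ≤ d) (V : Finset (Fin d → ℤ)) (hdim : dimSet (hull V) = d) (m : Fin d → ℤ)
    (P : Set (Fin d → ℝ)) (hP : P = (fun x => ((d - 1 : ℕ) : ℝ) • x - coeLat m) '' hull V)
    (h0 : (0 : Fin d → ℝ) ∈ interior P) (hQ : IsLatticePolytope (polarDual P)) :
    ∃ Γ : Geo d, Γ.V = V ∧ Γ.m = m ∧ polarDual P = hull Γ.U := by
  classical
  obtain ⟨W, hW⟩ := hQ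
  set r : ℝ := ((d - 1 : ℕ) : ℝ) with hr
  have hr0 : 0 < r := by rw [hr]; exact_mod_cast (by omega : 0 < d - 1)
  set Q := polarDual P with hQd
  have memQ : ∀ y, y ∈ Q ↔ ∀ v ∈ V, 0 ≤ r * (y ⬝ᵥ coeLat v) - y ⬝ᵥ coeLat m + 1 := fun y => by
    rw [hQd, hP]; exact mem_polar
  set U := W.filter (fun u => coeLat u ∈ Set.extremePoints ℝ Q) with hU
  have hfin : (coeLat '' (W : Set (Fin d → ℤ))).Finite := W.finite_toSet.image _
  have hext : Set.extremePoints ℝ Q = coeLat '' (U : Set (Fin d → ℤ)) := by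
    ext y
    constructor
    · intro hy
      have : y ∈ coeLat '' (W : Set (Fin d → ℤ)) := by
        have h1 := hy
        rw [hW] at h1
        exact extremePoints_convexHull_subset h1
      obtain ⟨u, hu, rfl⟩ := this
      exact ⟨u, by simp only [hU, Finset.coe_filter, Set.mem_ofPred_eq]; exact ⟨hu, hy⟩, rfl⟩
    · rintro ⟨u, hu, rfl⟩
      exact (Finset.mem_filter.1 (Finset.mem_coe.1 hu)).2
  have hQU : Q = hull U := by
    have hc : IsCompact Q := by rw [hW]; exact hfin.isCompact_convexHull ℝ
    have hcv : Convex ℝ Q := by rw [hW]; exact convex_convexHull ℝ _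
    have := closure_convexHull_extremePoints hc hcv
    rw [hext, ((U.finite_toSet.image _).isClosed_convexHull ℝ).closure_eq] at this
    exact this.symm
  have hUext : ∀ u ∈ U, coeLat u ∈ Set.extremePoints ℝ Q := fun u hu => (Finset.mem_filter.1 hu).2
  have hUQ : ∀ u ∈ U, coeLat u ∈ Q := fun u hu => (hUext u hu).1
  -- extremality
  have hextr : ∀ u ∈ U, ∀ y, coeLat u + y ∈ Q → coeLat u - y ∈ Q → y = 0 := by
    intro u hu y h1 h2
    have := (mem_extremePoints.1 (hUext u hu)).2 _ h1 _ h2 (by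
      refine ⟨1/2, 1/2, by norm_num, by norm_num, by norm_num, ?_⟩
      ext i; simp; ring)
    simpa using this.1
  have hintpos : ∀ u ∈ U, ∀ v ∈ V, 0 ≤ ((d - 1 : ℕ) : ℤ) * (∑ i, u i * v i) - ∑ i, u i * m i + 1 := by
    intro u hu v hv
    have := (memQ _).1 (hUQ u hu) v hv
    rw [coe_dot, coe_dot, hr] at this
    exact_mod_cast this
  have hVne : V.Nonempty := by
    by_contra hc
    rw [Finset.not_nonempty_iff_eq_empty] at hc
    have := interior_subset h0
    rw [hP, hc, hull_empty] at this
    simpa using this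
  have htight : ∀ u ∈ U, ∃ v ∈ V, ((d - 1 : ℕ) : ℤ) * (∑ i, u i * v i) - ∑ i, u i * m i + 1 = 0 := by
    intro u hu
    by_contra hc
    push Not at hc
    have h1 : ∀ v ∈ V, 1 ≤ ((d - 1 : ℕ) : ℤ) * (∑ i, u i * v i) - ∑ i, u i * m i + 1 := fun v hv => by
      have a1 := hintpos u hu v hv
      have a2 := hc v hv
      omega
    set y0 : Fin d → ℝ := Pi.single ⟨0, by omega⟩ 1 with hy0
    set B : ℝ := 1 + ∑ v ∈ V, |r * (y0 ⬝ᵥ coeLat v) - y0 ⬝ᵥ coeLat m| with hB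
    have hB0 : 0 < B := by
      have : 0 ≤ ∑ v ∈ V, |r * (y0 ⬝ᵥ coeLat v) - y0 ⬝ᵥ coeLat m| := Finset.sum_nonneg fun _ _ => abs_nonneg _
      linarith
    have hBv : ∀ v ∈ V, |B⁻¹ * (r * (y0 ⬝ᵥ coeLat v) - y0 ⬝ᵥ coeLat m)| ≤ 1 := by
      intro v hv
      have := Finset.single_le_sum (f := fun v : Fin d → ℤ => |r * (y0 ⬝ᵥ coeLat v) - y0 ⬝ᵥ coeLat m|) (fun i _ => abs_nonneg _) hv
      rw [abs_mul, abs_of_pos (inv_pos.2 hB0), inv_mul_le_one₀ hB0]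
      beta_reduce at this
      linarith
    have hreal : ∀ v ∈ V, 1 ≤ r * (coeLat u ⬝ᵥ coeLat v) - coeLat u ⬝ᵥ coeLat m + 1 := by
      intro v hv
      rw [coe_dot, coe_dot, hr]
      exact_mod_cast h1 v hv
    have h2 := hextr u hu (B⁻¹ • y0) (by
      rw [memQ]
      intro v hv
      have a1 := hreal v hv
      have a2 := abs_le.1 (hBv v hv)
      rw [add_dotProduct, add_dotProduct, smul_dotProduct, smul_dotProduct, smul_eq_mul, smul_eq_mul]
      linarith [a2.1]) (by
      rw [memQ]
      intro v hv
      have a1 := hreal v hv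
      have a2 := abs_le.1 (hBv v hv)
      rw [sub_dotProduct, sub_dotProduct, smul_dotProduct, smul_dotProduct, smul_eq_mul, smul_eq_mul]
      linarith [a2.2])
    have h3 := congrFun h2 ⟨0, by omega⟩
    simp [hy0] at h3
    exact hB0.ne' h3
  set c : (Fin d → ℤ) → ℤ := fun u => (∑ i, u i * m i - 1) / ((d - 1 : ℕ) : ℤ) with hc
  have hcm : ∀ u ∈ U, ((d - 1 : ℕ) : ℤ) * c u = ∑ i, u i * m i - 1 := by
    intro u hu
    obtain ⟨v, _, hv⟩ := htight u hu
    exact Int.mul_ediv_cancel' ⟨∑ i, u i * v i, by linarith⟩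
  have hcr : ∀ u ∈ U, r * (c u : ℝ) = coeLat u ⬝ᵥ coeLat m - 1 := by
    intro u hu
    rw [coe_dot, hr]
    exact_mod_cast hcm u hu
  have hnn : ∀ u ∈ U, ∀ v, r * fn (coeLat u) (c u) (gr v) = r * (coeLat u ⬝ᵥ coeLat v) - coeLat u ⬝ᵥ coeLat m + 1 := by
    intro u hu v
    rw [gr_eq, fn_dot, one_mul, mul_sub, hcr u hu]; ring
  have hdr : (1 : ℤ) ≤ ((d - 1 : ℕ) : ℤ) := by omega
  have hphim : phi (m, ((d - 1 : ℕ) : ℤ)) = (coeLat m, r) := by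
    ext i
    · rfl
    · rw [phi_snd, hr]; simp
  refine ⟨{ V := V, U := U, m := m, c := c, hd := hd, hm := ?_, hpos := ?_, full := ?_, dual := ?_, ext := ?_ }, rfl, rfl, hQU⟩
  · intro u hu
    have := hcm u hu
    linarith
  · intro u hu v hv
    have h1 := hintpos u hu v hv
    have h2 := hcm u hu
    have h3 : 0 ≤ ((d - 1 : ℕ) : ℤ) * (∑ i, u i * v i - c u) := by rw [mul_sub]; linarith
    exact nonneg_of_mul_nonneg_right h3 (by omega)
  · rw [← dim_rk hVne, hdim]
  · intro f hf
    obtain ⟨y, b, rfl⟩ := exists_fn f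
    have hyP : ∀ x ∈ P, -(y ⬝ᵥ coeLat m - r * b) ≤ y ⬝ᵥ x := by
      rw [hP]
      rintro _ ⟨x, hx, rfl⟩
      have := KC_nonneg (mem_hull.1 hx) _ hf
      rw [fn_dot, one_mul] at this
      beta_reduce
      rw [dotProduct_sub, dotProduct_smul, smul_eq_mul]
      nlinarith
    set ρ := y ⬝ᵥ coeLat m - r * b with hρ
    have hρ0 : 0 ≤ ρ := by
      have := hyP 0 (interior_subset h0)
      rw [dotProduct_zero] at this; linarith
    rcases hρ0.eq_or_lt with h | h
    · have hy0 : y = 0 := by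
        have hcont : Continuous fun e : ℝ => (-e) • y := by fun_prop
        have h1 : ∀ᶠ e in nhdsWithin (0:ℝ) (Set.Ioi 0), (-e) • y ∈ P := by
          apply Filter.Eventually.filter_mono nhdsWithin_le_nhds
          have : P ∈ nhds ((-(0:ℝ)) • y) := by
            rw [neg_zero, zero_smul]; exact mem_interior_iff_mem_nhds.1 h0
          exact hcont.continuousAt.eventually this
        obtain ⟨e, he, he0⟩ := (h1.and self_mem_nhdsWithin).exists
        have h2 := hyP _ he
        rw [← h, dotProduct_smul, smul_eq_mul] at h2
        have he0' : 0 < e := he0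
        have h3 : 0 ≤ y ⬝ᵥ y := Finset.sum_nonneg fun i _ => mul_self_nonneg _
        have h4 : y ⬝ᵥ y = 0 := by nlinarith
        exact dotProduct_self_eq_zero.1 h4
      refine ⟨0, fun _ => le_rfl, ?_⟩
      have hb : b = 0 := by
        rw [hy0, zero_dotProduct] at hρ
        have : r * b = 0 := by linarith
        rcases mul_eq_zero.1 this with h | h
        · exact absurd h hr0.ne'
        · exact h
      rw [hy0, hb]
      apply LinearMap.ext
      rintro ⟨x, t⟩
      rw [fn_dot]; simp
    · have hyQ : ρ⁻¹ • y ∈ Q := by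
        intro x hx
        show -1 ≤ (ρ⁻¹ • y) ⬝ᵥ x
        rw [smul_dotProduct, smul_eq_mul]
        have h1 := mul_le_mul_of_nonneg_left (hyP x hx) (inv_nonneg.2 hρ0)
        have h2 : ρ⁻¹ * -ρ = -1 := by field_simp
        rw [h2] at h1; exact h1
      rw [hQU] at hyQ
      obtain ⟨a, ha, hy⟩ := mem_hull.1 hyQ
      have hs : ∑ z, a z = 1 := by
        have := congrArg Prod.snd hy
        rw [Prod.snd_sum] at this
        simpa [gr_eq] using this
      have hy1 : y = ∑ z, (ρ * a z) • coeLat z.1 := by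
        have := congrArg Prod.fst hy
        rw [Prod.fst_sum] at this
        have h2 : ρ⁻¹ • y = ∑ z, a z • coeLat z.1 := by simpa [gr_eq] using this.symm
        have h3 : y = ρ • (ρ⁻¹ • y) := by rw [smul_smul, mul_inv_cancel₀ h.ne', one_smul]
        rw [h3, h2, Finset.smul_sum]
        exact Finset.sum_congr rfl fun z _ => by rw [smul_smul]
      have hb1 : b = ∑ z, (ρ * a z) * c z.1 := by
        refine mul_left_cancel₀ hr0.ne' ?_
        rw [Finset.mul_sum]
        have h2 : ∀ z : U, r * (ρ * a z * c z.1) = (ρ * a z) * (coeLat z.1 ⬝ᵥ coeLat m) - ρ * a z := by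
          intro z
          have := hcr z.1 z.2
          calc _ = ρ * a z * (r * c z.1) := by ring
            _ = _ := by rw [this]; ring
        simp only [h2]
        rw [Finset.sum_sub_distrib, ← Finset.mul_sum (f := a), hs, mul_one]
        have h3 : ∑ z : U, (ρ * a z) * (coeLat z.1 ⬝ᵥ coeLat m) = y ⬝ᵥ coeLat m := by
          conv_rhs => rw [hy1]
          rw [sum_dotProduct]
          exact Finset.sum_congr rfl fun z _ => by rw [smul_dotProduct, smul_eq_mul]
        rw [h3, hρ]; ring
      refine ⟨fun z => ρ * a z, fun z => mul_nonneg hρ0 (ha z), ?_⟩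
      apply LinearMap.ext
      rintro ⟨x, t⟩
      rw [LinearMap.sum_apply]
      simp only [LinearMap.smul_apply, fn_dot, smul_eq_mul, mul_sub, Finset.sum_sub_distrib]
      congr 1
      · conv_lhs => rw [hy1]
        rw [sum_dotProduct]
        exact Finset.sum_congr rfl fun z _ => by rw [smul_dotProduct, smul_eq_mul]
      · conv_lhs => rw [hb1]
        rw [Finset.mul_sum]
        exact Finset.sum_congr rfl fun z _ => by ring
  · intro u hu f hfm hp hn
    obtain ⟨y, b, rfl⟩ := exists_fn f
    rw [hphim, fn_dot] at hfm
    have hy0 : y = 0 := by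
      refine hextr u hu y ?_ ?_
      · rw [memQ]
        intro v hv
        have h1 := mul_nonneg hr0.le (hp v hv)
        rw [mul_add, hnn u hu, gr_eq, fn_dot, one_mul, mul_sub] at h1
        rw [add_dotProduct, add_dotProduct, mul_add]
        linarith
      · rw [memQ]
        intro v hv
        have h1 := mul_nonneg hr0.le (hn v hv)
        rw [mul_sub, hnn u hu, gr_eq, fn_dot, one_mul, mul_sub] at h1
        rw [sub_dotProduct, sub_dotProduct, mul_sub]
        linarith
    have hb : b = 0 := by
      rw [hy0, zero_dotProduct] at hfm
      have : r * b = 0 := by linarith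
      rcases mul_eq_zero.1 this with h | h
      · exact absurd h hr0.ne'
      · exact h
    rw [hy0, hb]
    apply LinearMap.ext
    rintro ⟨x, t⟩
    rw [fn_dot]; simp

end Gor

theorem gorenstein_index_d_sub_one_12 (d : ℕ) (hd : 3 ≤ d) (r : ℕ) (hr : r = d - 1)
    (Δ : Set (Fin d → ℝ)) (hΔ : IsLatticePolytope Δ) (hdim : dimSet Δ = d)
    (m : Fin d → ℤ) (P : Set (Fin d → ℝ))
    (hP : P = (fun x => (r : ℝ) • x - coeLat m) '' Δ)
    (hPrefl : IsReflexive P) :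
    (12 : ℝ) =
      (∑ᶠ θ ∈ {θ : Set (Fin d → ℝ) | IsFaceOfDim Δ (r - 1) θ},
          normVol (r - 1) θ *
            normVol (d - r) (dualFace P ((fun x => (r : ℝ) • x - coeLat m) '' θ))) +
        (((r : ℝ) * (1 - (r : ℝ)) + 2) / 2) * normVol d Δ := by
  obtain ⟨V, hV⟩ := hΔ
  obtain ⟨_, h0, hQ⟩ := hPrefl
  subst hr
  have hV' : Δ = Gor.hull V := hV
  rw [hV'] at hdim hP ⊢
  obtain ⟨Γ, h1, h2, h3⟩ := Gor.exists_geo hd V hdim m P hP h0 hQ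
  have h := Γ.final h3
  have haf : Γ.af = fun x => ((d - 1 : ℕ) : ℝ) • x - coeLat m := by
    funext x; rw [Gor.Geo.af, h2]
  rw [h1, haf] at h
  have e1 : d - (d - 1) = 1 := by omega
  have e2 : d - 1 - 1 = d - 2 := by omega
  have e3 : ((d - 1 : ℕ) : ℝ) = (d : ℝ) - 1 := by rw [Nat.cast_sub (by omega)]; simp
  rw [e1, e2]
  rw [← e3] at h
  exact h

end
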